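/- Fix 0 < ε < 1/12, ω > 0, and C > 0, and suppose (χ_B)_{B>0} is a family of smooth functions χ_B : Ω → [0,1] such that χ_B = 1 on {x ∈ Ω : dist(x,∂Ω) ≤ B^{−1/2+ε} and dist_{∂Ω}(x,Γ) ≤ B^{−1/4+ε}}, χ_B = 0 on {x ∈ Ω : dist(x,∂Ω) ≥ 2B^{−1/2+ε} or dist_{∂Ω}(x,Γ) ≥ 2B^{−1/4+ε}}, and |∇χ_B| ≤ C·B^{1/2−ε} on Ω. Then for every N > 0 there exist positive constants C_N and B_N such that for all B ≥ B_N and every Neumann eigenfunction Ψ of H(B) with eigenvalue λ ≤ Θ₀·B + ω·B^{2/3}: |∫_Ω |(−i∇+A)Ψ|² dx − ∫_Ω |(−i∇+A)(χ_B·Ψ)|² dx| ≤ C_N·B^{−N}·∫_Ω |Ψ|² dx. -/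

import Mathlib

noncomputable section
open MeasureTheory Real Filter Set Topology

/-- Euclidean 3-space. -/
abbrev E3 := EuclideanSpace ℝ (Fin 3)

/-- The magnetic vector potential `A(x) = (B/2)(-x₂, x₁, 0)`. -/
def Avec (B : ℝ) (x : E3) : Fin 3 → ℝ := ![-(B / 2) * x 1, B / 2 * x 0, 0]

/-- The `j`-th component of `(-i∇ + A)Ψ`. -/
def magD (B : ℝ) (Ψ : E3 → ℂ) (j : Fin 3) (x : E3) : ℂ :=
  -Complex.I * fderiv ℝ Ψ x (EuclideanSpace.single j 1) + (Avec B x j : ℂ) * Ψ x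

/-- The magnetic energy density `|(-i∇ + A)Ψ|²`. -/
def magEnergyDensity (B : ℝ) (Ψ : E3 → ℂ) (x : E3) : ℝ :=
  ∑ j : Fin 3, ‖magD B Ψ j x‖ ^ 2

/-- The open unit ball in `ℝ³`. -/
def ball3 : Set E3 := Metric.ball 0 1

/-- The Neumann ground-state energy `λ₁(H(B))` of `(-i∇ + A)²` in the unit ball,
as the infimum of the Rayleigh quotients. -/
def lambda1H (B : ℝ) : ℝ :=
  sInf { q : ℝ | ∃ Ψ : E3 → ℂ, ContDiff ℝ 1 Ψ ∧
    0 < (∫ x in ball3, ‖Ψ x‖ ^ 2) ∧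
    q = (∫ x in ball3, magEnergyDensity B Ψ x) / ∫ x in ball3, ‖Ψ x‖ ^ 2 }

/-- The de Gennes energy `λ₁^𝒢(ξ)`. -/
def deGennes (ξ : ℝ) : ℝ :=
  sInf { q : ℝ | ∃ u : ℝ → ℂ, ContDiff ℝ 1 u ∧
    IntegrableOn (fun t => ‖u t‖ ^ 2) (Ioi 0) ∧
    IntegrableOn (fun t => ‖deriv u t‖ ^ 2 + (t + ξ) ^ 2 * ‖u t‖ ^ 2) (Ioi 0) ∧
    0 < (∫ t in Ioi (0:ℝ), ‖u t‖ ^ 2) ∧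
    q = (∫ t in Ioi (0:ℝ), (‖deriv u t‖ ^ 2 + (t + ξ) ^ 2 * ‖u t‖ ^ 2)) /
        ∫ t in Ioi (0:ℝ), ‖u t‖ ^ 2 }

/-- `Θ₀`, the infimum of the de Gennes energy. -/
def Theta0 : ℝ := ⨅ ξ : ℝ, deGennes ξ

/-- The Montgomery energy `λ₁^ℳ(ζ)`. -/
def montgomery (ζ : ℝ) : ℝ :=
  sInf { q : ℝ | ∃ u : ℝ → ℂ, ContDiff ℝ 1 u ∧
    Integrable (fun ρ => ‖u ρ‖ ^ 2) ∧
    Integrable (fun ρ => ‖deriv u ρ‖ ^ 2 + (ζ + ρ ^ 2) ^ 2 * ‖u ρ‖ ^ 2) ∧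
    0 < (∫ ρ : ℝ, ‖u ρ‖ ^ 2) ∧
    q = (∫ ρ : ℝ, (‖deriv u ρ‖ ^ 2 + (ζ + ρ ^ 2) ^ 2 * ‖u ρ‖ ^ 2)) / ∫ ρ : ℝ, ‖u ρ‖ ^ 2 }

/-- `ν̂₀`, the infimum of the Montgomery energy. -/
def nu0 : ℝ := ⨅ ζ : ℝ, montgomery ζ

/-- The magnetic operator `H(B)Ψ = (-i∇ + A)²Ψ`. -/
def magLap (B : ℝ) (Ψ : E3 → ℂ) (x : E3) : ℂ :=
  ∑ j : Fin 3, (-Complex.I * fderiv ℝ (magD B Ψ j) x (EuclideanSpace.single j 1)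
    + (Avec B x j : ℂ) * magD B Ψ j x)

/-- A Neumann eigenfunction of `H(B)` with eigenvalue `lam`: a nonzero (in `L²(Ω)`)
twice continuously differentiable function satisfying the eigenvalue equation in the ball
and the magnetic Neumann condition `N(x)·(-i∇+A)Ψ = 0` on the boundary sphere,
`N(x) = -x` being the interior normal. -/
def IsNeumannEigenfunction (B lam : ℝ) (Ψ : E3 → ℂ) : Prop :=
  ContDiff ℝ 2 Ψ ∧
  0 < (∫ x in ball3, ‖Ψ x‖ ^ 2) ∧
  (∀ x ∈ ball3, magLap B Ψ x = (lam : ℂ) * Ψ x) ∧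
  (∀ x ∈ Metric.sphere (0 : E3) 1, ∑ j : Fin 3, ((-x j : ℝ) : ℂ) * magD B Ψ j x = 0)

/-- Distance to the boundary of the unit ball. -/
def distBd (x : E3) : ℝ := 1 - ‖x‖

/-- Distance along the boundary (on the unit sphere, after radial projection)
to the equator `Γ`. -/
def distEq (x : E3) : ℝ := Real.arcsin (|x 2| / ‖x‖)

/-!
Write `B = b⁴`. The magnetic energy of every smooth `u` dominates
`∫ b⁴ (Θ₀ + c |x₃| - C / b) |u|²`: cut-offs `cos θ`, `sin θ` of controlled gradient split `u` into
pieces near the equatorial part of the sphere, near the poles, and in the interior. Away from the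
sphere and near the poles, commutators of the components of `-i∇ + A` bound the energy below by
`∫ B |u|²` and `∫ B |x₃| |u|²`. In the remaining boundary layer, Fourier modes in the azimuthal
angle reduce the energy to one-dimensional de Gennes-type problems, which are bounded below through
supersolutions of the associated Riccati equation.

Agmon's identity `∫ |(-i∇ + A)(GΨ)|² = ∫ (λ G² + |∇G|²) |Ψ|²` turns this into exponential decay of
`Ψ` away from the equator, with `G = cosh (b x₃)`, and away from the sphere, with
`G = exp (b² (1 - |x|²) / 8)`. The same identity with `G = 1` and `G = χ` writes the difference of
energies as `∫ (λ (1 - χ²) - |∇χ|²) |Ψ|²`. Its integrand vanishes wherever `χ = 1`, since `χ` is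
maximal there, and everywhere else it carries an exponentially small factor.
-/

lemma integrableOn_ball_of_continuous {ι : Type*} [Fintype ι] {f : EuclideanSpace ℝ ι → ℝ}
    (hf : Continuous f) (x : EuclideanSpace ℝ ι) (r : ℝ) : IntegrableOn f (Metric.ball x r) :=
  (hf.continuousOn.integrableOn_compact (isCompact_closedBall x r)).mono_set
    Metric.ball_subset_closedBall

section Coordinates

variable {ι : Type*}

lemma hasFDerivAt_coord (i : ι) (x : EuclideanSpace ℝ ι) :
    HasFDerivAt (fun y : EuclideanSpace ℝ ι => y i)
      (EuclideanSpace.proj i : EuclideanSpace ℝ ι →L[ℝ] ℝ) x :=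
  (EuclideanSpace.proj i : EuclideanSpace ℝ ι →L[ℝ] ℝ).hasFDerivAt

lemma norm_proj_le_one [Fintype ι] (i : ι) :
    ‖(EuclideanSpace.proj i : EuclideanSpace ℝ ι →L[ℝ] ℝ)‖ ≤ 1 :=
  ContinuousLinearMap.opNorm_le_bound _ zero_le_one fun y => by
    simpa using PiLp.norm_apply_le y i

end Coordinates

section Calculus

variable {ι F : Type*} [DecidableEq ι] [NormedAddCommGroup F] [NormedSpace ℝ F]
  {j : ι} {x : EuclideanSpace ℝ ι}

/-- The partial derivative `∂f/∂xⱼ` of a function on Euclidean space. -/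
abbrev partialDeriv (j : ι) (f : EuclideanSpace ℝ ι → F) (x : EuclideanSpace ℝ ι) : F :=
  fderiv ℝ f x (EuclideanSpace.single j 1)

section Finite

variable [Finite ι]

section NormedAlgebra

variable {𝔸 : Type*} [NormedCommRing 𝔸] [NormedAlgebra ℝ 𝔸] {f g : EuclideanSpace ℝ ι → 𝔸}

lemma partialDeriv_mul (hf : DifferentiableAt ℝ f x) (hg : DifferentiableAt ℝ g x) :
    partialDeriv j (fun y => f y * g y) x =
      partialDeriv j f x * g x + f x * partialDeriv j g x := by
  cases nonempty_fintype ι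
  simp only [partialDeriv, fderiv_fun_mul hf hg, add_apply, smul_apply, smul_eq_mul]
  ring

end NormedAlgebra

lemma partialDeriv_clm_comp {G : Type*} [NormedAddCommGroup G] [NormedSpace ℝ G] (L : F →L[ℝ] G)
    {u : EuclideanSpace ℝ ι → F} (hu : DifferentiableAt ℝ u x) :
    partialDeriv j (fun y => L (u y)) x = L (partialDeriv j u x) := by
  cases nonempty_fintype ι
  have h : HasFDerivAt (fun y => L (u y)) (L.comp (fderiv ℝ u x)) x :=
    L.hasFDerivAt.comp x hu.hasFDerivAt
  simp [partialDeriv, h.fderiv]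

lemma partialDeriv_re {u : EuclideanSpace ℝ ι → ℂ} (hu : DifferentiableAt ℝ u x) :
    partialDeriv j (fun y => (u y).re) x = (partialDeriv j u x).re :=
  partialDeriv_clm_comp Complex.reCLM hu

lemma partialDeriv_im {u : EuclideanSpace ℝ ι → ℂ} (hu : DifferentiableAt ℝ u x) :
    partialDeriv j (fun y => (u y).im) x = (partialDeriv j u x).im :=
  partialDeriv_clm_comp Complex.imCLM hu

lemma partialDeriv_ofReal {f : EuclideanSpace ℝ ι → ℝ} (hf : DifferentiableAt ℝ f x) :
    partialDeriv j (fun y => (f y : ℂ)) x = partialDeriv j f x :=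
  partialDeriv_clm_comp Complex.ofRealCLM hf

@[simp]
lemma partialDeriv_coord (i j : ι) (x : EuclideanSpace ℝ ι) :
    partialDeriv j (fun y : EuclideanSpace ℝ ι => y i) x = if i = j then 1 else 0 := by
  cases nonempty_fintype ι
  simp [partialDeriv, (hasFDerivAt_coord i x).fderiv]

end Finite

variable [Fintype ι]

lemma contDiff_partialDeriv {f : EuclideanSpace ℝ ι → F} (hf : ContDiff ℝ 2 f) (j : ι) :
    ContDiff ℝ 1 (partialDeriv j f) :=
  (hf.fderiv_right (m := 1) (by norm_num)).clm_apply contDiff_const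

@[fun_prop]
lemma continuous_partialDeriv {f : EuclideanSpace ℝ ι → F} (hf : ContDiff ℝ 1 f) (j : ι) :
    Continuous (partialDeriv j f) :=
  (hf.continuous_fderiv one_ne_zero).clm_apply continuous_const

lemma partialDeriv_comm {f : EuclideanSpace ℝ ι → F} (hf : ContDiff ℝ 2 f) (j k : ι)
    (x : EuclideanSpace ℝ ι) :
    partialDeriv j (partialDeriv k f) x = partialDeriv k (partialDeriv j f) x := by
  have hf' : DifferentiableAt ℝ (fderiv ℝ f) x :=
    (hf.fderiv_right (m := 1) (by norm_num)).differentiable one_ne_zero x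
  have second (a b : ι) : partialDeriv a (partialDeriv b f) x =
      fderiv ℝ (fderiv ℝ f) x (EuclideanSpace.single a 1) (EuclideanSpace.single b 1) := by
    simp [partialDeriv, fderiv_clm_apply hf' (differentiableAt_const _)]
  rw [second, second]
  exact hf.contDiffAt.isSymmSndFDerivAt (by simp) _ _

lemma sum_partialDeriv_mul (f : EuclideanSpace ℝ ι → ℝ) (x y : EuclideanSpace ℝ ι) :
    ∑ j, partialDeriv j f x * y j = fderiv ℝ f x y := by
  conv_rhs => rw [← (EuclideanSpace.basisFun ι ℝ).sum_repr y, map_sum]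
  simp [partialDeriv, mul_comm]

lemma sum_sq_partialDeriv (f : EuclideanSpace ℝ ι → ℝ) (x : EuclideanSpace ℝ ι) :
    ∑ j, partialDeriv j f x ^ 2 = ‖fderiv ℝ f x‖ ^ 2 := by
  set v := (InnerProductSpace.toDual ℝ (EuclideanSpace ℝ ι)).symm (fderiv ℝ f x) with hv
  have coord (j : ι) : partialDeriv j f x = v j := by
    have h : inner ℝ v (EuclideanSpace.single j (1 : ℝ)) = partialDeriv j f x :=
      InnerProductSpace.toDual_symm_apply
    rw [← h, EuclideanSpace.inner_single_right]
    simp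
  rw [← (InnerProductSpace.toDual ℝ (EuclideanSpace ℝ ι)).symm.norm_map, ← hv,
    EuclideanSpace.real_norm_sq_eq]
  exact Finset.sum_congr rfl fun j _ => by rw [coord]

end Calculus

section Divergence

lemma hasDerivAt_smoothTransition (s : ℝ) :
    HasDerivAt smoothTransition (deriv smoothTransition s) s :=
  ((smoothTransition.contDiff (n := 1)).differentiable one_ne_zero s).hasDerivAt

@[fun_prop]
lemma continuous_deriv_smoothTransition : Continuous (deriv smoothTransition) :=
  (smoothTransition.contDiff (n := 1)).continuous_deriv le_rfl

lemma deriv_smoothTransition_of_notMem_Ioo {s : ℝ} (hs : s ∉ Ioo (0 : ℝ) 1) :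
    deriv smoothTransition s = 0 := by
  rcases le_or_gt s 0 with h0 | h0
  · refine IsLocalMin.deriv_eq_zero (Eventually.of_forall fun t => ?_)
    rw [smoothTransition.zero_of_nonpos h0]
    exact smoothTransition.nonneg t
  · refine IsLocalMax.deriv_eq_zero (Eventually.of_forall fun t => ?_)
    rw [smoothTransition.one_of_one_le (not_lt.1 fun h1 => hs ⟨h0, h1⟩)]
    exact smoothTransition.le_one t

lemma exists_abs_deriv_smoothTransition_le : ∃ M : ℝ, ∀ s, |deriv smoothTransition s| ≤ M :=
  continuous_deriv_smoothTransition.bounded_above_of_compact_support <|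
    HasCompactSupport.intro isCompact_Icc fun _ hs =>
      deriv_smoothTransition_of_notMem_Ioo fun h => hs (Ioo_subset_Icc_self h)

variable {ι : Type*} [Fintype ι]

/-- The defining function `(1 - |x|²)/2` of the unit ball, a smooth substitute for the distance to
the unit sphere. -/
def boundaryHeight (x : EuclideanSpace ℝ ι) : ℝ := (1 - ‖x‖ ^ 2) / 2

lemma boundaryHeight_pos {x : EuclideanSpace ℝ ι} (hx : ‖x‖ < 1) : 0 < boundaryHeight x := by
  unfold boundaryHeight
  nlinarith [norm_nonneg x]

lemma boundaryHeight_nonpos {x : EuclideanSpace ℝ ι} (hx : 1 ≤ ‖x‖) : boundaryHeight x ≤ 0 := by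
  unfold boundaryHeight
  nlinarith

@[fun_prop]
lemma contDiff_boundaryHeight {n : WithTop ℕ∞} :
    ContDiff ℝ n (boundaryHeight : EuclideanSpace ℝ ι → ℝ) :=
  (contDiff_const.sub (contDiff_norm_sq ℝ)).div_const 2

@[fun_prop]
lemma continuous_boundaryHeight : Continuous (boundaryHeight : EuclideanSpace ℝ ι → ℝ) :=
  (contDiff_boundaryHeight (n := 0)).continuous

lemma hasFDerivAt_boundaryHeight (x : EuclideanSpace ℝ ι) :
    HasFDerivAt boundaryHeight (-innerSL ℝ x) x := by
  have h := ((hasStrictFDerivAt_norm_sq x).hasFDerivAt.const_sub 1).mul_const (1 / 2 : ℝ)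
  refine (h.congr_of_eventuallyEq (.of_forall fun y => ?_)).congr_fderiv ?_
  · rw [boundaryHeight, div_eq_mul_one_div]
  · ext y
    simp

/-- A smooth cutoff equal to `1` where `1 ≤ n (1 - |x|²)/2` and vanishing outside the unit ball. -/
def interiorCutoff (n : ℕ) (x : EuclideanSpace ℝ ι) : ℝ :=
  smoothTransition (n * boundaryHeight x)

lemma contDiff_interiorCutoff (n : ℕ) :
    ContDiff ℝ 1 (interiorCutoff n : EuclideanSpace ℝ ι → ℝ) :=
  smoothTransition.contDiff.comp (contDiff_const.mul contDiff_boundaryHeight)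

lemma interiorCutoff_of_one_le_norm (n : ℕ) {x : EuclideanSpace ℝ ι} (hx : 1 ≤ ‖x‖) :
    interiorCutoff n x = 0 :=
  smoothTransition.zero_of_nonpos <|
    mul_nonpos_of_nonneg_of_nonpos n.cast_nonneg (boundaryHeight_nonpos hx)

lemma hasCompactSupport_interiorCutoff_mul (n : ℕ) (f : EuclideanSpace ℝ ι → ℝ) :
    HasCompactSupport fun y => interiorCutoff n y * f y :=
  HasCompactSupport.intro (isCompact_closedBall 0 1) fun x hx => by
    rw [interiorCutoff_of_one_le_norm n (not_le.1 (by simpa using hx)).le, zero_mul]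

lemma eventually_one_lt_mul_boundaryHeight {x : EuclideanSpace ℝ ι} (hx : ‖x‖ < 1) :
    ∀ᶠ n : ℕ in atTop, 1 < n * boundaryHeight x :=
  (tendsto_natCast_atTop_atTop.atTop_mul_const (boundaryHeight_pos hx)).eventually_gt_atTop 1

lemma tendsto_integral_interiorCutoff_mul {f : EuclideanSpace ℝ ι → ℝ} (hf : Continuous f) :
    Tendsto (fun n : ℕ => ∫ x in Metric.ball 0 1, interiorCutoff n x * f x) atTop
      (𝓝 (∫ x in Metric.ball 0 1, f x)) := by
  refine tendsto_integral_of_dominated_convergence (fun x => |f x|)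
    (fun n => ((contDiff_interiorCutoff n).continuous.mul hf).aestronglyMeasurable)
    (integrableOn_ball_of_continuous hf.abs _ _) (fun n => .of_forall fun x => ?_) ?_
  · rw [norm_mul, interiorCutoff, Real.norm_of_nonneg (smoothTransition.nonneg _)]
    exact mul_le_of_le_one_left (norm_nonneg _) (smoothTransition.le_one _)
  · filter_upwards [ae_restrict_mem Metric.isOpen_ball.measurableSet] with x hx
    refine tendsto_const_nhds.congr' ?_
    filter_upwards [eventually_one_lt_mul_boundaryHeight (mem_ball_zero_iff.1 hx)] with n hn
    rw [interiorCutoff, smoothTransition.one_of_one_le hn.le, one_mul]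

lemma tendsto_integral_mul_deriv_smoothTransition :
    Tendsto (fun n : ℕ => ∫ x in Metric.ball (0 : EuclideanSpace ℝ ι) 1,
      n * boundaryHeight x * deriv smoothTransition (n * boundaryHeight x)) atTop (𝓝 0) := by
  obtain ⟨M, hM⟩ := exists_abs_deriv_smoothTransition_le
  have hM0 : 0 ≤ M := (abs_nonneg _).trans (hM 0)
  rw [← integral_zero (EuclideanSpace ℝ ι) ℝ (μ := volume.restrict (Metric.ball 0 1))]
  refine tendsto_integral_of_dominated_convergence (fun _ => M)
    (fun n => Continuous.aestronglyMeasurable (by fun_prop))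
    (integrableOn_ball_of_continuous continuous_const _ _) (fun n => .of_forall fun x => ?_) ?_
  · rw [norm_mul, Real.norm_eq_abs, Real.norm_eq_abs]
    by_cases h : n * boundaryHeight x ∈ Ioo (0 : ℝ) 1
    · rw [abs_of_pos h.1]
      exact (mul_le_of_le_one_left (abs_nonneg _) h.2.le).trans (hM _)
    · rwa [deriv_smoothTransition_of_notMem_Ioo h, abs_zero, mul_zero]
  · filter_upwards [ae_restrict_mem Metric.isOpen_ball.measurableSet] with x hx
    refine tendsto_const_nhds.congr' ?_
    filter_upwards [eventually_one_lt_mul_boundaryHeight (mem_ball_zero_iff.1 hx)] with n hn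
    rw [deriv_smoothTransition_of_notMem_Ioo fun h => hn.not_gt h.2, mul_zero]

lemma exists_neg_mul_boundaryHeight_le {g : EuclideanSpace ℝ ι → ℝ} (hg : ContDiff ℝ 1 g)
    (hg0 : 0 ≤ g 0) (hsphere : ∀ x, ‖x‖ = 1 → 0 ≤ g x) :
    ∃ L : ℝ, ∀ x, ‖x‖ < 1 → -(L * boundaryHeight x) ≤ g x := by
  obtain ⟨L, hL⟩ := (isCompact_closedBall (0 : EuclideanSpace ℝ ι) 1).exists_bound_of_continuousOn
    (hg.continuous_fderiv one_ne_zero).continuousOn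
  have hL0 : 0 ≤ L := (norm_nonneg _).trans (hL 0 (by simp))
  refine ⟨L * 2, fun x hx => ?_⟩
  have hheight : 1 - ‖x‖ ≤ 2 * boundaryHeight x := by
    unfold boundaryHeight
    nlinarith [norm_nonneg x]
  rcases eq_or_ne x 0 with rfl | hx0
  · have := boundaryHeight_pos hx
    exact le_trans (by simp only [neg_nonpos]; positivity) hg0
  have hr : 0 < ‖x‖ := norm_pos_iff.2 hx0
  set y := ‖x‖⁻¹ • x with hy
  have hy1 : ‖y‖ = 1 := by simp [hy, norm_smul, hr.ne']
  have hyx : ‖y - x‖ = 1 - ‖x‖ := by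
    have hinv : 0 ≤ ‖x‖⁻¹ - 1 := sub_nonneg.2 ((one_le_inv₀ hr).2 hx.le)
    rw [show y - x = (‖x‖⁻¹ - 1) • x by rw [hy, sub_smul, one_smul], norm_smul,
      Real.norm_of_nonneg hinv]
    field_simp
  have hlip : |g y - g x| ≤ L * (1 - ‖x‖) := hyx ▸
    (convex_closedBall 0 1).norm_image_sub_le_of_norm_fderiv_le (𝕜 := ℝ)
      (fun z _ => hg.differentiable one_ne_zero z) hL (by simpa using hx.le) (by simp [hy1])
  have := mul_le_mul_of_nonneg_left hheight hL0
  linarith [(abs_le.1 hlip).2, hsphere y hy1]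

variable [DecidableEq ι]

lemma partialDeriv_interiorCutoff (n : ℕ) (j : ι) (x : EuclideanSpace ℝ ι) :
    partialDeriv j (interiorCutoff n) x =
      -(n * deriv smoothTransition (n * boundaryHeight x) * x j) := by
  have h := (hasDerivAt_smoothTransition (n * boundaryHeight x)).comp_hasFDerivAt x
    ((hasFDerivAt_boundaryHeight x).const_mul (n : ℝ))
  change HasFDerivAt (interiorCutoff n) _ x at h
  simp [partialDeriv, h.fderiv, EuclideanSpace.inner_single_right]
  ring

lemma integral_partialDeriv_eq_zero {f : EuclideanSpace ℝ ι → ℝ} (hf : ContDiff ℝ 1 f)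
    (hfc : HasCompactSupport f) (j : ι) : ∫ x, partialDeriv j f x = 0 := by
  have hint : Integrable (partialDeriv j f) :=
    (continuous_partialDeriv hf j).integrable_of_hasCompactSupport (hfc.fderiv_apply ℝ _)
  have h := integral_mul_fderiv_eq_neg_fderiv_mul_of_integrable
    (μ := (volume : Measure (EuclideanSpace ℝ ι))) (f := fun _ => (1 : ℝ)) (g := f)
    (v := EuclideanSpace.single j 1) (by simp) (by simpa using hint)
    (by simpa using hf.continuous.integrable_of_hasCompactSupport hfc)
    (fun _ _ => differentiableAt_const _) (fun x _ => hf.differentiable one_ne_zero x)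
  simpa using h

lemma sum_partialDeriv_interiorCutoff_mul {F : ι → EuclideanSpace ℝ ι → ℝ}
    (hF : ∀ j, ContDiff ℝ 1 (F j)) (n : ℕ) (x : EuclideanSpace ℝ ι) :
    ∑ j, partialDeriv j (fun y => interiorCutoff n y * F j y) x =
      interiorCutoff n x * ∑ j, partialDeriv j (F j) x -
        n * deriv smoothTransition (n * boundaryHeight x) * ∑ j, x j * F j x := by
  rw [Finset.mul_sum, Finset.mul_sum, ← Finset.sum_sub_distrib]
  refine Finset.sum_congr rfl fun j _ => ?_
  rw [partialDeriv_mul ((contDiff_interiorCutoff n).differentiable one_ne_zero x)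
    ((hF j).differentiable one_ne_zero x), partialDeriv_interiorCutoff]
  ring

lemma integral_interiorCutoff_mul_divergence {F : ι → EuclideanSpace ℝ ι → ℝ}
    (hF : ∀ j, ContDiff ℝ 1 (F j)) (n : ℕ) :
    ∫ x in Metric.ball 0 1, interiorCutoff n x * ∑ j, partialDeriv j (F j) x =
      ∫ x in Metric.ball 0 1,
        n * deriv smoothTransition (n * boundaryHeight x) * ∑ j, x j * F j x := by
  have hη := contDiff_interiorCutoff (ι := ι) n
  have hηc := hη.continuous
  have hsupp (j : ι) := hasCompactSupport_interiorCutoff_mul n (F j)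
  have hzero : ∫ x, ∑ j, partialDeriv j (fun y => interiorCutoff n y * F j y) x = 0 := by
    rw [integral_finsetSum _ fun j _ => (continuous_partialDeriv (hη.mul (hF j)) j)
      |>.integrable_of_hasCompactSupport ((hsupp j).fderiv_apply ℝ (EuclideanSpace.single j 1))]
    exact Finset.sum_eq_zero fun j _ => integral_partialDeriv_eq_zero (hη.mul (hF j)) (hsupp j) j
  simp only [sum_partialDeriv_interiorCutoff_mul hF] at hzero
  rw [← setIntegral_eq_integral_of_forall_compl_eq_zero (s := Metric.ball 0 1)] at hzero
  · rwa [integral_sub (integrableOn_ball_of_continuous (by fun_prop) _ _)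
      (integrableOn_ball_of_continuous (by fun_prop) _ _), sub_eq_zero] at hzero
  · intro x hx
    have hx1 : 1 ≤ ‖x‖ := by simpa using hx
    have hT : n * boundaryHeight x ∉ Ioo (0 : ℝ) 1 := fun h => h.1.not_ge <|
      mul_nonpos_of_nonneg_of_nonpos n.cast_nonneg (boundaryHeight_nonpos hx1)
    rw [interiorCutoff_of_one_le_norm n hx1, deriv_smoothTransition_of_notMem_Ioo hT]
    ring

theorem integral_divergence_nonneg {F : ι → EuclideanSpace ℝ ι → ℝ}
    (hF : ∀ j, ContDiff ℝ 1 (F j)) (hflux : ∀ x, ‖x‖ = 1 → 0 ≤ ∑ j, x j * F j x) :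
    0 ≤ ∫ x in Metric.ball 0 1, ∑ j, partialDeriv j (F j) x := by
  have hg : ContDiff ℝ 1 fun x => ∑ j, x j * F j x :=
    ContDiff.sum fun j _ => ContDiff.mul (by fun_prop) (hF j)
  have hDc : Continuous fun x => ∑ j, partialDeriv j (F j) x :=
    continuous_finsetSum _ fun j _ => continuous_partialDeriv (hF j) j
  obtain ⟨L, hL⟩ := exists_neg_mul_boundaryHeight_le hg (by simp) hflux
  have hlim := (tendsto_integral_mul_deriv_smoothTransition (ι := ι)).const_mul (-L)
  rw [mul_zero] at hlim
  refine le_of_tendsto_of_tendsto' hlim (tendsto_integral_interiorCutoff_mul hDc) fun n => ?_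
  rw [integral_interiorCutoff_mul_divergence hF, ← integral_const_mul]
  refine setIntegral_mono_on (integrableOn_ball_of_continuous (by fun_prop) _ _)
    (integrableOn_ball_of_continuous (by fun_prop) _ _) Metric.isOpen_ball.measurableSet
    fun x hx => ?_
  have hd : 0 ≤ n * deriv smoothTransition (n * boundaryHeight x) :=
    mul_nonneg n.cast_nonneg smoothTransition.monotone.deriv_nonneg
  linarith [mul_le_mul_of_nonneg_left (hL x (mem_ball_zero_iff.1 hx)) hd]

theorem integral_divergence_eq_zero {F : ι → EuclideanSpace ℝ ι → ℝ}
    (hF : ∀ j, ContDiff ℝ 1 (F j)) (hflux : ∀ x, ‖x‖ = 1 → ∑ j, x j * F j x = 0) :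
    ∫ x in Metric.ball 0 1, ∑ j, partialDeriv j (F j) x = 0 := by
  have hneg := integral_divergence_nonneg (fun j => (hF j).neg) fun x hx => by
    simp [hflux x hx]
  simp only [partialDeriv, fderiv_fun_neg, neg_apply, Finset.sum_neg_distrib, integral_neg] at hneg
  exact le_antisymm (by linarith) (integral_divergence_nonneg hF fun x hx => (hflux x hx).ge)

end Divergence

section MagneticEnergy

variable {B : ℝ} {u : E3 → ℂ} {x : E3}

lemma norm_sq_eq_coord (x : E3) : ‖x‖ ^ 2 = x 0 ^ 2 + x 1 ^ 2 + x 2 ^ 2 := by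
  rw [EuclideanSpace.real_norm_sq_eq, Fin.sum_univ_three]

lemma mem_ball3_iff : x ∈ ball3 ↔ ‖x‖ < 1 := mem_ball_zero_iff

lemma measurableSet_ball3 : MeasurableSet ball3 := Metric.isOpen_ball.measurableSet

lemma integrableOn_ball3_of_continuous {f : E3 → ℝ} (hf : Continuous f) : IntegrableOn f ball3 :=
  integrableOn_ball_of_continuous hf 0 1

@[fun_prop]
lemma contDiff_Avec {n : WithTop ℕ∞} (B : ℝ) (j : Fin 3) : ContDiff ℝ n fun x => Avec B x j := by
  fin_cases j
  · exact (by fun_prop : ContDiff ℝ n fun x : E3 => -(B / 2) * x 1)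
  · exact (by fun_prop : ContDiff ℝ n fun x : E3 => B / 2 * x 0)
  · exact (by fun_prop : ContDiff ℝ n fun _ : E3 => (0 : ℝ))

lemma contDiff_ofReal_mul {n : WithTop ℕ∞} {G : E3 → ℝ} (hG : ContDiff ℝ n G)
    (hu : ContDiff ℝ n u) : ContDiff ℝ n fun y => (G y : ℂ) * u y :=
  (Complex.ofRealCLM.contDiff.comp hG).mul hu

lemma contDiff_magD (B : ℝ) (hu : ContDiff ℝ 2 u) (j : Fin 3) : ContDiff ℝ 1 (magD B u j) :=
  (contDiff_const.mul (contDiff_partialDeriv hu j)).add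
    (contDiff_ofReal_mul (contDiff_Avec B j) (hu.of_le one_le_two))

@[fun_prop]
lemma continuous_magD (B : ℝ) (hu : ContDiff ℝ 1 u) (j : Fin 3) : Continuous (magD B u j) :=
  (continuous_const.mul (continuous_partialDeriv hu j)).add
    (contDiff_ofReal_mul (contDiff_Avec B j) (contDiff_zero.2 hu.continuous)).continuous

@[fun_prop]
lemma continuous_magEnergyDensity (B : ℝ) (hu : ContDiff ℝ 1 u) :
    Continuous (magEnergyDensity B u) :=
  continuous_finsetSum _ fun j _ => (continuous_magD B hu j).norm.pow 2

lemma magEnergyDensity_nonneg (B : ℝ) (u : E3 → ℂ) (x : E3) : 0 ≤ magEnergyDensity B u x :=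
  Finset.sum_nonneg fun _ _ => sq_nonneg _

lemma partialDeriv_eq_I_mul (B : ℝ) (u : E3 → ℂ) (j : Fin 3) (x : E3) :
    partialDeriv j u x = Complex.I * (magD B u j x - Avec B x j * u x) := by
  linear_combination (norm := (simp only [magD]; ring)) partialDeriv j u x * Complex.I_sq

lemma magD_re (hu : DifferentiableAt ℝ u x) (j : Fin 3) :
    (magD B u j x).re = partialDeriv j (fun y => (u y).im) x + Avec B x j * (u x).re := by
  simp [magD, partialDeriv_im hu]

lemma magD_im (hu : DifferentiableAt ℝ u x) (j : Fin 3) :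
    (magD B u j x).im = -partialDeriv j (fun y => (u y).re) x + Avec B x j * (u x).im := by
  simp [magD, partialDeriv_re hu]

lemma partialDeriv_magD (hu : ContDiff ℝ 2 u) (j k : Fin 3) :
    partialDeriv j (magD B u k) x =
      -Complex.I * partialDeriv j (partialDeriv k u) x +
        (partialDeriv j (fun y => Avec B y k) x * u x + Avec B x k * partialDeriv j u x) := by
  have hd := (contDiff_partialDeriv hu k).differentiable one_ne_zero x
  have hA : DifferentiableAt ℝ (fun y => Avec B y k) x :=
    (contDiff_Avec (n := 1) B k).differentiable one_ne_zero x
  have hAc : DifferentiableAt ℝ (fun y => (Avec B y k : ℂ)) x :=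
    Complex.ofRealCLM.differentiableAt.comp x hA
  have hu1 := hu.differentiable two_ne_zero x
  rw [← partialDeriv_ofReal hA, ← partialDeriv_mul hAc hu1]
  change partialDeriv j (fun y => -Complex.I * partialDeriv k u y + (Avec B y k : ℂ) * u y) x = _
  rw [partialDeriv, fderiv_fun_add (hd.const_mul _) (hAc.fun_mul hu1), fderiv_const_mul hd]
  simp

lemma magD_ofReal_mul {G : E3 → ℝ} (hG : DifferentiableAt ℝ G x) (hu : DifferentiableAt ℝ u x)
    (j : Fin 3) :
    magD B (fun y => (G y : ℂ) * u y) j x =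
      G x * magD B u j x - Complex.I * partialDeriv j G x * u x := by
  have hGc : DifferentiableAt ℝ (fun y => (G y : ℂ)) x :=
    Complex.ofRealCLM.differentiableAt.comp x hG
  rw [magD, ← partialDeriv, partialDeriv_mul hGc hu, partialDeriv_ofReal hG, magD]
  ring

/-- The boundary term `Im (conj (Dⱼu) · u)` in the integration by parts of the magnetic energy,
where `D = -i∇ + A`. -/
def energyFlux (B : ℝ) (u : E3 → ℂ) (j : Fin 3) (x : E3) : ℝ :=
  (starRingEnd ℂ (magD B u j x) * u x).im

lemma magEnergyDensity_ofReal_mul {G : E3 → ℝ} (hG : DifferentiableAt ℝ G x)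
    (hu : DifferentiableAt ℝ u x) :
    magEnergyDensity B (fun y => (G y : ℂ) * u y) x =
      G x ^ 2 * magEnergyDensity B u x + ‖fderiv ℝ G x‖ ^ 2 * ‖u x‖ ^ 2 +
        2 * G x * ∑ j, partialDeriv j G x * energyFlux B u j x := by
  simp only [magEnergyDensity, ← sum_sq_partialDeriv, Finset.mul_sum, Finset.sum_mul,
    ← Finset.sum_add_distrib]
  refine Finset.sum_congr rfl fun j _ => ?_
  rw [magD_ofReal_mul hG hu]
  simp [energyFlux, Complex.sq_norm, Complex.normSq_apply]
  ring

/-- The IMS localization formula for the partition `cos² α + sin² α = 1`. -/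
lemma magEnergyDensity_eq_cos_add_sin {α : E3 → ℝ} (hα : DifferentiableAt ℝ α x)
    (hu : DifferentiableAt ℝ u x) :
    magEnergyDensity B u x =
      magEnergyDensity B (fun y => ((cos (α y) : ℝ) : ℂ) * u y) x +
        magEnergyDensity B (fun y => ((sin (α y) : ℝ) : ℂ) * u y) x -
      ‖fderiv ℝ α x‖ ^ 2 * ‖u x‖ ^ 2 := by
  rw [magEnergyDensity_ofReal_mul hα.cos hu, magEnergyDensity_ofReal_mul hα.sin hu,
    fderiv_cos hα, fderiv_sin hα]
  simp only [partialDeriv, fderiv_cos hα, fderiv_sin hα, smul_apply, smul_eq_mul, norm_smul,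
    Real.norm_eq_abs, mul_pow, sq_abs, Fin.sum_univ_three, neg_sq]
  linear_combination -(magEnergyDensity B u x + ‖fderiv ℝ α x‖ ^ 2 * ‖u x‖ ^ 2) *
    sin_sq_add_cos_sq (α x)

end MagneticEnergy

section Agmon

variable {B lam : ℝ} {u : E3 → ℂ}

lemma contDiff_energyFlux (B : ℝ) (hu : ContDiff ℝ 2 u) (j : Fin 3) :
    ContDiff ℝ 1 (energyFlux B u j) :=
  Complex.imCLM.contDiff.comp <|
    (Complex.conjCLE.contDiff.comp (contDiff_magD B hu j)).mul (hu.of_le one_le_two)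

lemma partialDeriv_energyFlux (hu : ContDiff ℝ 2 u) (j : Fin 3) (x : E3) :
    partialDeriv j (energyFlux B u j) x =
      ‖magD B u j x‖ ^ 2 - (starRingEnd ℂ (-Complex.I * partialDeriv j (magD B u j) x +
        Avec B x j * magD B u j x) * u x).re := by
  have hw := (contDiff_magD B hu j).differentiable one_ne_zero x
  have hwc : DifferentiableAt ℝ (fun y => starRingEnd ℂ (magD B u j y)) x :=
    Complex.conjCLE.differentiableAt.comp x hw
  have hu1 := hu.differentiable two_ne_zero x
  have hconj : partialDeriv j (fun y => starRingEnd ℂ (magD B u j y)) x =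
      starRingEnd ℂ (partialDeriv j (magD B u j) x) :=
    partialDeriv_clm_comp (Complex.conjCLE : ℂ →L[ℝ] ℂ) hw
  have h := partialDeriv_im (j := j) (hwc.mul hu1)
  simp only [Pi.mul_def, partialDeriv_mul hwc hu1, hconj, partialDeriv_eq_I_mul B u] at h
  refine h.trans ?_
  simp [Complex.sq_norm, Complex.normSq_apply]
  ring

lemma sum_partialDeriv_energyFlux (hu : ContDiff ℝ 2 u) (x : E3) :
    ∑ j, partialDeriv j (energyFlux B u j) x =
      magEnergyDensity B u x - (starRingEnd ℂ (magLap B u x) * u x).re := by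
  simp only [partialDeriv_energyFlux hu, Finset.sum_sub_distrib, magEnergyDensity, magLap, map_sum,
    Finset.sum_mul, Complex.re_sum]

lemma sum_mul_energyFlux_eq_zero {x : E3}
    (hN : ∑ j : Fin 3, ((-x j : ℝ) : ℂ) * magD B u j x = 0) :
    ∑ j, x j * energyFlux B u j x = 0 := by
  have h : ∑ j, x j * energyFlux B u j x =
      -(starRingEnd ℂ (∑ j : Fin 3, ((-x j : ℝ) : ℂ) * magD B u j x) * u x).im := by
    simp [energyFlux, Fin.sum_univ_three]
    ring
  rw [h, hN]
  simp

theorem integral_magEnergyDensity_ofReal_mul_eigenfunction (hu : IsNeumannEigenfunction B lam u)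
    {G : E3 → ℝ} (hG : ContDiff ℝ 1 G) :
    ∫ x in ball3, magEnergyDensity B (fun y => (G y : ℂ) * u y) x =
      ∫ x in ball3, (lam * G x ^ 2 + ‖fderiv ℝ G x‖ ^ 2) * ‖u x‖ ^ 2 := by
  obtain ⟨hu2, -, heigen, hN⟩ := hu
  have hF (j : Fin 3) : ContDiff ℝ 1 fun x => G x ^ 2 * energyFlux B u j x :=
    (hG.pow 2).mul (contDiff_energyFlux B hu2 j)
  have hdiv := integral_divergence_eq_zero hF fun x hx => by
    have h := sum_mul_energyFlux_eq_zero (hN x (by simpa using hx))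
    simp only [mul_left_comm _ (G x ^ 2), ← Finset.mul_sum, h, mul_zero]
  have hpt (x : E3) (hx : x ∈ ball3) : magEnergyDensity B (fun y => (G y : ℂ) * u y) x =
      (lam * G x ^ 2 + ‖fderiv ℝ G x‖ ^ 2) * ‖u x‖ ^ 2 +
        ∑ j, partialDeriv j (fun y => G y ^ 2 * energyFlux B u j y) x := by
    have hGx := hG.differentiable one_ne_zero x
    have hj (j : Fin 3) : partialDeriv j (fun y => G y ^ 2 * energyFlux B u j y) x =
        2 * G x * (partialDeriv j G x * energyFlux B u j x) +
          G x ^ 2 * partialDeriv j (energyFlux B u j) x := by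
      rw [partialDeriv_mul (hGx.fun_pow 2)
        ((contDiff_energyFlux B hu2 j).differentiable one_ne_zero x)]
      simp [partialDeriv, fderiv_fun_pow 2 hGx]
      ring
    simp only [magEnergyDensity_ofReal_mul hGx (hu2.differentiable two_ne_zero x), hj,
      Finset.sum_add_distrib, ← Finset.mul_sum, sum_partialDeriv_energyFlux hu2, heigen x hx]
    simp [Complex.sq_norm, Complex.normSq_apply]
    ring
  have hGc := hG.continuous
  have huc := hu2.continuous
  have hFc : Continuous fun x =>
      ∑ j, partialDeriv j (fun y => G y ^ 2 * energyFlux B u j y) x :=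
    continuous_finsetSum _ fun j _ => continuous_partialDeriv (hF j) j
  rw [setIntegral_congr_fun measurableSet_ball3 hpt, integral_add
    (integrableOn_ball3_of_continuous (by fun_prop)) (integrableOn_ball3_of_continuous hFc)]
  exact add_eq_left.2 hdiv

end Agmon

section Curl

variable {B : ℝ} {v : E3 → ℂ}

/-- The magnetic current `Re (conj v · Dₖv)`, where `D = -i∇ + A`. -/
def magCurrent (B : ℝ) (v : E3 → ℂ) (k : Fin 3) (x : E3) : ℝ :=
  (starRingEnd ℂ (v x) * magD B v k x).re

lemma contDiff_magCurrent (B : ℝ) (hv : ContDiff ℝ 2 v) (k : Fin 3) :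
    ContDiff ℝ 1 (magCurrent B v k) :=
  Complex.reCLM.contDiff.comp <|
    (Complex.conjCLE.contDiff.comp (hv.of_le one_le_two)).mul (contDiff_magD B hv k)

lemma partialDeriv_const_mul_coord (c : ℝ) (i j : Fin 3) (x : E3) :
    partialDeriv j (fun y : E3 => c * y i) x = c * if i = j then 1 else 0 := by
  rw [← partialDeriv_coord i j x]
  simp only [partialDeriv]
  rw [fderiv_const_mul (by fun_prop)]
  rfl

lemma partialDeriv_Avec (B : ℝ) (j k : Fin 3) (x : E3) : partialDeriv j (fun y => Avec B y k) x =
    if k = 0 ∧ j = 1 then -(B / 2) else if k = 1 ∧ j = 0 then B / 2 else 0 := by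
  fin_cases k
  · refine (partialDeriv_const_mul_coord (-(B / 2)) 1 j x).trans ?_
    fin_cases j <;> simp
  · refine (partialDeriv_const_mul_coord (B / 2) 0 j x).trans ?_
    fin_cases j <;> simp
  · change partialDeriv j (fun _ => (0 : ℝ)) x = _
    simp [partialDeriv]

lemma partialDeriv_magCurrent (hv : ContDiff ℝ 2 v) (j k : Fin 3) (x : E3) :
    partialDeriv j (magCurrent B v k) x =
      (starRingEnd ℂ (partialDeriv j v x) * magD B v k x +
        starRingEnd ℂ (v x) * partialDeriv j (magD B v k) x).re := by
  have hv1 := hv.differentiable two_ne_zero x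
  have hvc : DifferentiableAt ℝ (fun y => starRingEnd ℂ (v y)) x :=
    Complex.conjCLE.differentiableAt.comp x hv1
  have hw := (contDiff_magD B hv k).differentiable one_ne_zero x
  have hconj : partialDeriv j (fun y => starRingEnd ℂ (v y)) x =
      starRingEnd ℂ (partialDeriv j v x) :=
    partialDeriv_clm_comp (Complex.conjCLE : ℂ →L[ℝ] ℂ) hv1
  rw [← hconj, ← partialDeriv_mul hvc hw]
  exact partialDeriv_re (hvc.mul hw)

lemma curl_magCurrent (hv : ContDiff ℝ 2 v) (j k : Fin 3) (x : E3) :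
    partialDeriv j (magCurrent B v k) x - partialDeriv k (magCurrent B v j) x =
      2 * (starRingEnd ℂ (magD B v j x) * magD B v k x).im +
        (partialDeriv j (fun y => Avec B y k) x - partialDeriv k (fun y => Avec B y j) x) *
          ‖v x‖ ^ 2 := by
  rw [partialDeriv_magCurrent hv, partialDeriv_magCurrent hv, partialDeriv_magD hv,
    partialDeriv_magD hv, partialDeriv_comm hv j k, partialDeriv_eq_I_mul B v j,
    partialDeriv_eq_I_mul B v k]
  simp [Complex.sq_norm, Complex.normSq_apply]
  ring

lemma two_mul_triple_product_le (n p q : Fin 3 → ℝ) (hn : n 0 ^ 2 + n 1 ^ 2 + n 2 ^ 2 ≤ 1) :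
    2 * (n 2 * (q 0 * p 1 - p 0 * q 1) + n 1 * (q 2 * p 0 - p 2 * q 0) +
      n 0 * (q 1 * p 2 - p 1 * q 2)) ≤ ∑ j, (p j ^ 2 + q j ^ 2) := by
  have hq : 0 ≤ (1 - (n 0 ^ 2 + n 1 ^ 2 + n 2 ^ 2)) * (q 0 ^ 2 + q 1 ^ 2 + q 2 ^ 2) :=
    mul_nonneg (by linarith) (by positivity)
  rw [Fin.sum_univ_three]
  nlinarith [sq_nonneg (p 0 - (q 2 * n 1 - q 1 * n 2)), sq_nonneg (p 1 - (q 0 * n 2 - q 2 * n 0)),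
    sq_nonneg (p 2 - (q 1 * n 0 - q 0 * n 1)),
    sq_nonneg (q 0 * n 0 + q 1 * n 1 + q 2 * n 2)]

lemma mul_normSq_le_curl_add_magEnergyDensity (hv : ContDiff ℝ 2 v) {n : Fin 3 → ℝ}
    (hn : n 0 ^ 2 + n 1 ^ 2 + n 2 ^ 2 ≤ 1) (x : E3) :
    B * n 2 * ‖v x‖ ^ 2 ≤
      n 2 * (partialDeriv 0 (magCurrent B v 1) x - partialDeriv 1 (magCurrent B v 0) x) +
      n 1 * (partialDeriv 2 (magCurrent B v 0) x - partialDeriv 0 (magCurrent B v 2) x) +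
      n 0 * (partialDeriv 1 (magCurrent B v 2) x - partialDeriv 2 (magCurrent B v 1) x) +
      magEnergyDensity B v x := by
  have htriple := two_mul_triple_product_le n (fun j => (magD B v j x).re)
    (fun j => (magD B v j x).im) hn
  simp only [curl_magCurrent hv, partialDeriv_Avec, magEnergyDensity, Complex.sq_norm,
    Complex.normSq_apply, Fin.sum_univ_three] at htriple ⊢
  simp only [Complex.mul_im, Complex.conj_re, Complex.conj_im, Fin.reduceEq, and_false, false_and,
    and_self, if_true, if_false]
  linarith

/-- Integration of `n · curl J = div (J × n)` for the current `J` and a curl-free field `n`. -/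
lemma integral_curlFree_mul_normSq_le (hv : ContDiff ℝ 2 v) {n : Fin 3 → E3 → ℝ}
    (hn : ∀ k, ContDiff ℝ 1 (n k))
    (hcurl : ∀ j k x, partialDeriv j (n k) x = partialDeriv k (n j) x)
    (hle : ∀ x ∈ ball3, n 0 x ^ 2 + n 1 x ^ 2 + n 2 x ^ 2 ≤ 1)
    (hflux : ∀ x : E3, ‖x‖ = 1 →
      ∑ j, x j * crossProduct (fun k => magCurrent B v k x) (fun k => n k x) j = 0) :
    ∫ x in ball3, B * n 2 x * ‖v x‖ ^ 2 ≤ ∫ x in ball3, magEnergyDensity B v x := by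
  set F : Fin 3 → E3 → ℝ := fun j x =>
    crossProduct (fun k => magCurrent B v k x) (fun k => n k x) j
  have hJ := contDiff_magCurrent B hv
  have hpair (a b : Fin 3) :
      ContDiff ℝ 1 fun x => magCurrent B v a x * n b x - magCurrent B v b x * n a x :=
    ((hJ a).mul (hn b)).sub ((hJ b).mul (hn a))
  have hFC (j : Fin 3) : ContDiff ℝ 1 (F j) := by
    fin_cases j
    exacts [hpair 1 2, hpair 2 0, hpair 0 1]
  have hdF (a b j : Fin 3) (x : E3) :
      partialDeriv j (fun x => magCurrent B v a x * n b x - magCurrent B v b x * n a x) x =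
        partialDeriv j (magCurrent B v a) x * n b x + magCurrent B v a x * partialDeriv j (n b) x -
        (partialDeriv j (magCurrent B v b) x * n a x +
          magCurrent B v b x * partialDeriv j (n a) x) := by
    have hJd (k : Fin 3) := (hJ k).differentiable one_ne_zero x
    have hnd (k : Fin 3) := (hn k).differentiable one_ne_zero x
    rw [← partialDeriv_mul (hJd a) (hnd b), ← partialDeriv_mul (hJd b) (hnd a), partialDeriv,
      fderiv_fun_sub ((hJd a).fun_mul (hnd b)) ((hJd b).fun_mul (hnd a))]
    rfl
  have hpt (x : E3) (hx : x ∈ ball3) :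
      B * n 2 x * ‖v x‖ ^ 2 - ∑ j, partialDeriv j (F j) x ≤ magEnergyDensity B v x := by
    have h := mul_normSq_le_curl_add_magEnergyDensity (B := B) hv (n := fun k => n k x) (hle x hx) x
    have hdiv : ∑ j, partialDeriv j (F j) x = _ :=
      (Fin.sum_univ_three _).trans (congr_arg₂ _ (congr_arg₂ _ (hdF 1 2 0 x) (hdF 2 0 1 x))
        (hdF 0 1 2 x))
    rw [hcurl 1 0, hcurl 2 0, hcurl 2 1] at hdiv
    linarith
  have hnc := (hn 2).continuous
  have hvc := hv.continuous
  have hDc : Continuous fun x => ∑ j, partialDeriv j (F j) x :=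
    continuous_finsetSum _ fun j _ => continuous_partialDeriv (hFC j) j
  have hint := setIntegral_mono_on
    (integrableOn_ball3_of_continuous (by fun_prop)) (integrableOn_ball3_of_continuous
      (continuous_magEnergyDensity B (hv.of_le one_le_two))) measurableSet_ball3 hpt
  have hdiv0 : ∫ x in ball3, ∑ j, partialDeriv j (F j) x = 0 :=
    integral_divergence_eq_zero hFC hflux
  rwa [integral_sub (integrableOn_ball3_of_continuous (by fun_prop))
    (integrableOn_ball3_of_continuous hDc), hdiv0, sub_zero] at hint

lemma integral_mul_normSq_le_of_eq_zero_on_sphere (B : ℝ) (hv : ContDiff ℝ 2 v)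
    (h0 : ∀ x : E3, ‖x‖ = 1 → v x = 0) :
    ∫ x in ball3, B * ‖v x‖ ^ 2 ≤ ∫ x in ball3, magEnergyDensity B v x := by
  have h := integral_curlFree_mul_normSq_le (B := B) hv (n := fun k _ => ![0, 0, 1] k)
    (fun _ => contDiff_const) (fun _ _ _ => by simp [partialDeriv]) (fun _ _ => by simp)
    fun x hx => by
      have hJ : (fun k => magCurrent B v k x) = 0 := by
        ext k
        simp [magCurrent, h0 x hx]
      simp [hJ]
  simpa using h

lemma integral_mul_coord_mul_normSq_le (B : ℝ) (hv : ContDiff ℝ 2 v) {σ : ℝ} (hσ : σ ^ 2 = 1) :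
    ∫ x in ball3, B * (σ * x 2) * ‖v x‖ ^ 2 ≤ ∫ x in ball3, magEnergyDensity B v x := by
  refine integral_curlFree_mul_normSq_le hv (n := fun k x => σ * x k)
    (fun k => by fun_prop) (fun j k x => ?_) (fun x hx => ?_) fun x _ => ?_
  · simp only [partialDeriv_const_mul_coord, eq_comm]
  · have hx1 := mem_ball3_iff.1 hx
    nlinarith [norm_sq_eq_coord x, norm_nonneg x]
  · simp only [cross_apply, Fin.sum_univ_three, Matrix.cons_val]
    ring

end Curl

section AxialRotation

variable {x : E3} {z : ℂ}

/-- The real-linear extension to all `z : ℂ` of the rotation about the `x₃`-axis, which multiplies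
`x₁ + i x₂` by `z` and fixes `x₃`. -/
def axialRotation (z : ℂ) : E3 →L[ℝ] E3 :=
  (EuclideanSpace.proj 2 : E3 →L[ℝ] ℝ).smulRight (EuclideanSpace.single 2 1) +
    z.re • ((EuclideanSpace.proj 0 : E3 →L[ℝ] ℝ).smulRight (EuclideanSpace.single 0 1) +
      (EuclideanSpace.proj 1 : E3 →L[ℝ] ℝ).smulRight (EuclideanSpace.single 1 1)) +
    z.im • ((EuclideanSpace.proj 0 : E3 →L[ℝ] ℝ).smulRight (EuclideanSpace.single 1 1) -
      (EuclideanSpace.proj 1 : E3 →L[ℝ] ℝ).smulRight (EuclideanSpace.single 0 1))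

lemma axialRotation_apply (z : ℂ) (x : E3) :
    axialRotation z x = x 2 • EuclideanSpace.single 2 1 +
      z.re • (x 0 • EuclideanSpace.single 0 1 + x 1 • EuclideanSpace.single 1 1) +
      z.im • (x 0 • EuclideanSpace.single 1 1 - x 1 • EuclideanSpace.single 0 1) := rfl

@[simp]
lemma axialRotation_apply_zero (z : ℂ) (x : E3) :
    axialRotation z x 0 = z.re * x 0 - z.im * x 1 := by
  rw [axialRotation_apply]
  simp
  ring

@[simp]
lemma axialRotation_apply_one (z : ℂ) (x : E3) :
    axialRotation z x 1 = z.im * x 0 + z.re * x 1 := by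
  rw [axialRotation_apply]
  simp
  ring

@[simp]
lemma axialRotation_apply_two (z : ℂ) (x : E3) : axialRotation z x 2 = x 2 := by
  rw [axialRotation_apply]
  simp

lemma axialRotation_single_zero (z : ℂ) : axialRotation z (EuclideanSpace.single 0 1) =
    z.re • EuclideanSpace.single 0 1 + z.im • EuclideanSpace.single 1 1 := by
  simp [axialRotation_apply]

lemma axialRotation_single_one (z : ℂ) : axialRotation z (EuclideanSpace.single 1 1) =
    z.re • EuclideanSpace.single 1 1 - z.im • EuclideanSpace.single 0 1 := by
  simp [axialRotation_apply, sub_eq_add_neg]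

lemma axialRotation_single_two (z : ℂ) :
    axialRotation z (EuclideanSpace.single 2 1) = EuclideanSpace.single 2 1 := by
  simp [axialRotation_apply]

lemma axialRotation_one_apply (x : E3) : axialRotation 1 x = x := by
  ext i
  fin_cases i <;> simp

lemma axialRotation_mul_apply (z w : ℂ) (x : E3) :
    axialRotation (z * w) x = axialRotation z (axialRotation w x) := by
  ext i
  fin_cases i <;> simp <;> ring

lemma re_sq_add_im_sq (hz : ‖z‖ = 1) : z.re ^ 2 + z.im ^ 2 = 1 := by
  rw [← one_pow 2, ← hz, Complex.sq_norm, Complex.normSq_apply, sq, sq]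

lemma axialRotation_radius_sq (hz : ‖z‖ = 1) (x : E3) :
    axialRotation z x 0 ^ 2 + axialRotation z x 1 ^ 2 = x 0 ^ 2 + x 1 ^ 2 := by
  rw [axialRotation_apply_zero, axialRotation_apply_one]
  linear_combination (x 0 ^ 2 + x 1 ^ 2) * re_sq_add_im_sq hz

lemma norm_axialRotation (hz : ‖z‖ = 1) (x : E3) : ‖axialRotation z x‖ = ‖x‖ := by
  rw [← sq_eq_sq₀ (norm_nonneg _) (norm_nonneg _), norm_sq_eq_coord, norm_sq_eq_coord,
    axialRotation_radius_sq hz, axialRotation_apply_two]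

@[fun_prop]
lemma continuous_axialRotation : Continuous axialRotation := by
  unfold axialRotation
  fun_prop

lemma hasDerivAt_axialRotation_apply {γ : ℝ → ℂ} {γ' : ℂ} {s : ℝ} (hγ : HasDerivAt γ γ' s)
    (x : E3) : HasDerivAt (fun r => axialRotation (γ r) x)
      (γ'.re • (x 0 • EuclideanSpace.single 0 1 + x 1 • EuclideanSpace.single 1 1) +
        γ'.im • (x 0 • EuclideanSpace.single 1 1 - x 1 • EuclideanSpace.single 0 1)) s :=
  ((((Complex.reCLM.hasFDerivAt.comp_hasDerivAt s hγ).smul_const _).const_add _).fun_add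
    ((Complex.imCLM.hasFDerivAt.comp_hasDerivAt s hγ).smul_const _))

lemma setIntegral_ball3_comp_axialRotation (hz : ‖z‖ = 1) (g : E3 → ℝ) :
    ∫ x in ball3, g (axialRotation z x) = ∫ x in ball3, g x := by
  set R : E3 ≃ₗᵢ[ℝ] E3 :=
    LinearIsometry.toLinearIsometryEquiv ⟨axialRotation z, norm_axialRotation hz⟩ rfl
  have hpre : R ⁻¹' ball3 = ball3 := by
    ext x
    simp only [mem_preimage, mem_ball3_iff, R.norm_map]
  have h := R.measurePreserving.setIntegral_preimage_emb R.toHomeomorph.measurableEmbedding g ball3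
  rw [hpre] at h
  exact h

end AxialRotation

section AngularModes

variable {B : ℝ} {v : E3 → ℂ}

lemma norm_fourier_apply (n : ℤ) (t : UnitAddCircle) : ‖fourier n t‖ = 1 := by
  rw [fourier_apply, Circle.norm_coe]

lemma fourier_apply_add (n : ℤ) (s t : UnitAddCircle) :
    fourier n (s + t) = fourier n s * fourier n t := by
  simp only [fourier_apply, smul_add, AddCircle.toCircle_add, Circle.coe_mul]

lemma continuous_axialRotation_fourier :
    Continuous fun p : E3 × UnitAddCircle => axialRotation (fourier 1 p.2) p.1 :=
  (continuous_axialRotation.comp ((fourier 1).continuous.comp continuous_snd)).clm_apply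
    continuous_fst

lemma continuous_axialRotation_fourier_apply (x : E3) :
    Continuous fun t : UnitAddCircle => axialRotation (fourier 1 t) x :=
  (continuous_axialRotation.comp (fourier 1).continuous).clm_apply continuous_const

lemma integrable_haarAddCircle_of_continuous {F : Type*} [NormedAddCommGroup F]
    {f : UnitAddCircle → F} (hf : Continuous f) : Integrable f AddCircle.haarAddCircle :=
  hf.integrable_of_hasCompactSupport (HasCompactSupport.of_compactSpace _)

lemma integral_axialRotation_integral {g : E3 → ℝ} (hg : Continuous g) :
    ∫ x in ball3, ∫ t : UnitAddCircle, g (axialRotation (fourier 1 t) x) ∂AddCircle.haarAddCircle =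
      ∫ x in ball3, g x := by
  obtain ⟨K, hK⟩ := (isCompact_closedBall (0 : E3) 1).exists_bound_of_continuousOn hg.continuousOn
  have : IsFiniteMeasure (volume.restrict ball3 : Measure E3) :=
    ⟨by rw [Measure.restrict_apply_univ]; exact measure_ball_lt_top⟩
  rw [integral_integral_swap]
  · simp only [setIntegral_ball3_comp_axialRotation (norm_fourier_apply 1 _), integral_const,
      probReal_univ, one_smul]
  · refine Integrable.of_bound (hg.comp continuous_axialRotation_fourier).aestronglyMeasurable K ?_
    have hprod : (volume.restrict ball3 : Measure E3).prod AddCircle.haarAddCircle =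
        (volume.prod (AddCircle.haarAddCircle (T := 1))).restrict (ball3 ×ˢ univ) := by
      rw [← Measure.prod_restrict, Measure.restrict_univ]
    rw [hprod]
    filter_upwards [ae_restrict_mem (measurableSet_ball3.prod MeasurableSet.univ)] with p hp
    refine hK _ (mem_closedBall_zero_iff.2 ?_)
    rw [norm_axialRotation (norm_fourier_apply 1 _)]
    exact (mem_ball3_iff.1 hp.1).le

/-- The `m`-th angular Fourier mode of `v`, again as a function on `ℝ³`. -/
def angularMode (v : E3 → ℂ) (m : ℤ) (x : E3) : ℂ :=
  fourierCoeff (fun t : UnitAddCircle => v (axialRotation (fourier 1 t) x)) m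

lemma hasFDerivAt_integral_of_continuous {α E F : Type*} [NormedAddCommGroup E] [NormedSpace ℝ E]
    [ProperSpace E] [NormedAddCommGroup F] [NormedSpace ℝ F] [TopologicalSpace α] [CompactSpace α]
    [MeasurableSpace α] [OpensMeasurableSpace α] [SecondCountableTopologyEither α F]
    [SecondCountableTopologyEither α (E →L[ℝ] F)] (μ : Measure α) [IsFiniteMeasure μ]
    {f : E → α → F} {f' : E → α → E →L[ℝ] F} (hf : Continuous (Function.uncurry f))
    (hf' : Continuous (Function.uncurry f')) (hd : ∀ x t, HasFDerivAt (fun y => f y t) (f' x t) x)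
    (x : E) : HasFDerivAt (fun y => ∫ t, f y t ∂μ) (∫ t, f' x t ∂μ) x := by
  obtain ⟨K, hK⟩ := ((isCompact_closedBall x 1).prod
    (isCompact_univ (X := α))).exists_bound_of_continuousOn hf'.continuousOn
  obtain ⟨L, hL⟩ := (isCompact_univ (X := α)).exists_bound_of_continuousOn
    (hf.comp (Continuous.prodMk_right x)).continuousOn
  exact hasFDerivAt_integral_of_dominated_of_fderiv_le (s := Metric.ball x 1) (bound := fun _ => K)
    (Metric.ball_mem_nhds x one_pos)
    (Eventually.of_forall fun y => (hf.comp (Continuous.prodMk_right y)).aestronglyMeasurable)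
    (Integrable.of_bound (hf.comp (Continuous.prodMk_right x)).aestronglyMeasurable L
      (Eventually.of_forall fun t => hL t (mem_univ t)))
    (hf'.comp (Continuous.prodMk_right x)).aestronglyMeasurable
    (Eventually.of_forall fun t y hy => hK (y, t) ⟨Metric.ball_subset_closedBall hy, mem_univ _⟩)
    (integrable_const _) (Eventually.of_forall fun t y _ => hd y t)

lemma continuous_fourier_smul_fderiv_comp_axialRotation (hv : ContDiff ℝ 1 v) (m : ℤ) :
    Continuous (Function.uncurry fun (x : E3) (t : UnitAddCircle) => (fourier (-m) t : ℂ) •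
      (fderiv ℝ v (axialRotation (fourier 1 t) x)).comp (axialRotation (fourier 1 t))) :=
  ((fourier (-m)).continuous.comp continuous_snd).smul <|
    ((hv.continuous_fderiv one_ne_zero).comp continuous_axialRotation_fourier).clm_comp
      (continuous_axialRotation.comp ((fourier 1).continuous.comp continuous_snd))

lemma hasFDerivAt_angularMode (hv : ContDiff ℝ 1 v) (m : ℤ) (x : E3) :
    HasFDerivAt (angularMode v m) (∫ t : UnitAddCircle, (fourier (-m) t : ℂ) •
      (fderiv ℝ v (axialRotation (fourier 1 t) x)).comp (axialRotation (fourier 1 t))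
        ∂AddCircle.haarAddCircle) x := by
  refine hasFDerivAt_integral_of_continuous _
    (f := fun x t => (fourier (-m) t : ℂ) • v (axialRotation (fourier 1 t) x))
    (((fourier (-m)).continuous.comp continuous_snd).smul
      (hv.continuous.comp continuous_axialRotation_fourier))
    (continuous_fourier_smul_fderiv_comp_axialRotation hv m) (fun y t => ?_) x
  exact ((hv.differentiable one_ne_zero _).hasFDerivAt.comp y
    (axialRotation (fourier 1 t)).hasFDerivAt).const_smul (fourier (-m) t : ℂ)

lemma contDiff_angularMode (hv : ContDiff ℝ 1 v) (m : ℤ) : ContDiff ℝ 1 (angularMode v m) := by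
  refine contDiff_one_iff_fderiv.2
    ⟨fun x => (hasFDerivAt_angularMode hv m x).differentiableAt, ?_⟩
  simp only [funext fun x => (hasFDerivAt_angularMode hv m x).fderiv]
  simpa only [setIntegral_univ] using continuous_parametric_integral_of_continuous
    (continuous_fourier_smul_fderiv_comp_axialRotation hv m) isCompact_univ

lemma angularMode_eq_zero {m : ℤ} {x : E3}
    (h : ∀ y : E3, y 0 ^ 2 + y 1 ^ 2 = x 0 ^ 2 + x 1 ^ 2 → y 2 = x 2 → v y = 0) :
    angularMode v m x = 0 := by
  have hz (t : UnitAddCircle) : v (axialRotation (fourier 1 t) x) = 0 :=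
    h _ (axialRotation_radius_sq (norm_fourier_apply 1 t) x) (axialRotation_apply_two _ x)
  simp only [angularMode, fourierCoeff, hz, smul_zero, integral_zero]

lemma angularMode_axialRotation (v : E3 → ℂ) (m : ℤ) (x : E3) (s : UnitAddCircle) :
    angularMode v m (axialRotation (fourier 1 s) x) = fourier m s * angularMode v m x := by
  have hphase (t : UnitAddCircle) : fourier m s * fourier (-m) (t + s) = fourier (-m) t := by
    rw [fourier_apply_add, mul_left_comm, ← fourier_add, add_neg_cancel, fourier_zero, mul_one]
  simp only [angularMode, fourierCoeff, smul_eq_mul]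
  rw [← integral_const_mul, ← integral_add_right_eq_self
    (fun t => fourier m s * (fourier (-m) t * v (axialRotation (fourier 1 t) x))) s]
  simp only [← mul_assoc, hphase]
  simp only [fourier_apply_add, axialRotation_mul_apply]

lemma angularMomentum_angularMode (hv : ContDiff ℝ 1 v) (m : ℤ) (x : E3) :
    (x 0 : ℂ) * partialDeriv 1 (angularMode v m) x - x 1 * partialDeriv 0 (angularMode v m) x =
      Complex.I * m * angularMode v m x := by
  have hchain := HasFDerivAt.comp_hasDerivAt (0 : ℝ) (l := angularMode v m)
    (l' := fderiv ℝ (angularMode v m) x)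
    (by simpa [axialRotation_one_apply] using
      ((contDiff_angularMode hv m).differentiable one_ne_zero x).hasFDerivAt)
    (hasDerivAt_axialRotation_apply (hasDerivAt_fourier 1 1 0) x)
  have hphase := (hasDerivAt_fourier (1 : ℝ) m 0).mul_const (angularMode v m x)
  have h := hchain.unique (hphase.congr_of_eventuallyEq
    (Eventually.of_forall fun s => angularMode_axialRotation v m x s))
  have hpi : (2 * π : ℂ) ≠ 0 := by simp [pi_ne_zero]
  refine mul_left_cancel₀ hpi ?_
  simpa [mul_assoc, partialDeriv] using h

lemma magD_comp_axialRotation (B : ℝ) (hv : ContDiff ℝ 1 v) (z : ℂ) (j : Fin 3) (x : E3) :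
    magD B (fun y => v (axialRotation z y)) j x =
      -Complex.I * fderiv ℝ v (axialRotation z x) (axialRotation z (EuclideanSpace.single j 1)) +
        Avec B x j * v (axialRotation z x) := by
  have hchain := ((hv.differentiable one_ne_zero (axialRotation z x)).hasFDerivAt.comp x
    (axialRotation z).hasFDerivAt).fderiv
  simp only [magD]
  congr 2
  exact congr($hchain _)

lemma magEnergyDensity_comp_axialRotation (B : ℝ) (hv : ContDiff ℝ 1 v) {z : ℂ} (hz : ‖z‖ = 1)
    (x : E3) : magEnergyDensity B (fun y => v (axialRotation z y)) x =
      magEnergyDensity B v (axialRotation z x) := by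
  have hzC : (z.re : ℂ) ^ 2 + (z.im : ℂ) ^ 2 = 1 := mod_cast re_sq_add_im_sq hz
  have h0 : magD B (fun y => v (axialRotation z y)) 0 x =
      z.re * magD B v 0 (axialRotation z x) + z.im * magD B v 1 (axialRotation z x) := by
    rw [magD_comp_axialRotation B hv, axialRotation_single_zero]
    simp [magD, Avec]
    linear_combination (B / 2 * x 1 : ℂ) * v (axialRotation z x) * hzC
  have h1 : magD B (fun y => v (axialRotation z y)) 1 x =
      (-z.im : ℝ) * magD B v 0 (axialRotation z x) + z.re * magD B v 1 (axialRotation z x) := by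
    rw [magD_comp_axialRotation B hv, axialRotation_single_one]
    simp [magD, Avec]
    linear_combination (-B / 2 * x 0 : ℂ) * v (axialRotation z x) * hzC
  have h2 : magD B (fun y => v (axialRotation z y)) 2 x = magD B v 2 (axialRotation z x) := by
    rw [magD_comp_axialRotation B hv, axialRotation_single_two]
    simp [magD, Avec]
  simp only [magEnergyDensity, Fin.sum_univ_three, h0, h1, h2, Complex.sq_norm,
    Complex.normSq_apply, Complex.add_re, Complex.add_im, Complex.re_ofReal_mul,
    Complex.im_ofReal_mul]
  generalize magD B v 0 (axialRotation z x) = a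
  generalize magD B v 1 (axialRotation z x) = b
  linear_combination (a.re ^ 2 + a.im ^ 2 + b.re ^ 2 + b.im ^ 2) * re_sq_add_im_sq hz

lemma continuous_magD_comp_axialRotation (B : ℝ) (hv : ContDiff ℝ 1 v) (j : Fin 3) (x : E3) :
    Continuous fun t : UnitAddCircle =>
      magD B (fun y => v (axialRotation (fourier 1 t) y)) j x := by
  simp only [magD_comp_axialRotation B hv]
  have hder : Continuous fun t : UnitAddCircle => fderiv ℝ v (axialRotation (fourier 1 t) x) :=
    (hv.continuous_fderiv one_ne_zero).comp (continuous_axialRotation_fourier_apply x)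
  have hdir := hder.clm_apply (continuous_axialRotation_fourier_apply (EuclideanSpace.single j 1))
  fun_prop

lemma magD_angularMode (B : ℝ) (hv : ContDiff ℝ 1 v) (m : ℤ) (j : Fin 3) (x : E3) :
    magD B (angularMode v m) j x =
      fourierCoeff (fun t : UnitAddCircle =>
        magD B (fun y => v (axialRotation (fourier 1 t) y)) j x) m := by
  have hder : Integrable (fun t : UnitAddCircle => (fourier (-m) t : ℂ) •
      (fderiv ℝ v (axialRotation (fourier 1 t) x)).comp (axialRotation (fourier 1 t)))
      AddCircle.haarAddCircle :=
    integrable_haarAddCircle_of_continuous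
      ((continuous_fourier_smul_fderiv_comp_axialRotation hv m).uncurry_left x)
  have hval : Integrable (fun t : UnitAddCircle => (fourier (-m) t : ℂ) •
      v (axialRotation (fourier 1 t) x)) AddCircle.haarAddCircle :=
    integrable_haarAddCircle_of_continuous ((fourier (-m)).continuous.smul
      (hv.continuous.comp (continuous_axialRotation_fourier_apply x)))
  have hdir := hder.apply_continuousLinearMap (EuclideanSpace.single j 1)
  rw [magD, (hasFDerivAt_angularMode hv m x).fderiv, ContinuousLinearMap.integral_apply hder,
    angularMode, fourierCoeff, fourierCoeff, ← integral_const_mul, ← integral_const_mul,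
    ← integral_add (hdir.const_mul _) (hval.const_mul _)]
  refine integral_congr_ae (Eventually.of_forall fun t => ?_)
  simp only [magD_comp_axialRotation B hv, smul_apply, ContinuousLinearMap.comp_apply, smul_eq_mul]
  ring

lemma hasSum_normSq_fourierCoeff {f : UnitAddCircle → ℂ} (hf : Continuous f) :
    HasSum (fun m : ℤ => ‖fourierCoeff f m‖ ^ 2) (∫ t, ‖f t‖ ^ 2 ∂AddCircle.haarAddCircle) := by
  have hparseval :=
    hasSum_sq_fourierCoeff (ContinuousMap.toLp (E := ℂ) 2 AddCircle.haarAddCircle ℂ ⟨f, hf⟩)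
  simp only [fourierCoeff_toLp] at hparseval
  have hae := ContinuousMap.coeFn_toLp (E := ℂ) (p := 2) (AddCircle.haarAddCircle (T := 1))
    (𝕜 := ℂ) ⟨f, hf⟩
  rwa [integral_congr_ae (hae.mono fun t ht => by rw [ht])] at hparseval

/-- Invariance under rotations about the `x₃`-axis. -/
def IsAxisymmetric (w : E3 → ℝ) : Prop :=
  ∀ x y : E3, y 0 ^ 2 + y 1 ^ 2 = x 0 ^ 2 + x 1 ^ 2 → y 2 = x 2 → w y = w x

lemma hasSum_integral_mul_of_isAxisymmetric {f : ℤ → E3 → ℝ} {g w : E3 → ℝ}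
    (hf : ∀ m, Continuous (f m)) (hf0 : ∀ m x, 0 ≤ f m x) (hg : Continuous g) (hw : Continuous w)
    (hsymm : IsAxisymmetric w) (hsum : ∀ x, HasSum (fun m => f m x)
      (∫ t : UnitAddCircle, g (axialRotation (fourier 1 t) x) ∂AddCircle.haarAddCircle)) :
    HasSum (fun m => ∫ x in ball3, w x * f m x) (∫ x in ball3, w x * g x) := by
  obtain ⟨K, hK⟩ := (isCompact_closedBall (0 : E3) 1).exists_bound_of_continuousOn hw.continuousOn
  have hmean : Continuous fun x : E3 =>
      ∫ t : UnitAddCircle, g (axialRotation (fourier 1 t) x) ∂AddCircle.haarAddCircle := by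
    simpa only [setIntegral_univ] using continuous_parametric_integral_of_continuous
      (f := fun x (t : UnitAddCircle) => g (axialRotation (fourier 1 t) x))
      (hg.comp continuous_axialRotation_fourier) isCompact_univ
  have hw_rot (x : E3) (t : UnitAddCircle) : w (axialRotation (fourier 1 t) x) = w x :=
    hsymm _ _ (axialRotation_radius_sq (norm_fourier_apply 1 t) x) (axialRotation_apply_two _ x)
  have hintegral := integral_axialRotation_integral (g := fun x => w x * g x) (hw.mul hg)
  simp only [hw_rot, integral_const_mul] at hintegral
  rw [← hintegral]
  refine hasSum_integral_of_dominated_convergence (fun m x => K * f m x)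
    (fun m => (hw.mul (hf m)).aestronglyMeasurable) (fun m => ?_)
    (Eventually.of_forall fun x => (hsum x).summable.mul_left K) ?_
    (Eventually.of_forall fun x => (hsum x).mul_left (w x))
  · filter_upwards [ae_restrict_mem measurableSet_ball3] with x hx
    rw [norm_mul, Real.norm_of_nonneg (hf0 m x)]
    exact mul_le_mul_of_nonneg_right (hK x (Metric.ball_subset_closedBall hx)) (hf0 m x)
  · simp only [tsum_mul_left, (hsum _).tsum_eq]
    exact integrableOn_ball3_of_continuous (continuous_const.mul hmean)

lemma hasSum_magEnergyDensity_angularMode (B : ℝ) (hv : ContDiff ℝ 1 v) (x : E3) :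
    HasSum (fun m => magEnergyDensity B (angularMode v m) x)
      (∫ t : UnitAddCircle, magEnergyDensity B v (axialRotation (fourier 1 t) x)
        ∂AddCircle.haarAddCircle) := by
  have hcont := continuous_magD_comp_axialRotation B hv
  have h := hasSum_sum (s := Finset.univ) fun (j : Fin 3) _ =>
    hasSum_normSq_fourierCoeff (hcont j x)
  have hint (j : Fin 3) : Integrable (fun t : UnitAddCircle =>
      ‖magD B (fun y => v (axialRotation (fourier 1 t) y)) j x‖ ^ 2) AddCircle.haarAddCircle :=
    integrable_haarAddCircle_of_continuous ((hcont j x).norm.pow 2)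
  rw [← integral_finsetSum _ fun j _ => hint j] at h
  simp only [← magEnergyDensity_comp_axialRotation B hv (norm_fourier_apply 1 _)]
  simpa only [magEnergyDensity, magD_angularMode B hv] using h

/-- The weighted energy inequality `∫ W |u|² ≤ ∫ |(-i∇ + A)u|²` on the unit ball. -/
def EnergyDominates (B : ℝ) (W : E3 → ℝ) (u : E3 → ℂ) : Prop :=
  ∫ x in ball3, W x * ‖u x‖ ^ 2 ≤ ∫ x in ball3, magEnergyDensity B u x

lemma EnergyDominates.of_angularMode (hv : ContDiff ℝ 1 v) {w : E3 → ℝ} (hw : Continuous w)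
    (hsymm : IsAxisymmetric w) (h : ∀ m, EnergyDominates B w (angularMode v m)) :
    EnergyDominates B w v := by
  have hmode := contDiff_angularMode hv
  have hmass := hasSum_integral_mul_of_isAxisymmetric (f := fun m x => ‖angularMode v m x‖ ^ 2)
    (g := fun x => ‖v x‖ ^ 2) (fun m => (hmode m).continuous.norm.pow 2)
    (fun _ _ => sq_nonneg _) (hv.continuous.norm.pow 2) hw hsymm fun x =>
      hasSum_normSq_fourierCoeff
        (hv.continuous.comp (continuous_axialRotation_fourier_apply x))
  have henergy := hasSum_integral_mul_of_isAxisymmetric (w := fun _ => 1)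
    (f := fun m x => magEnergyDensity B (angularMode v m) x) (g := magEnergyDensity B v)
    (fun m => continuous_magEnergyDensity B (hmode m))
    (fun m => magEnergyDensity_nonneg B (angularMode v m)) (continuous_magEnergyDensity B hv)
    continuous_const (fun _ _ _ _ => rfl) (hasSum_magEnergyDensity_angularMode B hv)
  simp only [one_mul] at henergy
  exact hasSum_le h hmass henergy

end AngularModes

section SoftSign

/-- The bounded sigmoid `y / √(1 + y²)`, a smooth substitute for the sign function. -/
def softSign (y : ℝ) : ℝ := y / √(1 + y ^ 2)

lemma softSign_sq (y : ℝ) : softSign y ^ 2 = y ^ 2 / (1 + y ^ 2) := by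
  rw [softSign, div_pow, sq_sqrt (by positivity)]

lemma softSign_sq_le_one (y : ℝ) : softSign y ^ 2 ≤ 1 := by
  rw [softSign_sq, div_le_one (by positivity)]
  linarith

lemma softSign_sq_le_sq (y : ℝ) : softSign y ^ 2 ≤ y ^ 2 := by
  rw [softSign_sq]
  exact div_le_self (sq_nonneg y) (by linarith [sq_nonneg y])

lemma half_le_softSign_sq {y : ℝ} (hy : 1 ≤ |y|) : 1 / 2 ≤ softSign y ^ 2 := by
  rw [softSign_sq, div_le_div_iff₀ two_pos (by positivity)]
  linarith [(one_le_sq_iff_one_le_abs y).2 hy]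

lemma abs_softSign_le_one (y : ℝ) : |softSign y| ≤ 1 :=
  (sq_le_one_iff_abs_le_one _).1 (softSign_sq_le_one y)

lemma contDiff_softSign : ContDiff ℝ 1 softSign :=
  contDiff_id.div (ContDiff.sqrt (by fun_prop) fun y => (by positivity : 0 < 1 + y ^ 2).ne')
    fun y => (sqrt_pos.2 (by positivity)).ne'

lemma hasDerivAt_softSign (y : ℝ) : HasDerivAt softSign (deriv softSign y) y :=
  (contDiff_softSign.differentiable one_ne_zero y).hasDerivAt

lemma deriv_softSign (y : ℝ) : deriv softSign y = 1 / ((1 + y ^ 2) * √(1 + y ^ 2)) := by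
  have hpos : 0 < 1 + y ^ 2 := by positivity
  have hbase : HasDerivAt (fun y : ℝ => 1 + y ^ 2) (2 * y) y := by
    simpa using (hasDerivAt_pow 2 y).const_add 1
  have hquot := (hasDerivAt_id y).fun_div (hbase.sqrt hpos.ne') (sqrt_pos.2 hpos).ne'
  refine hquot.deriv.trans ?_
  rw [id, sq_sqrt hpos.le]
  field_simp
  rw [sq_sqrt hpos.le]
  ring

lemma deriv_softSign_pos (y : ℝ) : 0 < deriv softSign y := by
  rw [deriv_softSign]
  positivity

lemma deriv_softSign_le_one (y : ℝ) : deriv softSign y ≤ 1 := by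
  have hsqrt : 1 ≤ √(1 + y ^ 2) := one_le_sqrt.2 (by linarith [sq_nonneg y])
  rw [deriv_softSign, div_le_one (by positivity)]
  nlinarith [sq_nonneg y]

lemma one_div_pow_le_deriv_softSign {y K : ℝ} (hK : 0 ≤ K) (h : 1 + y ^ 2 ≤ K ^ 2) :
    1 / K ^ 3 ≤ deriv softSign y := by
  have hsqrt : √(1 + y ^ 2) ≤ K := (sqrt_le_left hK).2 h
  have hprod : (1 + y ^ 2) * √(1 + y ^ 2) ≤ K ^ 3 := by
    calc (1 + y ^ 2) * √(1 + y ^ 2) ≤ K ^ 2 * K := by gcongr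
      _ = K ^ 3 := by ring
  rw [deriv_softSign]
  exact one_div_le_one_div_of_le (by positivity) hprod

lemma abs_div_three_le_softSign_sq_add (y : ℝ) {z : ℝ} (hz : |z| ≤ 1) :
    |z| / 3 ≤ softSign y ^ 2 + |z| * deriv softSign y := by
  have hz0 := abs_nonneg z
  rcases le_or_gt |y| 1 with hy | hy
  · have hderiv : 1 / (1.44 : ℝ) ^ 3 ≤ deriv softSign y :=
      one_div_pow_le_deriv_softSign (by norm_num) (by linarith [(sq_le_one_iff_abs_le_one y).2 hy])
    nlinarith [sq_nonneg (softSign y)]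
  · nlinarith [half_le_softSign_sq hy.le, deriv_softSign_pos y]

lemma abs_sub_one_div_le_softSign_mul {b : ℝ} (hb : 0 < b) (z : ℝ) :
    |z| - 1 / b ≤ softSign (b * z) * z := by
  have hsqrt : √(1 + (b * z) ^ 2) ≤ 1 + b * |z| := by
    have hsq : (b * |z|) ^ 2 = (b * z) ^ 2 := by rw [mul_pow, sq_abs, mul_pow]
    rw [sqrt_le_left (by positivity)]
    linarith [mul_nonneg hb.le (abs_nonneg z)]
  calc |z| - 1 / b ≤ b * z ^ 2 / (1 + b * |z|) := by
        have hfactor : (|z| - 1 / b) * (1 + b * |z|) = b * z ^ 2 - 1 / b := by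
          rw [← sq_abs z]
          field_simp
          ring
        rw [le_div_iff₀ (by positivity), hfactor]
        linarith [one_div_pos.2 hb]
    _ ≤ b * z ^ 2 / √(1 + (b * z) ^ 2) :=
        div_le_div_of_nonneg_left (by positivity) (by positivity) hsqrt
    _ = softSign (b * z) * z := by
        rw [softSign]
        ring

end SoftSign

section GaussianMoments

variable {a : ℝ}

/-- The integrand of `gaussianMoment`. -/
def gaussianMomentDensity (a τ s : ℝ) : ℝ := s ^ (a - 1) * exp (-2 * τ * s - s ^ 2)

/-- The moment `∫₀^∞ s^(a-1) exp (-2τs - s²) ds`. As a function of `τ` it is, up to the factor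
`exp (-τ²/2)`, the parabolic cylinder function decaying at `+∞`. -/
def gaussianMoment (a τ : ℝ) : ℝ := ∫ s in Ioi (0 : ℝ), gaussianMomentDensity a τ s

lemma gaussianMomentDensity_pos (a τ : ℝ) {s : ℝ} (hs : 0 < s) :
    0 < gaussianMomentDensity a τ s := by
  unfold gaussianMomentDensity
  positivity

lemma gaussianMomentDensity_add_one (a τ : ℝ) {s : ℝ} (hs : 0 < s) :
    gaussianMomentDensity (a + 1) τ s = s * gaussianMomentDensity a τ s := by
  rw [gaussianMomentDensity, gaussianMomentDensity, add_sub_right_comm, rpow_add_one hs.ne']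
  ring

lemma gaussianMomentDensity_add_two (a τ : ℝ) {s : ℝ} (hs : 0 < s) :
    gaussianMomentDensity (a + 2) τ s = s ^ 2 * gaussianMomentDensity a τ s := by
  rw [show a + 2 = a + 1 + 1 by ring, gaussianMomentDensity_add_one _ _ hs,
    gaussianMomentDensity_add_one _ _ hs]
  ring

lemma gaussianMomentDensity_le (a : ℝ) {τ s K : ℝ} (hs : 0 < s) (hK : |τ| ≤ K) :
    gaussianMomentDensity a τ s ≤ exp (2 * K ^ 2) * (s ^ (a - 1) * exp (-(1 / 2) * s ^ 2)) := by
  have hτ : τ ^ 2 ≤ K ^ 2 := sq_le_sq' (neg_le_of_abs_le hK) (le_of_abs_le hK)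
  have hexp : exp (-2 * τ * s - s ^ 2) ≤ exp (2 * K ^ 2) * exp (-(1 / 2) * s ^ 2) := by
    rw [← exp_add, exp_le_exp]
    nlinarith [sq_nonneg (s + 2 * τ)]
  rw [gaussianMomentDensity, mul_left_comm]
  gcongr

lemma aestronglyMeasurable_gaussianMomentDensity (a τ : ℝ) :
    AEStronglyMeasurable (gaussianMomentDensity a τ) (volume.restrict (Ioi 0)) := by
  refine ContinuousOn.aestronglyMeasurable ?_ measurableSet_Ioi
  exact (continuousOn_id.rpow_const fun s hs => Or.inl (ne_of_gt hs)).mul (by fun_prop)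

lemma integrableOn_gaussianMoment_bound (ha : 0 < a) (C : ℝ) :
    IntegrableOn (fun s : ℝ => C * (s ^ (a - 1) * exp (-(1 / 2) * s ^ 2))) (Ioi 0) :=
  (integrableOn_rpow_mul_exp_neg_mul_sq one_half_pos (by linarith)).const_mul C

lemma integrableOn_gaussianMomentDensity (ha : 0 < a) (τ : ℝ) :
    IntegrableOn (gaussianMomentDensity a τ) (Ioi 0) := by
  refine (integrableOn_gaussianMoment_bound ha (exp (2 * |τ| ^ 2))).mono'
    (aestronglyMeasurable_gaussianMomentDensity a τ) ?_
  filter_upwards [ae_restrict_mem measurableSet_Ioi] with s hs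
  rw [Real.norm_of_nonneg (gaussianMomentDensity_pos a τ hs).le]
  exact gaussianMomentDensity_le a hs le_rfl

lemma gaussianMoment_pos (ha : 0 < a) (τ : ℝ) : 0 < gaussianMoment a τ := by
  have hnonneg : 0 ≤ᵐ[volume.restrict (Ioi 0)] gaussianMomentDensity a τ :=
    (ae_restrict_mem measurableSet_Ioi).mono fun s hs => (gaussianMomentDensity_pos a τ hs).le
  refine (setIntegral_pos_iff_support_of_nonneg_ae hnonneg
    (integrableOn_gaussianMomentDensity ha τ)).2 ?_
  have hsupport : Ioi (0 : ℝ) ⊆ Function.support (gaussianMomentDensity a τ) ∩ Ioi 0 :=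
    fun s hs => ⟨(gaussianMomentDensity_pos a τ hs).ne', hs⟩
  exact lt_of_lt_of_le (by simp) (measure_mono hsupport)

lemma hasDerivAt_gaussianMoment (ha : 0 < a) (τ : ℝ) :
    HasDerivAt (gaussianMoment a) (-2 * gaussianMoment (a + 1) τ) τ := by
  have hdens {s : ℝ} (hs : 0 < s) (t : ℝ) : HasDerivAt (fun t => gaussianMomentDensity a t s)
      (-2 * gaussianMomentDensity (a + 1) t s) t := by
    have hexponent : HasDerivAt (fun t : ℝ => -2 * t * s - s ^ 2) (-2 * s) t := by
      simpa using (((hasDerivAt_id t).const_mul (-2)).mul_const s).sub_const (s ^ 2)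
    refine (hexponent.exp.const_mul (s ^ (a - 1))).congr_deriv ?_
    rw [gaussianMomentDensity_add_one a t hs, gaussianMomentDensity]
    ring
  have hbound {s t : ℝ} (hs : 0 < s) (ht : t ∈ Metric.ball τ 1) :
      ‖-2 * gaussianMomentDensity (a + 1) t s‖ ≤
        2 * (exp (2 * (|τ| + 1) ^ 2) * (s ^ (a + 1 - 1) * exp (-(1 / 2) * s ^ 2))) := by
    have ht' : |t - τ| < 1 := by rwa [Metric.mem_ball, Real.dist_eq] at ht
    rw [norm_mul, norm_neg, Real.norm_ofNat,
      Real.norm_of_nonneg (gaussianMomentDensity_pos _ t hs).le]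
    exact mul_le_mul_of_nonneg_left (gaussianMomentDensity_le _ hs
      (by linarith [abs_sub_abs_le_abs_sub t τ])) two_pos.le
  have hleibniz := hasDerivAt_integral_of_dominated_loc_of_deriv_le
    (μ := volume.restrict (Ioi (0 : ℝ))) (F := fun t s => gaussianMomentDensity a t s)
    (F' := fun t s => -2 * gaussianMomentDensity (a + 1) t s) (Metric.ball_mem_nhds τ one_pos)
    (Eventually.of_forall (aestronglyMeasurable_gaussianMomentDensity a))
    (integrableOn_gaussianMomentDensity ha τ)
    ((aestronglyMeasurable_gaussianMomentDensity (a + 1) τ).const_mul _)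
    ((ae_restrict_mem measurableSet_Ioi).mono fun s hs t ht => hbound hs ht)
    ((integrableOn_gaussianMoment_bound (by linarith) _).const_mul 2)
    ((ae_restrict_mem measurableSet_Ioi).mono fun s hs t _ => hdens hs t)
  refine hleibniz.2.congr_deriv ?_
  rw [integral_const_mul, gaussianMoment]

lemma hasIntegral_gaussianMomentDensity_combination (ha : 0 < a) (τ c₀ c₁ c₂ : ℝ) :
    IntegrableOn (fun s => (c₀ + c₁ * s + c₂ * s ^ 2) * gaussianMomentDensity a τ s) (Ioi 0) ∧
      ∫ s in Ioi (0 : ℝ), (c₀ + c₁ * s + c₂ * s ^ 2) * gaussianMomentDensity a τ s =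
        c₀ * gaussianMoment a τ + c₁ * gaussianMoment (a + 1) τ +
          c₂ * gaussianMoment (a + 2) τ := by
  have hint₀ := (integrableOn_gaussianMomentDensity ha τ).const_mul c₀
  have hint₁ := (integrableOn_gaussianMomentDensity (by linarith : 0 < a + 1) τ).const_mul c₁
  have hint₂ := (integrableOn_gaussianMomentDensity (by linarith : 0 < a + 2) τ).const_mul c₂
  have hint₀₁ : IntegrableOn (fun s => c₀ * gaussianMomentDensity a τ s +
      c₁ * gaussianMomentDensity (a + 1) τ s) (Ioi 0) := Integrable.add hint₀ hint₁
  have hint : IntegrableOn (fun s => c₀ * gaussianMomentDensity a τ s +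
      c₁ * gaussianMomentDensity (a + 1) τ s + c₂ * gaussianMomentDensity (a + 2) τ s) (Ioi 0) :=
    Integrable.add hint₀₁ hint₂
  have hexpand : EqOn (fun s => c₀ * gaussianMomentDensity a τ s +
      c₁ * gaussianMomentDensity (a + 1) τ s + c₂ * gaussianMomentDensity (a + 2) τ s)
      (fun s => (c₀ + c₁ * s + c₂ * s ^ 2) * gaussianMomentDensity a τ s) (Ioi 0) := by
    intro s hs
    simp only [gaussianMomentDensity_add_one a τ hs, gaussianMomentDensity_add_two a τ hs]
    ring
  refine ⟨hint.congr_fun hexpand measurableSet_Ioi, ?_⟩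
  rw [← setIntegral_congr_fun measurableSet_Ioi hexpand, integral_add hint₀₁ hint₂,
    integral_add hint₀ hint₁]
  simp only [gaussianMoment, integral_const_mul]

lemma integrableOn_gaussianMomentDensity_combination (ha : 0 < a) (τ c₀ c₁ c₂ : ℝ) :
    IntegrableOn (fun s => (c₀ + c₁ * s + c₂ * s ^ 2) * gaussianMomentDensity a τ s) (Ioi 0) :=
  (hasIntegral_gaussianMomentDensity_combination ha τ c₀ c₁ c₂).1

lemma integral_gaussianMomentDensity_combination (ha : 0 < a) (τ c₀ c₁ c₂ : ℝ) :
    ∫ s in Ioi (0 : ℝ), (c₀ + c₁ * s + c₂ * s ^ 2) * gaussianMomentDensity a τ s =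
      c₀ * gaussianMoment a τ + c₁ * gaussianMoment (a + 1) τ + c₂ * gaussianMoment (a + 2) τ :=
  (hasIntegral_gaussianMomentDensity_combination ha τ c₀ c₁ c₂).2

lemma gaussianMoment_sq_le (ha : 0 < a) (τ : ℝ) :
    gaussianMoment (a + 1) τ ^ 2 ≤ gaussianMoment a τ * gaussianMoment (a + 2) τ := by
  have hquad (x : ℝ) : 0 ≤ gaussianMoment a τ * (x * x) + -2 * gaussianMoment (a + 1) τ * x +
      gaussianMoment (a + 2) τ := by
    have hnonneg : 0 ≤ ∫ s in Ioi (0 : ℝ), (x * x + -2 * x * s + 1 * s ^ 2) *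
        gaussianMomentDensity a τ s :=
      setIntegral_nonneg measurableSet_Ioi fun s hs =>
        mul_nonneg (by linarith [sq_nonneg (x - s)]) (gaussianMomentDensity_pos a τ hs).le
    rw [integral_gaussianMomentDensity_combination ha] at hnonneg
    linarith
  have hdiscrim := discrim_le_zero hquad
  rw [discrim] at hdiscrim
  linarith

lemma tendsto_rpow_mul_gaussian (a τ : ℝ) :
    Tendsto (fun s : ℝ => s ^ a * exp (-2 * τ * s - s ^ 2)) atTop (𝓝 0) := by
  have hlim : Tendsto (fun s : ℝ => exp (2 * |τ| ^ 2) * (s ^ a * exp (-(1 / 2) * s))) atTop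
      (𝓝 0) := by
    simpa only [mul_zero] using
      (tendsto_rpow_mul_exp_neg_mul_atTop_nhds_zero a (1 / 2) one_half_pos).const_mul
        (exp (2 * |τ| ^ 2))
  refine squeeze_zero' ((eventually_gt_atTop 0).mono fun s hs => by positivity) ?_ hlim
  filter_upwards [eventually_ge_atTop 1] with s hs
  have hpos : 0 < s := by linarith
  have hbound := gaussianMomentDensity_le (a + 1) hpos (le_refl |τ|)
  rw [gaussianMomentDensity, add_sub_cancel_right] at hbound
  refine hbound.trans ?_
  gcongr exp _ * (_ * exp ?_)
  linarith [le_self_pow₀ hs two_ne_zero]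

lemma mul_gaussianMoment_eq (ha : 0 < a) (τ : ℝ) : a * gaussianMoment a τ =
    2 * τ * gaussianMoment (a + 1) τ + 2 * gaussianMoment (a + 2) τ := by
  have hder (s : ℝ) (hs : s ∈ Ioi (0 : ℝ)) :
      HasDerivAt (fun s : ℝ => s ^ a * exp (-2 * τ * s - s ^ 2))
        ((a + -2 * τ * s + -2 * s ^ 2) * gaussianMomentDensity a τ s) s := by
    have hexponent : HasDerivAt (fun s : ℝ => -2 * τ * s - s ^ 2) (-2 * τ - 2 * s) s := by
      simpa using ((hasDerivAt_id s).const_mul (-2 * τ)).fun_sub (hasDerivAt_pow 2 s)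
    have hpow : s ^ a = s ^ (a - 1) * s := by
      rw [← rpow_add_one (ne_of_gt hs), sub_add_cancel]
    refine ((Real.hasDerivAt_rpow_const (Or.inl (ne_of_gt hs))).mul hexponent.exp).congr_deriv ?_
    rw [gaussianMomentDensity, hpow]
    ring
  have hint := integrableOn_gaussianMomentDensity_combination ha τ a (-2 * τ) (-2)
  have hcont : ContinuousWithinAt (fun s : ℝ => s ^ a * exp (-2 * τ * s - s ^ 2)) (Ici 0) 0 :=
    ((continuousAt_id.rpow_const (Or.inr ha.le)).mul (by fun_prop)).continuousWithinAt
  have hftc := integral_Ioi_of_hasDerivAt_of_tendsto hcont hder hint (tendsto_rpow_mul_gaussian a τ)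
  rw [integral_gaussianMomentDensity_combination ha, zero_rpow ha.ne'] at hftc
  linarith

lemma gaussianMoment_zero (ha : 0 < a) : gaussianMoment a 0 = Gamma (a / 2) / 2 := by
  have hgamma := integral_rpow_mul_exp_neg_rpow (p := 2) (q := a - 1) two_pos (by linarith)
  rw [sub_add_cancel, one_div_mul_eq_div] at hgamma
  rw [← hgamma, gaussianMoment]
  simp [gaussianMomentDensity]

end GaussianMoments

section DeGennes

lemma deGennes_nonneg (ξ : ℝ) : 0 ≤ deGennes ξ := by
  refine Real.sInf_nonneg ?_
  rintro q ⟨u, -, -, -, hpos, rfl⟩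
  exact div_nonneg (integral_nonneg fun t => by positivity) hpos.le

lemma Theta0_nonneg : 0 ≤ Theta0 := Real.iInf_nonneg deGennes_nonneg

lemma Theta0_mul_integral_sq_le {w w' : ℝ → ℝ} (ξ : ℝ) (hw : ∀ t, HasDerivAt w (w' t) t)
    (hw' : Continuous w') (hsq : IntegrableOn (fun t => w t ^ 2) (Ioi 0))
    (henergy : IntegrableOn (fun t => w' t ^ 2 + (t + ξ) ^ 2 * w t ^ 2) (Ioi 0)) :
    Theta0 * ∫ t in Ioi (0 : ℝ), w t ^ 2 ≤
      ∫ t in Ioi (0 : ℝ), (w' t ^ 2 + (t + ξ) ^ 2 * w t ^ 2) := by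
  rcases (integral_nonneg fun t => sq_nonneg (w t) :
    0 ≤ ∫ t in Ioi (0 : ℝ), w t ^ 2).eq_or_lt with hzero | hpos
  · rw [← hzero, mul_zero]
    exact integral_nonneg fun t => by positivity
  have hderiv (t : ℝ) : HasDerivAt (fun t => (w t : ℂ)) (w' t : ℂ) t := (hw t).ofReal_comp
  have hnorm (t : ℝ) : ‖(w t : ℂ)‖ ^ 2 = w t ^ 2 := by simp
  have hnorm' (t : ℝ) : ‖deriv (fun t => (w t : ℂ)) t‖ ^ 2 = w' t ^ 2 := by
    simp [(hderiv t).deriv]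
  have hinf : Theta0 ≤ deGennes ξ := ciInf_le ⟨0, forall_mem_range.2 deGennes_nonneg⟩ ξ
  refine (le_div_iff₀ hpos).1 (hinf.trans (csInf_le ⟨0, ?_⟩ ⟨fun t => (w t : ℂ), ?_, ?_⟩))
  · rintro q ⟨u, -, -, -, hu, rfl⟩
    exact div_nonneg (integral_nonneg fun t => by positivity) hu.le
  · refine contDiff_one_iff_deriv.2 ⟨fun t => (hderiv t).differentiableAt, ?_⟩
    rw [funext fun t => (hderiv t).deriv]
    exact Complex.continuous_ofReal.comp hw'
  · simpa only [hnorm, hnorm'] using ⟨hsq, henergy, hpos, trivial⟩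

/-- The trial state is the Gaussian `exp (-t²/2)` at `ξ = -1/2`. -/
lemma Theta0_le : Theta0 ≤ 3 / 4 := by
  have hderiv (t : ℝ) : HasDerivAt (fun t : ℝ => exp (-(t ^ 2 / 2)))
      (-t * exp (-(t ^ 2 / 2))) t := by
    refine (((hasDerivAt_pow 2 t).div_const 2).neg).exp.congr_deriv ?_
    norm_num
    ring
  have hsq (t : ℝ) : exp (-(t ^ 2 / 2)) ^ 2 =
      (1 + 0 * t + 0 * t ^ 2) * gaussianMomentDensity 1 0 t := by
    rw [gaussianMomentDensity, sub_self, rpow_zero, ← exp_nat_mul]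
    ring_nf
  have henergy (t : ℝ) :
      (-t * exp (-(t ^ 2 / 2))) ^ 2 + (t + -(1 / 2)) ^ 2 * exp (-(t ^ 2 / 2)) ^ 2 =
        (1 / 4 + -1 * t + 2 * t ^ 2) * gaussianMomentDensity 1 0 t := by
    rw [mul_pow, hsq]
    ring
  have hvar := Theta0_mul_integral_sq_le (-(1 / 2)) hderiv (by fun_prop)
    (by simpa only [hsq] using integrableOn_gaussianMomentDensity_combination one_pos 0 1 0 0)
    (by simpa only [henergy] using
      integrableOn_gaussianMomentDensity_combination one_pos 0 (1 / 4) (-1) 2)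
  simp only [henergy] at hvar
  simp only [hsq, integral_gaussianMomentDensity_combination (zero_lt_one' ℝ)] at hvar
  have hM₂ : gaussianMoment (1 + 1) 0 = 1 / 2 := by
    rw [gaussianMoment_zero (by norm_num)]
    norm_num
  have hM₃ := mul_gaussianMoment_eq (zero_lt_one' ℝ) 0
  have hM₁ : gaussianMoment 1 0 = √π / 2 := by rw [gaussianMoment_zero one_pos, Gamma_one_half_eq]
  have hsqrt : √π ≤ 2 := (sqrt_le_left two_pos.le).2 (by linarith [pi_le_four])
  refine le_of_mul_le_mul_right ?_ (gaussianMoment_pos one_pos 0)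
  rw [hM₂] at hvar
  norm_num at hvar hM₃ ⊢
  linarith

variable {a : ℝ}

/-- The parabolic cylinder function decaying at `+∞`: the solution of `φ'' = (τ² - (1 - 2a)) φ` that
a Neumann ground state on a half-line is built from. -/
def weberFunction (a τ : ℝ) : ℝ := exp (-(τ ^ 2 / 2)) * gaussianMoment a τ

/-- The logarithmic derivative of `weberFunction a`. -/
def weberRiccati (a τ : ℝ) : ℝ := -τ - 2 * gaussianMoment (a + 1) τ / gaussianMoment a τ

lemma weberFunction_pos (ha : 0 < a) (τ : ℝ) : 0 < weberFunction a τ :=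
  mul_pos (exp_pos _) (gaussianMoment_pos ha τ)

lemma hasDerivAt_weberFunction (ha : 0 < a) (τ : ℝ) :
    HasDerivAt (weberFunction a) (weberRiccati a τ * weberFunction a τ) τ := by
  have hpos := gaussianMoment_pos ha τ
  refine ((((hasDerivAt_pow 2 τ).div_const 2).fun_neg.exp).fun_mul
    (hasDerivAt_gaussianMoment ha τ)).congr_deriv ?_
  simp only [weberRiccati, weberFunction]
  field_simp
  norm_num
  ring

lemma hasDerivAt_weberRiccati (ha : 0 < a) (τ : ℝ) :
    HasDerivAt (weberRiccati a) (τ ^ 2 - (1 - 2 * a) - weberRiccati a τ ^ 2) τ := by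
  have hpos := gaussianMoment_pos ha τ
  have hrec := mul_gaussianMoment_eq ha τ
  refine ((hasDerivAt_id τ).fun_neg.fun_sub (((hasDerivAt_gaussianMoment (by linarith) τ).const_mul
    2).fun_div (hasDerivAt_gaussianMoment ha τ) hpos.ne')).congr_deriv ?_
  rw [weberRiccati, add_assoc, one_add_one_eq_two,
    show gaussianMoment (a + 2) τ = (a * gaussianMoment a τ - 2 * τ * gaussianMoment (a + 1) τ) / 2
      by linarith]
  field_simp
  ring

lemma weberRiccati_lt_neg (ha : 0 < a) (τ : ℝ) : weberRiccati a τ < -τ := by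
  have hpos := gaussianMoment_pos ha τ
  have hpos' := gaussianMoment_pos (by linarith : 0 < a + 1) τ
  exact sub_lt_self _ (by positivity)

lemma weberRiccati_sq_le (ha : 0 < a) (τ : ℝ) : weberRiccati a τ ^ 2 ≤ τ ^ 2 + 2 * a := by
  have hpos := gaussianMoment_pos ha τ
  have hcauchy : 2 * gaussianMoment (a + 1) τ ^ 2 ≤
      gaussianMoment a τ * (a * gaussianMoment a τ - 2 * τ * gaussianMoment (a + 1) τ) := by
    rw [mul_gaussianMoment_eq ha τ]
    linarith [gaussianMoment_sq_le ha τ]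
  have hdiff : τ ^ 2 + 2 * a - weberRiccati a τ ^ 2 = 2 * (gaussianMoment a τ *
      (a * gaussianMoment a τ - 2 * τ * gaussianMoment (a + 1) τ) -
        2 * gaussianMoment (a + 1) τ ^ 2) / gaussianMoment a τ ^ 2 := by
    rw [weberRiccati]
    field_simp
    ring
  have hnonneg : 0 ≤ τ ^ 2 + 2 * a - weberRiccati a τ ^ 2 := by
    rw [hdiff]
    exact div_nonneg (by linarith) (sq_nonneg _)
  linarith

lemma antitone_gaussianMoment (ha : 0 < a) : Antitone (gaussianMoment a) :=
  antitone_of_deriv_nonpos (fun t => (hasDerivAt_gaussianMoment ha t).differentiableAt) fun t => by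
    rw [(hasDerivAt_gaussianMoment ha t).deriv]
    linarith [gaussianMoment_pos (by linarith : 0 < a + 1) t]

lemma one_add_sq_mul_weberFunction_sq_le (ha : 0 < a) {ξ τ : ℝ} (hξ : ξ ≤ τ) :
    (1 + τ ^ 2) * weberFunction a τ ^ 2 ≤ 2 * gaussianMoment a ξ ^ 2 * exp (-(1 / 2) * τ ^ 2) := by
  have hmoment : gaussianMoment a τ ^ 2 ≤ gaussianMoment a ξ ^ 2 :=
    pow_le_pow_left₀ (gaussianMoment_pos ha τ).le (antitone_gaussianMoment ha hξ) 2
  have hweight : 1 + τ ^ 2 ≤ 2 * exp (τ ^ 2 / 2) := by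
    linarith [add_one_le_exp (τ ^ 2 / 2)]
  have hexp : exp (τ ^ 2 / 2) * exp (-(τ ^ 2 / 2)) ^ 2 = exp (-(1 / 2) * τ ^ 2) := by
    rw [← exp_nat_mul, ← exp_add]
    ring_nf
  calc (1 + τ ^ 2) * weberFunction a τ ^ 2
      ≤ 2 * exp (τ ^ 2 / 2) * (exp (-(τ ^ 2 / 2)) ^ 2 * gaussianMoment a ξ ^ 2) := by
        rw [weberFunction, mul_pow]
        gcongr
    _ = 2 * gaussianMoment a ξ ^ 2 * exp (-(1 / 2) * τ ^ 2) := by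
        rw [← hexp]
        ring

lemma integrableOn_gaussian_comp_add_right (ξ C : ℝ) :
    IntegrableOn (fun t : ℝ => C * exp (-(1 / 2) * (t + ξ) ^ 2)) (Ioi 0) :=
  (((integrable_exp_neg_mul_sq one_half_pos).comp_add_right ξ).const_mul C).integrableOn

lemma tendsto_gaussian_comp_add_right (ξ C : ℝ) :
    Tendsto (fun t : ℝ => C * exp (-(1 / 2) * (t + ξ) ^ 2)) atTop (𝓝 0) := by
  have hexponent : Tendsto (fun t : ℝ => -(1 / 2) * (t + ξ) ^ 2) atTop atBot :=
    ((tendsto_pow_atTop two_ne_zero).comp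
      (tendsto_atTop_add_const_right _ ξ tendsto_id)).const_mul_atTop_of_neg (by norm_num)
  simpa only [mul_zero, Function.comp_apply] using (tendsto_exp_atBot.comp hexponent).const_mul C

lemma continuous_weberFunction (ha : 0 < a) : Continuous (weberFunction a) :=
  continuous_iff_continuousAt.2 fun τ => (hasDerivAt_weberFunction ha τ).continuousAt

lemma continuous_weberRiccati (ha : 0 < a) : Continuous (weberRiccati a) :=
  continuous_iff_continuousAt.2 fun τ => (hasDerivAt_weberRiccati ha τ).continuousAt

lemma integrableOn_and_tendsto_zero_of_le_weberFunction (ha : 0 < a) (ξ : ℝ) {f : ℝ → ℝ}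
    (hf : Continuous f)
    (hle : ∀ t, |f t| ≤ (2 + 2 * a) * ((1 + (t + ξ) ^ 2) * weberFunction a (t + ξ) ^ 2)) :
    IntegrableOn f (Ioi 0) ∧ Tendsto f atTop (𝓝 0) := by
  have hbound {t : ℝ} (ht : 0 < t) : ‖f t‖ ≤
      (2 + 2 * a) * (2 * gaussianMoment a ξ ^ 2) * exp (-(1 / 2) * (t + ξ) ^ 2) := by
    rw [mul_assoc]
    refine (hle t).trans (mul_le_mul_of_nonneg_left ?_ (by linarith))
    exact one_add_sq_mul_weberFunction_sq_le ha (by linarith)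
  exact ⟨(integrableOn_gaussian_comp_add_right ξ _).mono' hf.aestronglyMeasurable
    ((ae_restrict_mem measurableSet_Ioi).mono fun t ht => hbound ht),
    squeeze_zero_norm' ((eventually_gt_atTop 0).mono fun t ht => hbound ht)
      (tendsto_gaussian_comp_add_right ξ _)⟩

lemma integrableOn_weberFunction_sq (ha : 0 < a) (ξ : ℝ) :
    IntegrableOn (fun t => weberFunction a (t + ξ) ^ 2) (Ioi 0) := by
  have hφ := continuous_weberFunction ha
  refine (integrableOn_and_tendsto_zero_of_le_weberFunction ha ξ (by fun_prop) fun t => ?_).1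
  rw [abs_of_nonneg (sq_nonneg _), ← mul_assoc]
  exact le_mul_of_one_le_left (sq_nonneg _) (by nlinarith [sq_nonneg (t + ξ)])

lemma integrableOn_weberFunction_energy (ha : 0 < a) (ξ : ℝ) :
    IntegrableOn (fun t => (weberRiccati a (t + ξ) * weberFunction a (t + ξ)) ^ 2 +
      (t + ξ) ^ 2 * weberFunction a (t + ξ) ^ 2) (Ioi 0) := by
  have hφ := continuous_weberFunction ha
  have hR := continuous_weberRiccati ha
  refine (integrableOn_and_tendsto_zero_of_le_weberFunction ha ξ (by fun_prop) fun t => ?_).1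
  rw [abs_of_nonneg (by positivity), mul_pow, ← add_mul, ← mul_assoc]
  refine mul_le_mul_of_nonneg_right ?_ (sq_nonneg _)
  nlinarith [weberRiccati_sq_le ha (t + ξ), sq_nonneg (t + ξ)]

lemma tendsto_weberRiccati_mul_weberFunction_sq (ha : 0 < a) (ξ : ℝ) :
    Tendsto (fun t => weberRiccati a (t + ξ) * weberFunction a (t + ξ) ^ 2) atTop (𝓝 0) := by
  have hφ := continuous_weberFunction ha
  have hR := continuous_weberRiccati ha
  refine (integrableOn_and_tendsto_zero_of_le_weberFunction ha ξ (by fun_prop) fun t => ?_).2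
  have habs : |weberRiccati a (t + ξ)| ≤ 1 + weberRiccati a (t + ξ) ^ 2 := by
    rw [← sq_abs]
    nlinarith [sq_nonneg (|weberRiccati a (t + ξ)| - 1)]
  rw [abs_mul, abs_of_nonneg (sq_nonneg (weberFunction a (t + ξ))), ← mul_assoc]
  refine mul_le_mul_of_nonneg_right ?_ (sq_nonneg _)
  nlinarith [weberRiccati_sq_le ha (t + ξ), sq_nonneg (t + ξ)]

lemma weberFunction_energy_sub_eq (ha : 0 < a) (ξ : ℝ) :
    (∫ t in Ioi (0 : ℝ), ((weberRiccati a (t + ξ) * weberFunction a (t + ξ)) ^ 2 +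
        (t + ξ) ^ 2 * weberFunction a (t + ξ) ^ 2)) -
      (1 - 2 * a) * ∫ t in Ioi (0 : ℝ), weberFunction a (t + ξ) ^ 2 =
        -(weberRiccati a ξ * weberFunction a ξ ^ 2) := by
  have hint := (integrableOn_weberFunction_sq ha ξ).const_mul (1 - 2 * a)
  have hderiv (t : ℝ) : HasDerivAt (fun t => weberRiccati a (t + ξ) * weberFunction a (t + ξ) ^ 2)
      ((weberRiccati a (t + ξ) * weberFunction a (t + ξ)) ^ 2 +
        (t + ξ) ^ 2 * weberFunction a (t + ξ) ^ 2 -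
          (1 - 2 * a) * weberFunction a (t + ξ) ^ 2) t := by
    refine (((hasDerivAt_weberRiccati ha (t + ξ)).comp_add_const t ξ).fun_mul
      (((hasDerivAt_weberFunction ha (t + ξ)).comp_add_const t ξ).fun_pow 2)).congr_deriv ?_
    norm_num
    ring
  have hftc := integral_Ioi_of_hasDerivAt_of_tendsto (hderiv 0).continuousAt.continuousWithinAt
    (fun t _ => hderiv t) ((integrableOn_weberFunction_energy ha ξ).sub hint)
    (tendsto_weberRiccati_mul_weberFunction_sq ha ξ)
  rw [integral_sub (integrableOn_weberFunction_energy ha ξ) hint, integral_const_mul] at hftc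
  rw [hftc, zero_add, zero_sub]

/-- If the logarithmic derivative were positive at `ξ`, the translate of `weberFunction a` to the
half-line would be a trial state of energy below `1 - 2a`. -/
lemma weberRiccati_nonpos (ha : 0 < a) (hΘ : 1 - 2 * a ≤ Theta0) (ξ : ℝ) :
    weberRiccati a ξ ≤ 0 := by
  have hderiv (t : ℝ) := (hasDerivAt_weberFunction ha (t + ξ)).comp_add_const t ξ
  have hvar := Theta0_mul_integral_sq_le ξ hderiv (((continuous_weberRiccati ha).mul
    (continuous_weberFunction ha)).comp (continuous_id.add continuous_const))
    (integrableOn_weberFunction_sq ha ξ) (integrableOn_weberFunction_energy ha ξ)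
  have hmass : 0 ≤ ∫ t in Ioi (0 : ℝ), weberFunction a (t + ξ) ^ 2 :=
    integral_nonneg fun t => sq_nonneg _
  have henergy := weberFunction_energy_sub_eq ha ξ
  have hφ := pow_pos (weberFunction_pos ha ξ) 2
  refine nonpos_of_mul_nonpos_left ?_ hφ
  linarith [mul_le_mul_of_nonneg_right hΘ hmass]

end DeGennes

section DeGennesRiccati

lemma half_abs_sub_two_le_neg_of_riccati {R : ℝ → ℝ} {Θ : ℝ} (hΘ : Θ ≤ 1)
    (hR : ∀ τ, HasDerivAt R (τ ^ 2 - Θ - R τ ^ 2) τ) (hlt : ∀ τ, R τ < -τ) (hnonpos : ∀ τ, R τ ≤ 0)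
    (τ : ℝ) : |τ| / 2 - 2 ≤ -R τ := by
  rcases le_or_gt 0 τ with hτ | hτ
  · rw [abs_of_nonneg hτ]
    linarith [hlt τ]
  rw [abs_of_neg hτ]
  by_contra! hcon
  have hτ4 : τ < -4 := by linarith [hnonpos τ]
  have hRτ : τ / 2 ≤ R τ := by linarith
  have hcont : Continuous R := continuous_iff_continuousAt.2 fun t => (hR t).continuousAt
  have hsq {t : ℝ} (ht : t ≤ τ + 1) : (τ + 1) ^ 2 ≤ t ^ 2 := by nlinarith
  have hlow (t : ℝ) (ht : t ∈ Icc τ (τ + 1)) : τ / 2 ≤ R t := by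
    refine image_le_of_deriv_right_lt_deriv_boundary' (f := fun _ => τ / 2) (f' := fun _ => 0)
      continuousOn_const (fun x _ => (hasDerivAt_const x _).hasDerivWithinAt) hRτ hcont.continuousOn
      (fun x _ => (hR x).hasDerivWithinAt) (fun x hx heq => ?_) ht
    rw [← heq]
    nlinarith [hsq hx.2.le]
  have hslope (t : ℝ) (ht : t ∈ Ioo τ (τ + 1)) : 3 / 4 * τ ^ 2 + 2 * τ ≤ deriv R t := by
    have hRt : R t ^ 2 ≤ (τ / 2) ^ 2 := by
      nlinarith [hlow t (Ioo_subset_Icc_self ht), hnonpos t]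
    rw [(hR t).deriv]
    nlinarith [hsq ht.2.le]
  have hmean := (convex_Icc τ (τ + 1)).mul_sub_le_image_sub_of_le_deriv hcont.continuousOn
    (fun t _ => (hR t).differentiableAt.differentiableWithinAt) (by rwa [interior_Icc])
    τ (left_mem_Icc.2 (by linarith)) (τ + 1) (right_mem_Icc.2 (by linarith)) (by linarith)
  nlinarith [hnonpos (τ + 1)]

/-- The logarithmic derivative of the decaying solution of `φ'' = (τ² - Θ₀) φ`. -/
def deGennesRiccati (τ : ℝ) : ℝ := weberRiccati ((1 - Theta0) / 2) τ

/-- The only possible minimizer of `deGennes`, and the only possible zero of `deGennesRiccati`. -/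
def deGennesMomentum : ℝ := -√Theta0

lemma half_one_sub_Theta0_pos : 0 < (1 - Theta0) / 2 := by linarith [Theta0_le]

lemma hasDerivAt_deGennesRiccati (τ : ℝ) :
    HasDerivAt deGennesRiccati (τ ^ 2 - Theta0 - deGennesRiccati τ ^ 2) τ :=
  (hasDerivAt_weberRiccati half_one_sub_Theta0_pos τ).congr_deriv (by rw [deGennesRiccati]; ring)

lemma continuous_deGennesRiccati : Continuous deGennesRiccati :=
  continuous_weberRiccati half_one_sub_Theta0_pos

lemma deGennesRiccati_sq_le (τ : ℝ) : deGennesRiccati τ ^ 2 ≤ τ ^ 2 + 1 - Theta0 :=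
  (weberRiccati_sq_le half_one_sub_Theta0_pos τ).trans_eq (by ring)

lemma deGennesRiccati_lt_neg (τ : ℝ) : deGennesRiccati τ < -τ :=
  weberRiccati_lt_neg half_one_sub_Theta0_pos τ

lemma deGennesRiccati_nonpos (τ : ℝ) : deGennesRiccati τ ≤ 0 :=
  weberRiccati_nonpos half_one_sub_Theta0_pos (by linarith) τ

lemma half_abs_sub_two_le_neg_deGennesRiccati (τ : ℝ) : |τ| / 2 - 2 ≤ -deGennesRiccati τ :=
  half_abs_sub_two_le_neg_of_riccati (by linarith [Theta0_le]) hasDerivAt_deGennesRiccati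
    deGennesRiccati_lt_neg deGennesRiccati_nonpos τ

lemma deGennesMomentum_sq : deGennesMomentum ^ 2 = Theta0 := by
  rw [deGennesMomentum, neg_sq, sq_sqrt Theta0_nonneg]

lemma eq_deGennesMomentum_of_deGennesRiccati_eq_zero {τ : ℝ} (hτ : deGennesRiccati τ = 0) :
    τ = deGennesMomentum := by
  have hmax : IsLocalMax deGennesRiccati τ :=
    Eventually.of_forall fun t => (deGennesRiccati_nonpos t).trans_eq hτ.symm
  have hcrit := hmax.hasDerivAt_eq_zero (hasDerivAt_deGennesRiccati τ)
  have hneg := deGennesRiccati_lt_neg τ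
  rw [hτ] at hcrit hneg
  refine (sq_eq_sq_iff_eq_or_eq_neg.1 (?_ : τ ^ 2 = deGennesMomentum ^ 2)).resolve_right ?_
  · rw [deGennesMomentum_sq]
    linarith
  · rw [deGennesMomentum, neg_neg]
    exact fun h => absurd (sqrt_nonneg Theta0) (by linarith)

lemma eventually_quadratic_le_neg_deGennesRiccati (hzero : deGennesRiccati deGennesMomentum = 0) :
    ∀ᶠ τ in 𝓝 deGennesMomentum,
      -deGennesMomentum / 2 * (τ - deGennesMomentum) ^ 2 ≤ -deGennesRiccati τ := by
  have hneg : deGennesMomentum < 0 := by linarith [deGennesRiccati_lt_neg deGennesMomentum]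
  set f : ℝ → ℝ := fun τ =>
    deGennesRiccati τ + -deGennesMomentum / 2 * (τ - deGennesMomentum) ^ 2 with hf
  have hderiv (τ : ℝ) : HasDerivAt f (τ ^ 2 - Theta0 - deGennesRiccati τ ^ 2 +
      -deGennesMomentum * (τ - deGennesMomentum)) τ := by
    refine ((hasDerivAt_deGennesRiccati τ).fun_add ((((hasDerivAt_id τ).sub_const
      deGennesMomentum).fun_pow 2).const_mul (-deGennesMomentum / 2))).congr_deriv ?_
    norm_num
    ring
  have hderiv_eq := funext fun τ => (hderiv τ).deriv
  have hderiv2 : HasDerivAt (deriv f) deGennesMomentum deGennesMomentum := by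
    rw [hderiv_eq]
    refine ((((hasDerivAt_pow 2 deGennesMomentum).sub_const Theta0).fun_sub
      ((hasDerivAt_deGennesRiccati deGennesMomentum).fun_pow 2)).fun_add
        (((hasDerivAt_id deGennesMomentum).sub_const _).const_mul _)).congr_deriv ?_
    norm_num [hzero]
    ring
  have hmax : IsLocalMax f deGennesMomentum :=
    isLocalMax_of_deriv_deriv_neg (hderiv2.deriv.trans_lt hneg)
      (by simp [hderiv_eq, hzero, deGennesMomentum_sq]) (hderiv _).continuousAt
  filter_upwards [hmax] with τ hτ
  simp only [hf, hzero, sub_self] at hτ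
  linarith

lemma exists_softSign_sq_le_neg_deGennesRiccati_nhds (τ₀ : ℝ) : ∃ c > 0, ∀ᶠ τ in 𝓝 τ₀,
    c * softSign (τ - deGennesMomentum) ^ 2 ≤ -deGennesRiccati τ := by
  rcases (deGennesRiccati_nonpos τ₀).lt_or_eq with hlt | hzero
  · refine ⟨-deGennesRiccati τ₀ / 2, by linarith, ?_⟩
    filter_upwards [continuous_deGennesRiccati.continuousAt.eventually_lt_const
      (by linarith : deGennesRiccati τ₀ < deGennesRiccati τ₀ / 2)] with τ hτ
    nlinarith [softSign_sq_le_one (τ - deGennesMomentum)]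
  · obtain rfl := eq_deGennesMomentum_of_deGennesRiccati_eq_zero hzero
    have hneg : deGennesMomentum < 0 := by linarith [deGennesRiccati_lt_neg deGennesMomentum]
    refine ⟨-deGennesMomentum / 2, by linarith, ?_⟩
    filter_upwards [eventually_quadratic_le_neg_deGennesRiccati hzero] with τ hτ
    exact (mul_le_mul_of_nonneg_left (softSign_sq_le_sq _) (by linarith)).trans hτ

lemma exists_softSign_sq_le_neg_deGennesRiccati :
    ∃ c > 0, ∀ τ, c * softSign (τ - deGennesMomentum) ^ 2 ≤ -deGennesRiccati τ := by
  have hshrink {c c' τ : ℝ} (hc : c' ≤ c)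
      (h : c * softSign (τ - deGennesMomentum) ^ 2 ≤ -deGennesRiccati τ) :
      c' * softSign (τ - deGennesMomentum) ^ 2 ≤ -deGennesRiccati τ :=
    (mul_le_mul_of_nonneg_right hc (sq_nonneg _)).trans h
  obtain ⟨c, hc, hle⟩ : ∃ c > 0, ∀ τ ∈ Icc (-6 : ℝ) 6,
      c * softSign (τ - deGennesMomentum) ^ 2 ≤ -deGennesRiccati τ := by
    refine isCompact_Icc.induction_on (p := fun s => ∃ c > 0, ∀ τ ∈ s,
      c * softSign (τ - deGennesMomentum) ^ 2 ≤ -deGennesRiccati τ) ⟨1, one_pos, by simp⟩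
      (fun s t hst ⟨c, hc, ht⟩ => ⟨c, hc, fun τ hτ => ht τ (hst hτ)⟩) ?_ fun τ₀ _ => ?_
    · rintro s t ⟨c, hc, hs⟩ ⟨c', hc', ht⟩
      refine ⟨min c c', lt_min hc hc', fun τ hτ => ?_⟩
      exact hτ.elim (fun h => hshrink (min_le_left _ _) (hs τ h))
        fun h => hshrink (min_le_right _ _) (ht τ h)
    · obtain ⟨c, hc, hnhds⟩ := exists_softSign_sq_le_neg_deGennesRiccati_nhds τ₀
      exact ⟨_, mem_nhdsWithin_of_mem_nhds hnhds, c, hc, fun τ hτ => hτ⟩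
  refine ⟨min c 1, lt_min hc one_pos, fun τ => ?_⟩
  by_cases hτ : τ ∈ Icc (-6) 6
  · exact hshrink (min_le_left _ _) (hle τ hτ)
  · have hfar : 6 < |τ| := by
      rw [mem_Icc, ← abs_le] at hτ
      exact lt_of_not_ge hτ
    refine hshrink (min_le_right _ _) ?_
    linarith [half_abs_sub_two_le_neg_deGennesRiccati τ, softSign_sq_le_one (τ - deGennesMomentum)]

end DeGennesRiccati

section VectorField

variable {B m : ℝ} {v : E3 → ℂ} {f g : E3 → ℝ} {x : E3}

/-- The squared distance to the `x₃`-axis. -/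
def axialSq (x : E3) : ℝ := x 0 ^ 2 + x 1 ^ 2

/-- The direction of the meridians: tangent to the spheres around the origin and orthogonal to the
axial rotations. -/
def meridianField (x : E3) : E3 := !₂[-(x 2 * x 0), -(x 2 * x 1), axialSq x]

/-- The vector field `f · x + g · meridianField`. -/
def meridionalField (f g : E3 → ℝ) (x : E3) : E3 := f x • x + g x • meridianField x

/-- `v` is an eigenfunction of the angular momentum `-i ∂_φ` about the `x₃`-axis. -/
def HasAngularMomentum (m : ℝ) (v : E3 → ℂ) : Prop :=
  ∀ x : E3, x 0 * partialDeriv 1 v x - x 1 * partialDeriv 0 v x = Complex.I * m * v x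

lemma axialSq_nonneg (x : E3) : 0 ≤ axialSq x := add_nonneg (sq_nonneg _) (sq_nonneg _)

lemma norm_sq_eq_axialSq_add (x : E3) : ‖x‖ ^ 2 = axialSq x + x 2 ^ 2 := norm_sq_eq_coord x

lemma contDiff_axialSq {n : WithTop ℕ∞} : ContDiff ℝ n axialSq := by
  unfold axialSq
  fun_prop

lemma contDiff_meridianField (j : Fin 3) : ContDiff ℝ 1 fun x => meridianField x j := by
  fin_cases j
  · change ContDiff ℝ 1 fun x : E3 => -(x 2 * x 0)
    fun_prop
  · change ContDiff ℝ 1 fun x : E3 => -(x 2 * x 1)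
    fun_prop
  · exact contDiff_axialSq

lemma HasAngularMomentum.re (hang : HasAngularMomentum m v) (hv : DifferentiableAt ℝ v x) :
    x 0 * partialDeriv 1 (fun y => (v y).re) x - x 1 * partialDeriv 0 (fun y => (v y).re) x =
      -(m * (v x).im) := by
  simpa [partialDeriv_re hv] using congrArg Complex.re (hang x)

lemma HasAngularMomentum.im (hang : HasAngularMomentum m v) (hv : DifferentiableAt ℝ v x) :
    x 0 * partialDeriv 1 (fun y => (v y).im) x - x 1 * partialDeriv 0 (fun y => (v y).im) x =
      m * (v x).re := by
  simpa [partialDeriv_im hv] using congrArg Complex.im (hang x)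

/-- The divergence of `meridionalField f g`. -/
def fieldDivergence (f g : E3 → ℝ) (x : E3) : ℝ :=
  3 * f x + fderiv ℝ f x x + (fderiv ℝ g x (meridianField x) - 2 * x 2 * g x)

lemma sum_partialDeriv_mul_coord (hf : DifferentiableAt ℝ f x) :
    ∑ j : Fin 3, partialDeriv j (fun y => f y * y j) x = 3 * f x + fderiv ℝ f x x := by
  have hcoord (j : Fin 3) :
      partialDeriv j (fun y => f y * y j) x = partialDeriv j f x * x j + f x := by
    rw [partialDeriv_mul hf (by fun_prop), partialDeriv_coord, if_pos rfl, mul_one]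
  simp only [hcoord, Finset.sum_add_distrib, sum_partialDeriv_mul]
  simp
  ring

lemma sum_partialDeriv_mul_meridianField (hg : DifferentiableAt ℝ g x) :
    ∑ j : Fin 3, partialDeriv j (fun y => g y * meridianField y j) x =
      fderiv ℝ g x (meridianField x) - 2 * x 2 * g x := by
  have hdiff (j : Fin 3) := (contDiff_meridianField j).differentiable one_ne_zero x
  have hdiv : ∑ j : Fin 3, partialDeriv j (fun y => meridianField y j) x = -2 * x 2 := by
    have hcoord (i : Fin 3) : DifferentiableAt ℝ (fun y : E3 => y i) x := by fun_prop
    have hhor (j : Fin 3) (hj : j ≠ 2) : partialDeriv j (fun y : E3 => -(y 2 * y j)) x = -x 2 := by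
      rw [partialDeriv, fderiv_fun_neg, neg_apply]
      change -partialDeriv j _ x = _
      rw [partialDeriv_mul (hcoord 2) (hcoord j)]
      simp [hj.symm]
    have hver : partialDeriv 2 (fun y : E3 => y 0 * y 0 + y 1 * y 1) x = 0 := by
      rw [partialDeriv, fderiv_fun_add (by fun_prop) (by fun_prop), add_apply]
      change partialDeriv 2 _ x + partialDeriv 2 _ x = 0
      rw [partialDeriv_mul (hcoord 0) (hcoord 0), partialDeriv_mul (hcoord 1) (hcoord 1)]
      simp
    simp only [Fin.sum_univ_three, meridianField, axialSq, sq, Matrix.cons_val]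
    rw [hhor 0 (by decide), hhor 1 (by decide), hver]
    ring
  simp only [partialDeriv_mul hg (hdiff _), Finset.sum_add_distrib, sum_partialDeriv_mul,
    ← Finset.mul_sum, hdiv]
  ring

lemma partialDeriv_norm_sq (hv : DifferentiableAt ℝ v x) (j : Fin 3) :
    partialDeriv j (fun y => ‖v y‖ ^ 2) x =
      2 * ((v x).re * partialDeriv j (fun y => (v y).re) x +
        (v x).im * partialDeriv j (fun y => (v y).im) x) := by
  have hre : DifferentiableAt ℝ (fun y => (v y).re) x := Complex.reCLM.differentiableAt.comp x hv
  have him : DifferentiableAt ℝ (fun y => (v y).im) x := Complex.imCLM.differentiableAt.comp x hv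
  simp only [Complex.sq_norm, Complex.normSq_apply]
  rw [partialDeriv, fderiv_fun_add (hre.fun_mul hre) (him.fun_mul him), add_apply]
  change partialDeriv j _ x + partialDeriv j _ x = _
  rw [partialDeriv_mul hre hre, partialDeriv_mul him him]
  ring

lemma two_mul_mul_mul_sub_le_sq_div {q : ℝ} (hq : 0 < q) (a p w : ℝ) :
    2 * a * (p * w) - a ^ 2 * q * p ^ 2 ≤ w ^ 2 / q := by
  rw [le_div_iff₀ hq]
  linarith [sq_nonneg (w - a * q * p)]

lemma magEnergyDensity_eq_of_hasAngularMomentum (hang : HasAngularMomentum m v)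
    (hv : DifferentiableAt ℝ v x) (hx : 0 < axialSq x) :
    magEnergyDensity B v x = (m + B * axialSq x / 2) ^ 2 / axialSq x * ‖v x‖ ^ 2 +
      ((x 0 * partialDeriv 0 (fun y => (v y).re) x + x 1 * partialDeriv 1 (fun y => (v y).re) x) ^ 2
        + (x 0 * partialDeriv 0 (fun y => (v y).im) x +
          x 1 * partialDeriv 1 (fun y => (v y).im) x) ^ 2) / axialSq x +
      (partialDeriv 2 (fun y => (v y).re) x ^ 2 + partialDeriv 2 (fun y => (v y).im) x ^ 2) := by
  have hre := hang.re hv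
  have him := hang.im hv
  have hA0 : Avec B x 0 = -(B / 2) * x 1 := rfl
  have hA1 : Avec B x 1 = B / 2 * x 0 := rfl
  have hA2 : Avec B x 2 = 0 := rfl
  have hdens : magEnergyDensity B v x =
      ∑ j, ((partialDeriv j (fun y => (v y).im) x + Avec B x j * (v x).re) ^ 2 +
        (-partialDeriv j (fun y => (v y).re) x + Avec B x j * (v x).im) ^ 2) := by
    refine Finset.sum_congr rfl fun j _ => ?_
    rw [Complex.sq_norm, Complex.normSq_apply, magD_re hv, magD_im hv, sq, sq]
  rw [hdens, Fin.sum_univ_three, hA0, hA1, hA2, Complex.sq_norm, Complex.normSq_apply]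
  generalize partialDeriv 0 (fun y => (v y).re) x = p₀ at *
  generalize partialDeriv 1 (fun y => (v y).re) x = p₁ at *
  generalize partialDeriv 0 (fun y => (v y).im) x = s₀ at *
  generalize partialDeriv 1 (fun y => (v y).im) x = s₁ at *
  field_simp
  rw [axialSq]
  linear_combination
    4 * (x 0 * p₁ - x 1 * p₀ - (m + B * (x 0 ^ 2 + x 1 ^ 2)) * (v x).im) * hre +
      4 * (x 0 * s₁ - x 1 * s₀ + (m + B * (x 0 ^ 2 + x 1 ^ 2)) * (v x).re) * him

/-- Completing squares: for fixed angular momentum the energy density is at least the effective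
potential minus the square of an axisymmetric field, plus the derivative of `‖v‖ ^ 2` along it. -/
lemma fieldAction_le_magEnergyDensity (hang : HasAngularMomentum m v) (hv : DifferentiableAt ℝ v x)
    (hx : 0 < axialSq x) (a b : ℝ) :
    ((m + B * axialSq x / 2) ^ 2 / axialSq x - (a ^ 2 * axialSq x + b ^ 2)) * ‖v x‖ ^ 2 +
      fderiv ℝ (fun y => ‖v y‖ ^ 2) x !₂[a * x 0, a * x 1, b] ≤ magEnergyDensity B v x := by
  rw [magEnergyDensity_eq_of_hasAngularMomentum hang hv hx, ← sum_partialDeriv_mul,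
    Fin.sum_univ_three]
  simp only [partialDeriv_norm_sq hv]
  rw [Complex.sq_norm, Complex.normSq_apply]
  have hre := two_mul_mul_mul_sub_le_sq_div hx a (v x).re
    (x 0 * partialDeriv 0 (fun y => (v y).re) x + x 1 * partialDeriv 1 (fun y => (v y).re) x)
  have him := two_mul_mul_mul_sub_le_sq_div hx a (v x).im
    (x 0 * partialDeriv 0 (fun y => (v y).im) x + x 1 * partialDeriv 1 (fun y => (v y).im) x)
  have hre₂ := sq_nonneg (partialDeriv 2 (fun y => (v y).re) x - b * (v x).re)
  have him₂ := sq_nonneg (partialDeriv 2 (fun y => (v y).im) x - b * (v x).im)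
  simp only [Matrix.cons_val]
  rw [add_div]
  linarith

lemma sum_coord_mul_meridionalField (f g : E3 → ℝ) (x : E3) :
    ∑ j, x j * meridionalField f g x j = f x * ‖x‖ ^ 2 := by
  rw [norm_sq_eq_axialSq_add]
  simp [Fin.sum_univ_three, meridionalField, meridianField, axialSq]
  ring

lemma meridionalField_eq (f g : E3 → ℝ) (x : E3) :
    meridionalField f g x = !₂[(f x - x 2 * g x) * x 0, (f x - x 2 * g x) * x 1,
      x 2 * f x + axialSq x * g x] := by
  ext j
  fin_cases j <;> simp [meridionalField, meridianField] <;> ring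

lemma sum_partialDeriv_meridionalField (hf : DifferentiableAt ℝ f x) (hg : DifferentiableAt ℝ g x) :
    ∑ j, partialDeriv j (fun y => meridionalField f g y j) x = fieldDivergence f g x := by
  have hdiff (j : Fin 3) := (contDiff_meridianField j).differentiable one_ne_zero x
  have hadd (j : Fin 3) : partialDeriv j (fun y => meridionalField f g y j) x =
      partialDeriv j (fun y => f y * y j) x +
        partialDeriv j (fun y => g y * meridianField y j) x := by
    change partialDeriv j (fun y => f y * y j + g y * meridianField y j) x = _
    rw [partialDeriv, fderiv_fun_add (hf.fun_mul (by fun_prop)) (hg.fun_mul (hdiff j)), add_apply]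
  simp only [hadd, Finset.sum_add_distrib]
  rw [sum_partialDeriv_mul_coord hf, sum_partialDeriv_mul_meridianField hg, fieldDivergence]

lemma contDiff_mul_norm_sq_of_eventuallyEq_zero {h : E3 → ℝ} (hv : ContDiff ℝ 1 v)
    (hh : ∀ x, axialSq x ≠ 0 → ContDiffAt ℝ 1 h x)
    (hax : ∀ x, axialSq x = 0 → v =ᶠ[𝓝 x] fun _ => 0) :
    ContDiff ℝ 1 fun x => h x * ‖v x‖ ^ 2 := by
  refine contDiff_iff_contDiffAt.2 fun x => ?_
  by_cases hx : axialSq x = 0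
  · refine contDiffAt_const (c := (0 : ℝ)) |>.congr_of_eventuallyEq ?_
    filter_upwards [hax x hx] with y hy
    simp [hy]
  · exact (hh x hx).mul (hv.norm_sq ℝ).contDiffAt

lemma fieldAction_meridionalField_le (hang : HasAngularMomentum m v) (hv : DifferentiableAt ℝ v x)
    (hf : DifferentiableAt ℝ f x) (hg : DifferentiableAt ℝ g x) (hx : 0 < axialSq x) :
    ((m + B * axialSq x / 2) ^ 2 / axialSq x - ‖x‖ ^ 2 * (f x ^ 2 + axialSq x * g x ^ 2) -
        fieldDivergence f g x) * ‖v x‖ ^ 2 +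
      ∑ j, partialDeriv j (fun y => meridionalField f g y j * ‖v y‖ ^ 2) x ≤
        magEnergyDensity B v x := by
  have hcoord (j : Fin 3) : DifferentiableAt ℝ (fun y => meridionalField f g y j) x :=
    (hf.fun_mul (by fun_prop)).fun_add
      (hg.fun_mul ((contDiff_meridianField j).differentiable one_ne_zero x))
  have haction := fieldAction_le_magEnergyDensity (B := B) hang hv hx (f x - x 2 * g x)
    (x 2 * f x + axialSq x * g x)
  rw [← meridionalField_eq, ← sum_partialDeriv_mul] at haction
  simp only [partialDeriv_mul (hcoord _) (hv.norm_sq ℝ), Finset.sum_add_distrib, ← Finset.sum_mul]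
  rw [sum_partialDeriv_meridionalField hf hg, norm_sq_eq_axialSq_add x]
  simp only [mul_comm (meridionalField f g x _)]
  linarith

lemma mul_norm_sq_add_sum_partialDeriv_meridionalField_le (hang : HasAngularMomentum m v)
    (hv : DifferentiableAt ℝ v x) (hax : axialSq x = 0 → v =ᶠ[𝓝 x] fun _ => 0)
    (hf : axialSq x ≠ 0 → DifferentiableAt ℝ f x) (hg : axialSq x ≠ 0 → DifferentiableAt ℝ g x)
    {a : ℝ} (hle : v x ≠ 0 → a ≤ (m + B * axialSq x / 2) ^ 2 / axialSq x -
      ‖x‖ ^ 2 * (f x ^ 2 + axialSq x * g x ^ 2) - fieldDivergence f g x) :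
    a * ‖v x‖ ^ 2 + ∑ j, partialDeriv j (fun y => meridionalField f g y j * ‖v y‖ ^ 2) x ≤
      magEnergyDensity B v x := by
  by_cases h0 : axialSq x = 0
  · have hflux (j : Fin 3) :
        partialDeriv j (fun y => meridionalField f g y j * ‖v y‖ ^ 2) x = 0 := by
      have hzero : (fun y => meridionalField f g y j * ‖v y‖ ^ 2) =ᶠ[𝓝 x] fun _ => 0 := by
        filter_upwards [hax h0] with y hy
        simp [hy]
      simp [partialDeriv, hzero.fderiv_eq]
    simpa [hflux, (hax h0).eq_of_nhds] using magEnergyDensity_nonneg B v x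
  · refine le_trans ?_ (fieldAction_meridionalField_le hang hv (hf h0) (hg h0)
      ((axialSq_nonneg x).lt_of_ne' h0))
    gcongr ?_ + _
    by_cases hvx : v x = 0
    · simp [hvx]
    · exact mul_le_mul_of_nonneg_right (hle hvx) (sq_nonneg _)

/-- A Barta-type criterion: the divergence theorem for `X ‖v‖ ^ 2`, with `X = meridionalField f g`,
turns a pointwise bound by the effective potential minus `|X|² + div X` into an energy bound. -/
theorem EnergyDominates.of_meridionalField (hv : ContDiff ℝ 1 v) (hang : HasAngularMomentum m v)
    (hax : ∀ x, axialSq x = 0 → v =ᶠ[𝓝 x] fun _ => 0)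
    (hf : ∀ x, axialSq x ≠ 0 → ContDiffAt ℝ 1 f x) (hg : ∀ x, axialSq x ≠ 0 → ContDiffAt ℝ 1 g x)
    (hout : ∀ x, ‖x‖ = 1 → axialSq x ≠ 0 → 0 ≤ f x) {w : E3 → ℝ} (hw : Continuous w)
    (hle : ∀ x ∈ ball3, v x ≠ 0 → w x ≤ (m + B * axialSq x / 2) ^ 2 / axialSq x -
      ‖x‖ ^ 2 * (f x ^ 2 + axialSq x * g x ^ 2) - fieldDivergence f g x) :
    EnergyDominates B w v := by
  have hF (j : Fin 3) : ContDiff ℝ 1 fun x => meridionalField f g x j * ‖v x‖ ^ 2 :=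
    contDiff_mul_norm_sq_of_eventuallyEq_zero hv (fun x hx =>
      ((hf x hx).mul (by fun_prop)).add ((hg x hx).mul (contDiff_meridianField j).contDiffAt)) hax
  have hflux : 0 ≤ ∫ x in ball3,
      ∑ j, partialDeriv j (fun y => meridionalField f g y j * ‖v y‖ ^ 2) x := by
    refine integral_divergence_nonneg hF fun x hx => ?_
    simp only [← mul_assoc, ← Finset.sum_mul]
    rw [sum_coord_mul_meridionalField, hx, one_pow, mul_one]
    by_cases h0 : axialSq x = 0
    · simp [(hax x h0).eq_of_nhds]
    · exact mul_nonneg (hout x hx h0) (sq_nonneg _)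
  have hdiv := integrableOn_ball3_of_continuous
    (continuous_finsetSum Finset.univ fun j _ => continuous_partialDeriv (hF j) j)
  have hpot := integrableOn_ball3_of_continuous (hw.mul (hv.continuous.norm.pow 2))
  have hsum := setIntegral_mono_on (hpot.add hdiv)
    (integrableOn_ball3_of_continuous (continuous_magEnergyDensity B hv)) measurableSet_ball3
    fun x hx => mul_norm_sq_add_sum_partialDeriv_meridionalField_le hang
      (hv.differentiable one_ne_zero x) (hax x)
      (fun h0 => (hf x h0).differentiableAt one_ne_zero)
      (fun h0 => (hg x h0).differentiableAt one_ne_zero) (hle x hx)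
  rw [integral_add' hpot hdiv] at hsum
  exact (le_add_of_nonneg_right hflux).trans hsum

end VectorField

section BarrierInequalities

variable {b c q s z ξ τ η γ : ℝ}

lemma abs_deGennesRiccati_le (τ : ℝ) : -deGennesRiccati τ ≤ |τ| + 1 := by
  have hsq := deGennesRiccati_sq_le τ
  by_contra! hlt
  nlinarith [sq_abs τ, abs_nonneg τ, Theta0_nonneg]

lemma two_div_thousand_le_deriv_softSign_sub_deGennesRiccati (τ : ℝ) :
    0.002 ≤ deriv softSign τ / 2 - deGennesRiccati τ := by
  have hgrowth := half_abs_sub_two_le_neg_deGennesRiccati τ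
  have hR := deGennesRiccati_nonpos τ
  rcases le_or_gt |τ| 6 with hτ | hτ
  · have hderiv : 1 / (6.1 : ℝ) ^ 3 ≤ deriv softSign τ :=
      one_div_pow_le_deriv_softSign (by norm_num) (by rw [← sq_abs]; nlinarith [abs_nonneg τ])
    norm_num at hderiv
    linarith
  · linarith [deriv_softSign_pos τ]

lemma one_sub_sq_pow_three_add_le_one (z : ℝ) :
    (1 - z ^ 2) ^ 3 + 1.1 * (0.8 * (z * (2 - z ^ 2))) ^ 2 ≤ 1 := by
  have hquad : 0 ≤ 3 - 3 * z ^ 2 + (z ^ 2) ^ 2 - 0.704 * (2 - z ^ 2) ^ 2 := by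
    linarith [sq_nonneg (z ^ 2 - 23 / 74)]
  linarith [mul_nonneg (sq_nonneg z) hquad]

lemma centrifugal_sub_meridianCoeff_sq_ge (hq : 0 < q) (hqz : q + z ^ 2 ≤ 1) (hs : |s| ≤ 1)
    (κ h τ : ℝ) :
    (1 - z ^ 2) ^ 2 * τ ^ 2 - 11 * (κ * h) ^ 2 ≤
      τ ^ 2 / q - (q + z ^ 2) * q * (κ * s * h + 0.8 * (z * (2 - z ^ 2)) * τ / q) ^ 2 := by
  have hpoly := one_sub_sq_pow_three_add_le_one z
  set μ := 0.8 * (z * (2 - z ^ 2))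
  have hyoung : (κ * s * h + μ * τ / q) ^ 2 ≤ 1.1 * (μ * τ / q) ^ 2 + 11 * (κ * h) ^ 2 := by
    have hs2 : s ^ 2 * (κ * h) ^ 2 ≤ 1 * (κ * h) ^ 2 := by
      gcongr
      rwa [sq_le_one_iff_abs_le_one]
    linarith [sq_nonneg (μ * τ / q - 10 * (κ * s * h))]
  have hprod : (q + z ^ 2) * q * (κ * s * h + μ * τ / q) ^ 2 ≤
      1 * q * (1.1 * (μ * τ / q) ^ 2) + 1 * 1 * (11 * (κ * h) ^ 2) := by
    calc (q + z ^ 2) * q * (κ * s * h + μ * τ / q) ^ 2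
        ≤ 1 * q * (1.1 * (μ * τ / q) ^ 2 + 11 * (κ * h) ^ 2) := by gcongr
      _ ≤ _ := by
          rw [mul_add]
          gcongr
          linarith [sq_nonneg z]
  have hcube : (1 - z ^ 2) ^ 2 * q ≤ (1 - z ^ 2) ^ 2 * (1 - z ^ 2) := by
    gcongr
    linarith
  have hrest : 0 ≤ τ ^ 2 / q * (1 - (1 - z ^ 2) ^ 2 * q - 1.1 * μ ^ 2) :=
    mul_nonneg (by positivity) (by linarith)
  have hexpand : τ ^ 2 / q * (1 - (1 - z ^ 2) ^ 2 * q - 1.1 * μ ^ 2) =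
      τ ^ 2 / q - (1 - z ^ 2) ^ 2 * τ ^ 2 - q * (1.1 * (μ * τ / q) ^ 2) := by
    field_simp
  linarith

lemma radialCoeff_perturbation_ge {Y : ℝ} (hY : 0.0975 ≤ Y) (hq : Y / 2 ≤ q) (hγ : 0 ≤ γ)
    (hγ' : γ ≤ 1 / 10000) (τ : ℝ) :
    0.0095 * γ * (0.001 - deGennesRiccati τ) ≤ q * Y * (γ * deriv softSign τ) -
      2 * Y ^ 2 * deGennesRiccati τ * (γ * (2 - softSign τ)) -
      Y ^ 2 * (γ * (2 - softSign τ)) ^ 2 := by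
  have hR := deGennesRiccati_nonpos τ
  have hgap := two_div_thousand_le_deriv_softSign_sub_deGennesRiccati τ
  have hkp := (deriv_softSign_pos τ).le
  obtain ⟨hk, hk'⟩ := abs_le.1 (abs_softSign_le_one τ)
  generalize deGennesRiccati τ = R at *
  generalize deriv softSign τ = kp at *
  obtain ⟨k, hkdef⟩ : ∃ k, k = 2 - softSign τ := ⟨_, rfl⟩
  rw [← hkdef]
  have hfirst : Y / 2 * (Y * (γ * kp)) ≤ q * (Y * (γ * kp)) := by gcongr
  have hsq : γ * k ^ 2 ≤ 1 / 10000 * 3 ^ 2 := by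
    gcongr <;> linarith
  have hcross : 0 ≤ -R * (k - 1) := mul_nonneg (by linarith) (by linarith)
  have hmain : Y ^ 2 * γ * (0.001 - R) ≤ Y ^ 2 * γ * (kp / 2 - 2 * R * k - γ * k ^ 2) :=
    mul_le_mul_of_nonneg_left (by linarith) (by positivity)
  have hY2 : 0.0095 * (γ * (0.001 - R)) ≤ Y ^ 2 * (γ * (0.001 - R)) := by
    have : 0 ≤ 0.001 - R := by linarith
    gcongr
    nlinarith
  linarith

lemma radialCoeff_potential_ge {Y ρ : ℝ} (hY : 0.0975 ≤ Y) (hY' : Y ≤ 1) (hq : Y / 2 ≤ q)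
    (hq' : q ≤ Y) (hρ : ρ ≤ 1) (hγ : 0 ≤ γ) (hγ' : γ ≤ 1 / 10000) (τ : ℝ) :
    Y ^ 2 * (Theta0 - τ ^ 2) - (Y - q) + 0.0095 * γ * (0.001 - deGennesRiccati τ) ≤
      q * Y * (Theta0 + deGennesRiccati τ ^ 2 - τ ^ 2 + γ * deriv softSign τ) -
        ρ * Y ^ 2 * (deGennesRiccati τ + γ * (2 - softSign τ)) ^ 2 := by
  have hpert := radialCoeff_perturbation_ge hY hq hγ hγ' τ
  have hsq := deGennesRiccati_sq_le τ
  have hdefect : 0 ≤ (Y - q) * Y * (1 - (Theta0 + deGennesRiccati τ ^ 2 - τ ^ 2)) :=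
    mul_nonneg (mul_nonneg (by linarith) (by linarith)) (by linarith)
  have hlayer : (Y - q) * Y ≤ (Y - q) * 1 := by gcongr
  have hnorm : 0 ≤ (1 - ρ) * (Y ^ 2 * (deGennesRiccati τ + γ * (2 - softSign τ)) ^ 2) :=
    mul_nonneg (by linarith) (by positivity)
  linarith

lemma mul_abs_le_mul_softSign_sq_mul_neg_deGennesRiccati (hb : 0 < b) (hc : 0 ≤ c)
    (hbc : 10 / b ^ 2 ≤ 0.0045 * c) (hq : q ≤ 1 - z ^ 2)
    (hτ : τ = ξ + b ^ 2 * (1 - z ^ 2 - q) / 2) (ξ₀ : ℝ) :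
    5 / b ^ 2 * |τ| ≤ 0.0095 * (c * softSign (ξ - ξ₀) ^ 2) * -deGennesRiccati τ +
      (25 + 5 * |ξ₀|) / b ^ 2 + 2.5 * (1 - z ^ 2 - q) := by
  have hR := deGennesRiccati_nonpos τ
  have hgrowth := half_abs_sub_two_le_neg_deGennesRiccati τ
  have hξ₀ := abs_nonneg ξ₀
  have hb2 : 0 < b ^ 2 := by positivity
  rcases le_or_gt |ξ - ξ₀| 1 with hη | hη
  · have hτabs : |τ| ≤ 1 + |ξ₀| + b ^ 2 * (1 - z ^ 2 - q) / 2 := by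
      rw [hτ, show ξ + b ^ 2 * (1 - z ^ 2 - q) / 2 =
        (ξ - ξ₀) + ξ₀ + b ^ 2 * (1 - z ^ 2 - q) / 2 by ring]
      refine (abs_add_three _ _ _).trans ?_
      rw [abs_of_nonneg (div_nonneg (mul_nonneg hb2.le (by linarith)) zero_le_two)]
      linarith
    have hgain : 0 ≤ 0.0095 * (c * softSign (ξ - ξ₀) ^ 2) * -deGennesRiccati τ :=
      mul_nonneg (by positivity) (by linarith)
    calc 5 / b ^ 2 * |τ| ≤ 5 / b ^ 2 * (1 + |ξ₀| + b ^ 2 * (1 - z ^ 2 - q) / 2) := by gcongr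
      _ = (5 + 5 * |ξ₀|) / b ^ 2 + 2.5 * (1 - z ^ 2 - q) := by
          field_simp
          ring
      _ ≤ (25 + 5 * |ξ₀|) / b ^ 2 + 2.5 * (1 - z ^ 2 - q) := by
          gcongr
          norm_num
      _ ≤ _ := by linarith
  · have hh := half_le_softSign_sq hη.le
    have hcoeff : 10 / b ^ 2 ≤ 0.0095 * (c * softSign (ξ - ξ₀) ^ 2) := by
      linarith [mul_le_mul_of_nonneg_left hh hc]
    have hgain : 10 / b ^ 2 * -deGennesRiccati τ ≤
        0.0095 * (c * softSign (ξ - ξ₀) ^ 2) * -deGennesRiccati τ :=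
      mul_le_mul_of_nonneg_right hcoeff (by linarith)
    have hscaled := mul_le_mul_of_nonneg_left hgrowth (by positivity : 0 ≤ 10 / b ^ 2)
    have hconst : 20 / b ^ 2 ≤ (25 + 5 * |ξ₀|) / b ^ 2 := by
      gcongr
      linarith
    have hsplit : 10 / b ^ 2 * (|τ| / 2 - 2) = 5 / b ^ 2 * |τ| - 20 / b ^ 2 := by ring
    linarith

lemma lowerOrder_ge {κ h sd : ℝ} (hb : 1 ≤ b) (hz : z ^ 2 ≤ 1) (hq : 0 ≤ q) (hq' : q ≤ 1)
    (hγ : |γ| ≤ 1) (hκ : 0 ≤ κ) (hκ' : κ ≤ 1) (hs : |s| ≤ 1) (hsd : |sd| ≤ 1) (hh : |h| ≤ 1)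
    (τ : ℝ) :
    -(5 / b ^ 2 * |τ| + 9 / b) ≤ 1 / b ^ 2 * ((3 - 5 * z ^ 2) * (deGennesRiccati τ + γ) +
      κ * q * (b * sd) * h - 2 * κ * z * s * h + 0.8 * (2 - 3 * z ^ 2) * τ) := by
  have hz' : |z| ≤ 1 := by rwa [← sq_le_one_iff_abs_le_one]
  have hz0 := sq_nonneg z
  have hradial : |(3 - 5 * z ^ 2) * (deGennesRiccati τ + γ)| ≤ 3 * (|τ| + 2) := by
    rw [abs_mul]
    gcongr
    · exact abs_le.2 ⟨by linarith, by linarith⟩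
    · refine (abs_add_le _ _).trans ?_
      rw [abs_of_nonpos (deGennesRiccati_nonpos τ)]
      linarith [abs_deGennesRiccati_le τ]
  have hslope : |κ * q * (b * sd) * h| ≤ b := by
    simp only [abs_mul, abs_of_nonneg hκ, abs_of_nonneg hq, abs_of_nonneg (zero_le_one.trans hb)]
    calc κ * q * (b * |sd|) * |h| ≤ 1 * 1 * (b * 1) * 1 := by gcongr
      _ = b := by ring
  have hcross : |2 * κ * z * s * h| ≤ 2 := by
    simp only [abs_mul, abs_of_nonneg hκ, abs_two]
    calc 2 * κ * |z| * |s| * |h| ≤ 2 * 1 * 1 * 1 * 1 := by gcongr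
      _ = 2 := by norm_num
  have hlinear : |0.8 * (2 - 3 * z ^ 2) * τ| ≤ 2 * |τ| := by
    rw [abs_mul]
    gcongr
    exact abs_le.2 ⟨by linarith, by linarith⟩
  have hsum : -(3 * (|τ| + 2) + b + 2 + 2 * |τ|) ≤ (3 - 5 * z ^ 2) * (deGennesRiccati τ + γ) +
      κ * q * (b * sd) * h - 2 * κ * z * s * h + 0.8 * (2 - 3 * z ^ 2) * τ := by
    linarith [neg_le_of_abs_le hradial, neg_le_of_abs_le hslope, le_of_abs_le hcross,
      neg_le_of_abs_le hlinear]
  refine le_trans ?_ (mul_le_mul_of_nonneg_left hsum (by positivity))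
  have hinv : 8 / b ^ 2 ≤ 8 / b := by
    gcongr
    exact le_self_pow₀ hb two_ne_zero
  have hexpand : 1 / b ^ 2 * -(3 * (|τ| + 2) + b + 2 + 2 * |τ|) =
      -(5 / b ^ 2 * |τ| + 8 / b ^ 2 + 1 / b) := by
    field_simp
    ring
  have hnine : 9 / b = 8 / b + 1 / b := by ring
  linarith

lemma neg_div_le_layer_terms (hb : 100 ≤ b) (hc : 0 ≤ c) (hc' : c ≤ 1 / 10000)
    (hbc : 10 / b ^ 2 ≤ 0.0045 * c) (hq : 0 ≤ q) (hqz : q ≤ 1 - z ^ 2)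
    (hqb : 1 - z ^ 2 - q ≤ 4 / b) (hτ : τ = ξ + b ^ 2 * (1 - z ^ 2 - q) / 2) (ξ₀ : ℝ) {h : ℝ}
    (hh : h = softSign (ξ - ξ₀)) :
    -((48 + 5 * |ξ₀|) / b) ≤ 0.0095 * (c * h ^ 2) * -deGennesRiccati τ - (1 - z ^ 2 - q) +
      1 / b ^ 2 * ((3 - 5 * z ^ 2) * (deGennesRiccati τ + c * h ^ 2 * (2 - softSign τ)) +
        c / 1000 * q * (b * deriv softSign (b * z)) * h -
        2 * (c / 1000) * z * softSign (b * z) * h + 0.8 * (2 - 3 * z ^ 2) * τ) := by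
  have hz : z ^ 2 ≤ 1 := by linarith
  have hγ : |c * h ^ 2 * (2 - softSign τ)| ≤ 1 := by
    obtain ⟨hk, hk'⟩ := abs_le.1 (abs_softSign_le_one τ)
    rw [abs_of_nonneg (mul_nonneg (by positivity) (by linarith)), hh]
    calc c * softSign (ξ - ξ₀) ^ 2 * (2 - softSign τ) ≤ 1 / 10000 * 1 * 3 := by
          gcongr
          · linarith
          · exact softSign_sq_le_one _
          · linarith
      _ ≤ 1 := by norm_num
  have hlower := lowerOrder_ge (by linarith : 1 ≤ b) hz hq (by linarith [sq_nonneg z]) hγ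
    (by positivity : 0 ≤ c / 1000) (by linarith) (abs_softSign_le_one (b * z))
    (by rw [abs_of_pos (deriv_softSign_pos _)]; exact deriv_softSign_le_one (b * z))
    (hh ▸ abs_softSign_le_one _ : |h| ≤ 1) τ
  have hgain := mul_abs_le_mul_softSign_sq_mul_neg_deGennesRiccati (by linarith) hc hbc hqz hτ ξ₀
  rw [← hh] at hgain
  have hinv : (25 + 5 * |ξ₀|) / b ^ 2 ≤ (25 + 5 * |ξ₀|) / b := by
    gcongr
    exact le_self_pow₀ (by linarith) two_ne_zero
  have hsplit : (48 + 5 * |ξ₀|) / b = (25 + 5 * |ξ₀|) / b + 3.5 * (4 / b) + 9 / b := by ring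
  linarith

lemma Theta0_add_le_tangential_terms {k : ℝ} (hb : 0 < b) (hc : 0 ≤ c) (hc' : c ≤ 1 / 10000)
    (hz : z ^ 2 ≤ 1) (hq : 0.04 ≤ q) (hq' : q ≤ 1) (hk : 0 ≤ k) (hk' : k ≤ 3) (η : ℝ) :
    Theta0 + 3 / 1000000 * c * |z| - 1 / b ≤
      (1 - z ^ 2) ^ 2 * Theta0 + 0.8 * (z ^ 2 * (2 - z ^ 2)) +
      0.0095 * (c * softSign η ^ 2) * 0.001 - 11 * (c / 1000 * softSign η) ^ 2 +
      2 * c * (1 - z ^ 2) * z ^ 2 * k * softSign η * deriv softSign η +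
      c / 1000 * q * softSign (b * z) * z * deriv softSign η := by
  have hz' : |z| ≤ 1 := by rwa [← sq_le_one_iff_abs_le_one]
  have hz0 := sq_nonneg z
  have hgain := abs_div_three_le_softSign_sq_add η hz'
  have hhp := deriv_softSign_pos η
  have hhp' := deriv_softSign_le_one η
  have hh := abs_softSign_le_one η
  have hsz := abs_sub_one_div_le_softSign_mul hb z
  generalize deriv softSign η = hp at *
  generalize softSign η = h at *
  have hcurvature : Theta0 + 0.05 * z ^ 2 ≤
      (1 - z ^ 2) ^ 2 * Theta0 + 0.8 * (z ^ 2 * (2 - z ^ 2)) := by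
    have hw : z ^ 2 * 1 ≤ z ^ 2 * (2 - z ^ 2) := by
      gcongr
      linarith
    linarith [mul_nonneg (sub_nonneg.2 Theta0_le) (hz0.trans ((mul_one _).ge.trans hw))]
  have hcross : -(0.05 * z ^ 2) ≤ 2 * c * (1 - z ^ 2) * z ^ 2 * k * h * hp := by
    refine neg_le_of_abs_le ?_
    rw [abs_mul, abs_mul, abs_of_nonneg (by positivity : 0 ≤ 2 * c * (1 - z ^ 2) * z ^ 2 * k),
      abs_of_pos hhp]
    calc 2 * c * (1 - z ^ 2) * z ^ 2 * k * |h| * hp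
        ≤ 2 * (1 / 10000) * 1 * z ^ 2 * 3 * 1 * 1 := by
          gcongr
          linarith
      _ ≤ 0.05 * z ^ 2 := by linarith
  have hdrift : c / 1000 * (0.04 * |z| * hp) - 1 / b ≤
      c / 1000 * q * softSign (b * z) * z * hp := by
    have hqz : 0.04 * (hp * |z|) ≤ q * (hp * |z|) := by gcongr
    have hqhp : c / 1000 * (q * hp) * (1 / b) ≤ 1 * (1 * 1) * (1 / b) := by
      gcongr
      linarith
    linarith [mul_le_mul_of_nonneg_left hsz (by positivity : 0 ≤ c / 1000 * (q * hp)),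
      mul_le_mul_of_nonneg_left hqz (by positivity : 0 ≤ c / 1000)]
  have hsquare : 3 / 1000000 * c * |z| ≤
      0.0095 * (c * h ^ 2) * 0.001 - 11 * (c / 1000 * h) ^ 2 + c / 1000 * (0.04 * |z| * hp) := by
    have hc2 : c * (c * h ^ 2) ≤ 1 / 10000 * (c * h ^ 2) := by gcongr
    have hch : 0 ≤ c * h ^ 2 := by positivity
    have hchp : 0 ≤ c * (|z| * hp) := by positivity
    linarith [mul_le_mul_of_nonneg_left hgain hc]
  linarith

/-- `b ^ 4` times this is the effective potential of the angular momentum `m` minus `|X|² + div X`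
for the barrier field `X`, in the variables `q = axialSq x` and `z = x₃`. -/
def barrierPotential (b c q z τ η : ℝ) : ℝ :=
  τ ^ 2 / q -
    (q + z ^ 2) * q *
      (c / 1000 * softSign (b * z) * softSign η + 0.8 * (z * (2 - z ^ 2)) * τ / q) ^ 2
  + q * (1 - z ^ 2) *
      (Theta0 + deGennesRiccati τ ^ 2 - τ ^ 2 + c * softSign η ^ 2 * deriv softSign τ) -
    (q + z ^ 2) * (1 - z ^ 2) ^ 2 *
      (deGennesRiccati τ + c * softSign η ^ 2 * (2 - softSign τ)) ^ 2
  + 0.8 * (z ^ 2 * (2 - z ^ 2)) +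
    2 * c * (1 - z ^ 2) * z ^ 2 * (2 - softSign τ) * softSign η * deriv softSign η +
    c / 1000 * q * softSign (b * z) * z * deriv softSign η
  + 1 / b ^ 2 * ((3 - 5 * z ^ 2) * (deGennesRiccati τ + c * softSign η ^ 2 * (2 - softSign τ)) +
      c / 1000 * q * (b * deriv softSign (b * z)) * softSign η -
      2 * (c / 1000) * z * softSign (b * z) * softSign η + 0.8 * (2 - 3 * z ^ 2) * τ)

theorem le_barrierPotential (hb : 100 ≤ b) (hc : 0 ≤ c) (hc' : c ≤ 1 / 10000)
    (hbc : 10 / b ^ 2 ≤ 0.0045 * c) (hz : |z| ≤ 0.95) (hqz : q ≤ 1 - z ^ 2)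
    (hqb : 1 - z ^ 2 - q ≤ 4 / b) (hτ : τ = ξ + b ^ 2 * (1 - z ^ 2 - q) / 2) (ξ₀ : ℝ) :
    Theta0 + 3 / 1000000 * c * |z| - (50 + 5 * |ξ₀|) / b ≤
      barrierPotential b c q z τ (ξ - ξ₀) := by
  have hz2 : z ^ 2 ≤ 0.9025 := by
    rw [← sq_abs]
    exact (pow_le_pow_left₀ (abs_nonneg z) hz 2).trans (by norm_num)
  have hz0 := sq_nonneg z
  have hb' : 4 / b ≤ 0.04 := by
    rw [div_le_iff₀ (by linarith)]
    linarith
  obtain ⟨hk, hk'⟩ := abs_le.1 (abs_softSign_le_one τ)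
  have hcentrifugal := centrifugal_sub_meridianCoeff_sq_ge (by linarith : 0 < q)
    (by linarith : q + z ^ 2 ≤ 1) (abs_softSign_le_one (b * z)) (c / 1000) (softSign (ξ - ξ₀)) τ
  have hradial := radialCoeff_potential_ge (by linarith : 0.0975 ≤ 1 - z ^ 2) (by linarith)
    (by linarith) hqz (by linarith : q + z ^ 2 ≤ 1) (by positivity : 0 ≤ c * softSign (ξ - ξ₀) ^ 2)
    ((mul_le_of_le_one_right hc (softSign_sq_le_one _)).trans hc') τ
  have htangential := Theta0_add_le_tangential_terms (k := 2 - softSign τ) (by linarith : 0 < b) hc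
    hc' (by linarith : z ^ 2 ≤ 1) (by linarith : 0.04 ≤ q) (by linarith) (by linarith) (by linarith)
    (ξ - ξ₀)
  have hlayer := neg_div_le_layer_terms hb hc hc' hbc (by linarith) hqz hqb hτ ξ₀ rfl
  have hsplit : (50 + 5 * |ξ₀|) / b = (48 + 5 * |ξ₀|) / b + 1 / b + 1 / b := by ring
  have hinv : 0 < 1 / b := by
    have : 0 < b := by linarith
    positivity
  rw [barrierPotential]
  linarith

end BarrierInequalities

section Barrier

variable {b c m : ℝ} {v : E3 → ℂ} {x : E3}

/-- `v` is supported away from the poles, at distance `O(1 / b)` from the boundary. -/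
def SupportedInShell (b : ℝ) (v : E3 → ℂ) : Prop :=
  ∀ x, v x ≠ 0 → |x 2| ≤ 0.95 ∧ boundaryHeight x ≤ 2 / b

/-- The rescaled angular momentum `(m + b ^ 4 q / 2) / b ^ 2`, with the sign for which the layer
problem at distance `t / b ^ 2` from the boundary has the potential `(t + ξ) ^ 2`. -/
def layerMomentum (b m q : ℝ) : ℝ := b ^ 2 * (-q / 2 - m / b ^ 4)

/-- The detuning of the layer problem at height `z` from the minimum of the de Gennes energy. -/
def momentumDetuning (b m z : ℝ) : ℝ := layerMomentum b m (1 - z ^ 2) - deGennesMomentum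

/-- The radial coefficient of the barrier field: the logarithmic derivative of the de Gennes ground
state, perturbed so as to gain from the detuning. -/
def radialCoeff (b m c q z : ℝ) : ℝ :=
  -(b ^ 2 * ((1 - z ^ 2) * (deGennesRiccati (layerMomentum b m q) +
    c * softSign (momentumDetuning b m z) ^ 2 * (2 - softSign (layerMomentum b m q)))))

/-- The meridional coefficient of the barrier field. The first term gains from the detuning off the
equator, the second from the angle between the magnetic field and the sphere. -/
def meridianCoeff (b m c q z : ℝ) : ℝ :=
  -(b ^ 2 * (c / 1000 * softSign (b * z) * softSign (momentumDetuning b m z) +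
    0.8 * (z * (2 - z ^ 2)) * layerMomentum b m q / q))

lemma contDiff_deGennesRiccati : ContDiff ℝ 1 deGennesRiccati := by
  have hderiv : deriv deGennesRiccati = fun τ => τ ^ 2 - Theta0 - deGennesRiccati τ ^ 2 :=
    funext fun τ => (hasDerivAt_deGennesRiccati τ).deriv
  have hcont := continuous_deGennesRiccati
  refine contDiff_one_iff_deriv.2 ⟨fun τ => (hasDerivAt_deGennesRiccati τ).differentiableAt, ?_⟩
  rw [hderiv]
  fun_prop

lemma contDiff_radialCoeff (b m c : ℝ) :
    ContDiff ℝ 1 fun y : E3 => radialCoeff b m c (axialSq y) (y 2) := by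
  have hR := contDiff_deGennesRiccati
  have hs := contDiff_softSign
  have hq := contDiff_axialSq (n := 1)
  unfold radialCoeff momentumDetuning layerMomentum
  fun_prop

lemma contDiffAt_meridianCoeff (b m c : ℝ) (hx : axialSq x ≠ 0) :
    ContDiffAt ℝ 1 (fun y : E3 => meridianCoeff b m c (axialSq y) (y 2)) x := by
  have hs := contDiff_softSign
  have hq := contDiff_axialSq (n := 1)
  unfold meridianCoeff momentumDetuning layerMomentum
  fun_prop (disch := assumption)

section Curves

variable {Q Z : ℝ → ℝ} {Q' Z' t : ℝ}

lemma hasDerivAt_layerMomentum (hQ : HasDerivAt Q Q' t) (b m : ℝ) :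
    HasDerivAt (fun s => layerMomentum b m (Q s)) (-(b ^ 2 * Q' / 2)) t :=
  (((hQ.fun_neg.div_const 2).sub_const (m / b ^ 4)).const_mul (b ^ 2)).congr_deriv (by ring)

lemma hasDerivAt_softSign_momentumDetuning (hZ : HasDerivAt Z Z' t) (b m : ℝ) :
    HasDerivAt (fun s => softSign (momentumDetuning b m (Z s)))
      (deriv softSign (momentumDetuning b m (Z t)) * (b ^ 2 * (Z t * Z'))) t := by
  refine (hasDerivAt_softSign _).comp t
    (((hasDerivAt_layerMomentum ((hZ.fun_pow 2).const_sub 1) b m).sub_const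
      deGennesMomentum).congr_deriv ?_)
  norm_num
  ring

lemma hasDerivAt_radialCoeff (hQ : HasDerivAt Q Q' t) (hZ : HasDerivAt Z Z' t) (b m c : ℝ) :
    HasDerivAt (fun s => radialCoeff b m c (Q s) (Z s))
      (b ^ 2 * (2 * Z t * Z' * (deGennesRiccati (layerMomentum b m (Q t)) +
          c * softSign (momentumDetuning b m (Z t)) ^ 2 *
            (2 - softSign (layerMomentum b m (Q t)))) -
        (1 - Z t ^ 2) * (-(b ^ 2 * Q' / 2) * (layerMomentum b m (Q t) ^ 2 - Theta0 -
          deGennesRiccati (layerMomentum b m (Q t)) ^ 2 -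
          c * softSign (momentumDetuning b m (Z t)) ^ 2 *
            deriv softSign (layerMomentum b m (Q t))) +
        2 * c * softSign (momentumDetuning b m (Z t)) *
          (deriv softSign (momentumDetuning b m (Z t)) * (b ^ 2 * (Z t * Z'))) *
          (2 - softSign (layerMomentum b m (Q t)))))) t := by
  have hτ := hasDerivAt_layerMomentum hQ b m
  have hh := hasDerivAt_softSign_momentumDetuning hZ b m
  have hR := (hasDerivAt_deGennesRiccati _).comp t hτ
  have hk := ((hasDerivAt_softSign _).comp t hτ).const_sub 2
  have hM := hR.fun_add (((hh.fun_pow 2).const_mul c).fun_mul hk)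
  refine ((((hZ.fun_pow 2).const_sub 1).fun_mul hM).const_mul (b ^ 2)).fun_neg.congr_deriv ?_
  norm_num
  ring

lemma hasDerivAt_meridianCoeff (hQ : HasDerivAt Q Q' t) (hZ : HasDerivAt Z Z' t) (hQt : Q t ≠ 0)
    (b m c : ℝ) :
    HasDerivAt (fun s => meridianCoeff b m c (Q s) (Z s))
      (-(b ^ 2 * (c / 1000 * (b * deriv softSign (b * Z t) * Z' *
            softSign (momentumDetuning b m (Z t)) + softSign (b * Z t) *
            (deriv softSign (momentumDetuning b m (Z t)) * (b ^ 2 * (Z t * Z')))) +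
        0.8 * ((2 - 3 * Z t ^ 2) * Z' * layerMomentum b m (Q t) / Q t - Z t * (2 - Z t ^ 2) *
          (b ^ 2 * Q' / 2 / Q t + layerMomentum b m (Q t) * Q' / Q t ^ 2))))) t := by
  have hτ := hasDerivAt_layerMomentum hQ b m
  have hh := hasDerivAt_softSign_momentumDetuning hZ b m
  have hs := ((hasDerivAt_softSign _).comp t (hZ.const_mul b)).const_mul (c / 1000)
  have hpoly := (hZ.fun_mul ((hZ.fun_pow 2).const_sub 2)).const_mul 0.8
  refine (((hs.fun_mul hh).fun_add ((hpoly.fun_mul hτ).fun_div hQ hQt)).const_mul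
    (b ^ 2)).fun_neg.congr_deriv ?_
  norm_num
  left
  field_simp
  ring

end Curves

lemma fderiv_eq_of_hasDerivAt_line {f : E3 → ℝ} {d : ℝ} {w : E3} (hf : DifferentiableAt ℝ f x)
    (hd : HasDerivAt (fun s : ℝ => f (x + s • w)) d 0) : fderiv ℝ f x w = d :=
  (hf.hasFDerivAt.hasLineDerivAt w).unique hd

lemma hasDerivAt_coord_line (x w : E3) (j : Fin 3) :
    HasDerivAt (fun s : ℝ => (x + s • w) j) (w j) 0 := by
  simpa using ((hasDerivAt_id (0 : ℝ)).mul_const (w j)).const_add (x j)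

lemma hasDerivAt_axialSq_line (x w : E3) :
    HasDerivAt (fun s : ℝ => axialSq (x + s • w)) (2 * (x 0 * w 0 + x 1 * w 1)) 0 := by
  refine (((hasDerivAt_coord_line x w 0).fun_pow 2).fun_add
    ((hasDerivAt_coord_line x w 1).fun_pow 2)).congr_deriv ?_
  simp
  ring

lemma effectivePotential_sub_fieldDivergence_eq (hb : b ≠ 0) (hx : axialSq x ≠ 0) (m c : ℝ) :
    (m + b ^ 4 * axialSq x / 2) ^ 2 / axialSq x -
        ‖x‖ ^ 2 * (radialCoeff b m c (axialSq x) (x 2) ^ 2 +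
          axialSq x * meridianCoeff b m c (axialSq x) (x 2) ^ 2) -
        fieldDivergence (fun y => radialCoeff b m c (axialSq y) (y 2))
          (fun y => meridianCoeff b m c (axialSq y) (y 2)) x =
      b ^ 4 * barrierPotential b c (axialSq x) (x 2) (layerMomentum b m (axialSq x))
        (momentumDetuning b m (x 2)) := by
  have hrad := fderiv_eq_of_hasDerivAt_line
    ((contDiff_radialCoeff b m c).differentiable one_ne_zero x)
    (hasDerivAt_radialCoeff (hasDerivAt_axialSq_line x x) (hasDerivAt_coord_line x x 2) b m c)
  have hmer := fderiv_eq_of_hasDerivAt_line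
    ((contDiffAt_meridianCoeff b m c hx).differentiableAt one_ne_zero)
    (hasDerivAt_meridianCoeff (hasDerivAt_axialSq_line x (meridianField x))
      (hasDerivAt_coord_line x (meridianField x) 2) (by simpa using hx) b m c)
  have hself : x 0 * x 0 + x 1 * x 1 = axialSq x := by rw [axialSq]; ring
  have hzero : x 0 * meridianField x 0 + x 1 * meridianField x 1 = -(x 2 * axialSq x) := by
    simp [meridianField, axialSq]
    ring
  have htwo : meridianField x 2 = axialSq x := rfl
  have hmom : (m + b ^ 4 * axialSq x / 2) ^ 2 = b ^ 4 * layerMomentum b m (axialSq x) ^ 2 := by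
    rw [layerMomentum]
    field_simp
    ring
  rw [zero_smul, add_zero] at hrad hmer
  rw [fieldDivergence, hrad, hmer, hself, hzero, htwo, hmom, norm_sq_eq_axialSq_add, radialCoeff,
    meridianCoeff, barrierPotential]
  generalize layerMomentum b m (axialSq x) = τ
  generalize momentumDetuning b m (x 2) = η
  generalize axialSq x = q at *
  generalize deGennesRiccati τ = R
  generalize softSign τ = k
  generalize deriv softSign τ = k'
  generalize softSign η = h
  generalize deriv softSign η = h'
  generalize softSign (b * x 2) = s
  generalize deriv softSign (b * x 2) = s'
  generalize x 2 = z
  field_simp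
  ring

lemma radialCoeff_nonneg (hc : 0 ≤ c) (hcR : ∀ τ,
    3 * c * softSign (τ - deGennesMomentum) ^ 2 ≤ -deGennesRiccati τ) (hx : ‖x‖ = 1) :
    0 ≤ radialCoeff b m c (axialSq x) (x 2) := by
  have hq : 1 - x 2 ^ 2 = axialSq x := by
    have := norm_sq_eq_axialSq_add x
    rw [hx] at this
    linarith
  have hs : 2 - softSign (layerMomentum b m (axialSq x)) ≤ 3 := by
    linarith [abs_le.1 (abs_softSign_le_one (layerMomentum b m (axialSq x)))]
  have hle : c * softSign (layerMomentum b m (axialSq x) - deGennesMomentum) ^ 2 *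
      (2 - softSign (layerMomentum b m (axialSq x))) ≤
        -deGennesRiccati (layerMomentum b m (axialSq x)) := by
    refine (mul_le_mul_of_nonneg_left hs (by positivity)).trans ?_
    linarith [hcR (layerMomentum b m (axialSq x))]
  rw [radialCoeff, momentumDetuning, hq, neg_nonneg]
  exact mul_nonpos_of_nonneg_of_nonpos (sq_nonneg b)
    (mul_nonpos_of_nonneg_of_nonpos (axialSq_nonneg x) (le_neg_iff_add_nonpos_left.1 hle))

lemma axialSq_eq_sub_boundaryHeight (x : E3) :
    axialSq x = 1 - x 2 ^ 2 - 2 * boundaryHeight x := by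
  rw [boundaryHeight, norm_sq_eq_axialSq_add]
  ring

lemma sq_le_of_abs_le_095 {z : ℝ} (hz : |z| ≤ 0.95) : z ^ 2 ≤ 0.9025 := by
  rw [← sq_abs]
  exact (pow_le_pow_left₀ (abs_nonneg z) hz 2).trans (by norm_num)

lemma SupportedInShell.eventuallyEq_zero (hv : SupportedInShell b v) (hb : 100 ≤ b)
    (hx : axialSq x = 0) : v =ᶠ[𝓝 x] fun _ => 0 := by
  have houtside : ∀ᶠ y in 𝓝 x, 0.95 < |y 2| ∨ 2 / b < boundaryHeight y := by
    by_cases hz : |x 2| ≤ 0.95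
    · have hheight : 2 / b < boundaryHeight x := by
        have h2b : 2 / b ≤ 0.02 := by rw [div_le_iff₀ (by linarith)]; linarith
        linarith [axialSq_eq_sub_boundaryHeight x, sq_le_of_abs_le_095 hz]
      exact (continuous_boundaryHeight.continuousAt.eventually_const_lt hheight).mono
        fun _ => Or.inr
    · have hcont : Continuous fun y : E3 => |y 2| := by fun_prop
      exact (hcont.continuousAt.eventually_const_lt (not_le.1 hz)).mono fun _ => Or.inl
  filter_upwards [houtside] with y hy
  by_contra hvy
  exact hy.elim (hv y hvy).1.not_gt (hv y hvy).2.not_gt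

lemma SupportedInShell.angularMode (hv : SupportedInShell b v) (m : ℤ) :
    SupportedInShell b (angularMode v m) := by
  intro x hx
  contrapose! hx
  refine angularMode_eq_zero fun y hy hy₂ => ?_
  by_contra hvy
  have hheight : boundaryHeight y = boundaryHeight x := by
    rw [boundaryHeight, boundaryHeight, norm_sq_eq_coord, norm_sq_eq_coord, hy, hy₂]
  obtain ⟨hz, hT⟩ := hv y hvy
  rw [hy₂] at hz
  rw [hheight] at hT
  exact (hx hz).not_ge hT

lemma EnergyDominates.of_hasAngularMomentum (hb : 100 ≤ b) (hc : 0 ≤ c) (hc' : c ≤ 1 / 10000)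
    (hbc : 10 / b ^ 2 ≤ 0.0045 * c)
    (hcR : ∀ τ, 3 * c * softSign (τ - deGennesMomentum) ^ 2 ≤ -deGennesRiccati τ)
    (hv : ContDiff ℝ 1 v) (hsupp : SupportedInShell b v) (hang : HasAngularMomentum m v) :
    EnergyDominates (b ^ 4) (fun x => b ^ 4 *
      (Theta0 + 3 / 1000000 * c * |x 2| - (50 + 5 * |deGennesMomentum|) / b)) v := by
  refine .of_meridionalField hv hang (fun _ => hsupp.eventuallyEq_zero hb)
    (fun _ _ => (contDiff_radialCoeff b m c).contDiffAt) (fun _ => contDiffAt_meridianCoeff b m c)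
    (fun _ hx _ => radialCoeff_nonneg hc hcR hx) (by fun_prop) fun x hx hvx => ?_
  obtain ⟨hz, hT⟩ := hsupp x hvx
  have hb0 : 0 < b := by linarith
  have hTpos := boundaryHeight_pos (mem_ball_zero_iff.1 hx)
  have hq := axialSq_eq_sub_boundaryHeight x
  have hz2 := sq_le_of_abs_le_095 hz
  have h2b : 2 / b ≤ 0.02 := by rw [div_le_iff₀ hb0]; linarith
  have h4b : 4 / b = 2 * (2 / b) := by ring
  rw [effectivePotential_sub_fieldDivergence_eq hb0.ne' (by linarith)]
  refine mul_le_mul_of_nonneg_left ?_ (by positivity)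
  exact le_barrierPotential hb hc hc' hbc hz (by linarith) (by linarith)
    (by rw [layerMomentum, layerMomentum]; ring) deGennesMomentum

theorem exists_energyDominates_of_supportedInShell : ∃ c > 0, c ≤ 1 / 1000 ∧ ∃ C > 0, ∃ b₀ ≥ 100,
    ∀ b ≥ b₀, ∀ v : E3 → ℂ, ContDiff ℝ 1 v → SupportedInShell b v →
      EnergyDominates (b ^ 4) (fun x => b ^ 4 * (Theta0 + c * |x 2| - C / b)) v := by
  obtain ⟨c₀, hc₀, hR⟩ := exists_softSign_sq_le_neg_deGennesRiccati
  obtain ⟨c, hc, hcmin⟩ : ∃ c > 0, c ≤ c₀ / 3 ∧ c ≤ 1 / 10000 :=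
    ⟨min (c₀ / 3) (1 / 10000), by positivity, min_le_left _ _, min_le_right _ _⟩
  refine ⟨3 / 1000000 * c, by positivity, by linarith, 50 + 5 * |deGennesMomentum|, by positivity,
    max 100 (10000 / c), le_max_left _ _, fun b hb v hv hsupp => ?_⟩
  have hb100 : 100 ≤ b := (le_max_left _ _).trans hb
  have hbc : 10 / b ^ 2 ≤ 0.0045 * c := by
    have hbc₁ : 10000 ≤ b * c := (div_le_iff₀ hc).1 ((le_max_right _ _).trans hb)
    rw [div_le_iff₀ (by positivity)]
    nlinarith
  refine .of_angularMode hv (by fun_prop) (fun x y _ hz => by simp only [hz]) fun m => ?_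
  refine .of_hasAngularMomentum (m := m) hb100 hc.le hcmin.2 hbc (fun τ => ?_)
    (contDiff_angularMode hv m) (hsupp.angularMode m) fun x => ?_
  · exact le_trans (mul_le_mul_of_nonneg_right (by linarith) (sq_nonneg _)) (hR τ)
  · exact_mod_cast angularMomentum_angularMode hv m x

end Barrier

section Localization

variable {B M K a σ : ℝ} {g W W' : E3 → ℝ} {u : E3 → ℂ} {x : E3}

/-- The angle whose cosine and sine form the quadratic partition of unity adapted to the
regions `g < 1` and `0 < g`. -/
def transitionAngle (g : E3 → ℝ) (x : E3) : ℝ := π / 2 * smoothTransition (g x)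

/-- The part of `u` localized to the region `g < 1`. -/
def cutBelow (g : E3 → ℝ) (u : E3 → ℂ) (x : E3) : ℂ := ((cos (transitionAngle g x) : ℝ) : ℂ) * u x

/-- The part of `u` localized to the region `0 < g`. -/
def cutAbove (g : E3 → ℝ) (u : E3 → ℂ) (x : E3) : ℂ := ((sin (transitionAngle g x) : ℝ) : ℂ) * u x

lemma contDiff_transitionAngle {n : ℕ∞} (hg : ContDiff ℝ n g) :
    ContDiff ℝ n (transitionAngle g) :=
  contDiff_const.mul (smoothTransition.contDiff.comp hg)

lemma contDiff_cutBelow {n : ℕ∞} (hg : ContDiff ℝ n g) (hu : ContDiff ℝ n u) :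
    ContDiff ℝ n (cutBelow g u) :=
  contDiff_ofReal_mul (contDiff_transitionAngle hg).cos hu

lemma contDiff_cutAbove {n : ℕ∞} (hg : ContDiff ℝ n g) (hu : ContDiff ℝ n u) :
    ContDiff ℝ n (cutAbove g u) :=
  contDiff_ofReal_mul (contDiff_transitionAngle hg).sin hu

lemma lt_one_and_ne_zero_of_cutBelow_ne_zero (h : cutBelow g u x ≠ 0) : g x < 1 ∧ u x ≠ 0 := by
  refine ⟨?_, right_ne_zero_of_mul h⟩
  contrapose! h
  simp [cutBelow, transitionAngle, smoothTransition.one_of_one_le h]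

lemma pos_of_cutAbove_ne_zero (h : cutAbove g u x ≠ 0) : 0 < g x := by
  contrapose! h
  simp [cutAbove, transitionAngle, smoothTransition.zero_of_nonpos h]

lemma norm_sq_ofReal_mul (r : ℝ) (z : ℂ) : ‖(r : ℂ) * z‖ ^ 2 = r ^ 2 * ‖z‖ ^ 2 := by
  rw [norm_mul, mul_pow, Complex.norm_real, norm_eq_abs, sq_abs]

lemma norm_sq_cutBelow_add_norm_sq_cutAbove (g : E3 → ℝ) (u : E3 → ℂ) (x : E3) :
    ‖cutBelow g u x‖ ^ 2 + ‖cutAbove g u x‖ ^ 2 = ‖u x‖ ^ 2 := by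
  rw [cutBelow, cutAbove, norm_sq_ofReal_mul, norm_sq_ofReal_mul, ← add_mul, cos_sq_add_sin_sq,
    one_mul]

lemma norm_fderiv_transitionAngle_le (hM : ∀ s, |deriv smoothTransition s| ≤ M)
    (hg : DifferentiableAt ℝ g x) :
    ‖fderiv ℝ (transitionAngle g) x‖ ≤ π / 2 * M * ‖fderiv ℝ g x‖ := by
  have h : HasFDerivAt (transitionAngle g)
      ((π / 2 * deriv smoothTransition (g x)) • fderiv ℝ g x) x :=
    ((hasDerivAt_smoothTransition (g x)).const_mul (π / 2)).comp_hasFDerivAt x hg.hasFDerivAt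
  rw [h.fderiv, norm_smul, norm_mul, norm_eq_abs, norm_eq_abs, abs_of_pos pi_div_two_pos]
  gcongr
  exact hM _

lemma EnergyDominates.mono (hu : ContDiff ℝ 1 u) (hW : Continuous W) (hW' : Continuous W')
    (h : EnergyDominates B W u) (hle : ∀ x ∈ ball3, u x ≠ 0 → W' x ≤ W x) :
    EnergyDominates B W' u := by
  refine le_trans (setIntegral_mono_on ?_ ?_ measurableSet_ball3 fun x hx => ?_) h
  · exact integrableOn_ball3_of_continuous (hW'.mul (hu.continuous.norm.pow 2))
  · exact integrableOn_ball3_of_continuous (hW.mul (hu.continuous.norm.pow 2))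
  · rcases eq_or_ne (u x) 0 with h0 | h0
    · simp [h0]
    · exact mul_le_mul_of_nonneg_right (hle x hx h0) (sq_nonneg _)

lemma EnergyDominates.of_cutBelow_cutAbove (hu : ContDiff ℝ 1 u) (hg : ContDiff ℝ 1 g)
    (hW : Continuous W) (hK : ∀ x ∈ ball3, ‖fderiv ℝ (transitionAngle g) x‖ ^ 2 ≤ K)
    (hbelow : EnergyDominates B W (cutBelow g u)) (habove : EnergyDominates B W (cutAbove g u)) :
    EnergyDominates B (fun x => W x - K) u := by
  have hc : ContDiff ℝ 1 (cutBelow g u) := contDiff_cutBelow (n := 1) hg hu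
  have hs : ContDiff ℝ 1 (cutAbove g u) := contDiff_cutAbove (n := 1) hg hu
  have hα : ContDiff ℝ 1 (transitionAngle g) := contDiff_transitionAngle (n := 1) hg
  have huc := hu.continuous
  have hcc := hc.continuous
  have hsc := hs.continuous
  have hE (v : E3 → ℂ) (hv : ContDiff ℝ 1 v) : IntegrableOn (magEnergyDensity B v) ball3 :=
    integrableOn_ball3_of_continuous (continuous_magEnergyDensity B hv)
  have hKu : IntegrableOn (fun x => K * ‖u x‖ ^ 2) ball3 :=
    integrableOn_ball3_of_continuous (by fun_prop)
  calc ∫ x in ball3, (W x - K) * ‖u x‖ ^ 2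
      = (∫ x in ball3, W x * ‖cutBelow g u x‖ ^ 2) + (∫ x in ball3, W x * ‖cutAbove g u x‖ ^ 2) -
          ∫ x in ball3, K * ‖u x‖ ^ 2 := by
        have hWc : IntegrableOn (fun x => W x * ‖cutBelow g u x‖ ^ 2) ball3 :=
          integrableOn_ball3_of_continuous (by fun_prop)
        have hWs : IntegrableOn (fun x => W x * ‖cutAbove g u x‖ ^ 2) ball3 :=
          integrableOn_ball3_of_continuous (by fun_prop)
        rw [← integral_add' hWc hWs, ← integral_sub (hWc.add hWs) hKu]
        simp only [Pi.add_apply, ← mul_add, norm_sq_cutBelow_add_norm_sq_cutAbove, sub_mul]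
    _ ≤ (∫ x in ball3, magEnergyDensity B (cutBelow g u) x) +
          (∫ x in ball3, magEnergyDensity B (cutAbove g u) x) - ∫ x in ball3, K * ‖u x‖ ^ 2 :=
        sub_le_sub_right (add_le_add hbelow habove) _
    _ ≤ ∫ x in ball3, magEnergyDensity B u x := by
        have hsum := (hE _ hc).add (hE _ hs)
        rw [← integral_add' (hE _ hc) (hE _ hs), ← integral_sub hsum hKu]
        refine setIntegral_mono_on (hsum.sub hKu) (hE u hu) measurableSet_ball3 fun x hx => ?_
        rw [magEnergyDensity_eq_cos_add_sin (hα.differentiable one_ne_zero x)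
          (hu.differentiable one_ne_zero x)]
        exact sub_le_sub_left (mul_le_mul_of_nonneg_right (hK x hx) (sq_nonneg _)) _

/-- Above the cut, `∫ B σ x₃ |v|²` is dominated by the energy and `σ x₃ > 9/10`. -/
lemma EnergyDominates.of_cutBelow_pole (hB : 0 ≤ B) (hM : ∀ s, |deriv smoothTransition s| ≤ M)
    (hσ : σ ^ 2 = 1) (hu : ContDiff ℝ 2 u) (hW : Continuous W) (hWB : ∀ x ∈ ball3, W x ≤ B * 0.9)
    (h : EnergyDominates B W (cutBelow (fun y => 20 * (σ * y 2) - 18) u)) :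
    EnergyDominates B (fun x => W x - (π / 2 * M * 20) ^ 2) u := by
  have hg : ContDiff ℝ 2 fun y : E3 => 20 * (σ * y 2) - 18 := by fun_prop
  have hs : ContDiff ℝ 2 (cutAbove (fun y => 20 * (σ * y 2) - 18) u) :=
    contDiff_cutAbove (n := 2) hg hu
  refine .of_cutBelow_cutAbove (hu.of_le one_le_two) (hg.of_le one_le_two) hW (fun x _ => ?_) h ?_
  · have hM0 := (abs_nonneg _).trans (hM 0)
    refine pow_le_pow_left₀ (norm_nonneg _)
      ((norm_fderiv_transitionAngle_le hM (hg.differentiable two_ne_zero x)).trans ?_) 2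
    gcongr
    have hcoord : HasFDerivAt (fun y : E3 => y 2) (EuclideanSpace.proj 2 : E3 →L[ℝ] ℝ) x :=
      hasFDerivAt_coord 2 x
    have hσ1 : |σ| = 1 := (pow_eq_one_iff_of_nonneg (abs_nonneg σ) two_ne_zero).1 (by rwa [sq_abs])
    rw [(((hcoord.const_mul σ).const_mul 20).sub_const 18).fderiv, norm_smul, norm_smul,
      norm_eq_abs σ, hσ1, one_mul, Real.norm_ofNat]
    exact mul_le_of_le_one_right (by norm_num) (norm_proj_le_one 2)
  · refine EnergyDominates.mono (hs.of_le one_le_two) (by fun_prop) hW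
      (integral_mul_coord_mul_normSq_le B hs hσ) fun x hx hne => (hWB x hx).trans ?_
    have := pos_of_cutAbove_ne_zero hne
    gcongr
    linarith

/-- Above the cut, `v` vanishes on the sphere and `∫ B |v|²` is dominated by the energy. -/
lemma EnergyDominates.of_cutBelow_boundary (ha : 0 ≤ a) (hM : ∀ s, |deriv smoothTransition s| ≤ M)
    (hu : ContDiff ℝ 2 u) (hW : Continuous W) (hWB : ∀ x ∈ ball3, W x ≤ B)
    (h : EnergyDominates B W (cutBelow (fun y => a * boundaryHeight y - 1) u)) :
    EnergyDominates B (fun x => W x - (π / 2 * M * a) ^ 2) u := by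
  have hg : ContDiff ℝ 2 fun y : E3 => a * boundaryHeight y - 1 := by fun_prop
  have hs : ContDiff ℝ 2 (cutAbove (fun y => a * boundaryHeight y - 1) u) :=
    contDiff_cutAbove (n := 2) hg hu
  refine .of_cutBelow_cutAbove (hu.of_le one_le_two) (hg.of_le one_le_two) hW (fun x hx => ?_) h ?_
  · have hM0 := (abs_nonneg _).trans (hM 0)
    refine pow_le_pow_left₀ (norm_nonneg _)
      ((norm_fderiv_transitionAngle_le hM (hg.differentiable two_ne_zero x)).trans ?_) 2
    gcongr
    rw [(((hasFDerivAt_boundaryHeight x).const_mul a).sub_const 1).fderiv, norm_smul, norm_neg,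
      innerSL_apply_norm, Real.norm_of_nonneg ha]
    exact mul_le_of_le_one_right ha (mem_ball3_iff.1 hx).le
  · refine EnergyDominates.mono (hs.of_le one_le_two) continuous_const hW
      (integral_mul_normSq_le_of_eq_zero_on_sphere B hs fun x hx => ?_) fun x hx _ => hWB x hx
    by_contra hne
    have := pos_of_cutAbove_ne_zero hne
    nlinarith [boundaryHeight_nonpos hx.ge]

lemma abs_coord_le_one (hx : x ∈ ball3) (j : Fin 3) : |x j| ≤ 1 :=
  (PiLp.norm_apply_le x j).trans (mem_ball3_iff.1 hx).le

theorem exists_energyDominates : ∃ c > 0, ∃ C > 0, ∃ b₀ ≥ 100, ∀ b ≥ b₀, ∀ u : E3 → ℂ,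
    ContDiff ℝ 2 u → EnergyDominates (b ^ 4) (fun x => b ^ 4 * (Theta0 + c * |x 2| - C / b)) u := by
  obtain ⟨c, hc, hc1, C, hC, b₀, hb₀, hshell⟩ := exists_energyDominates_of_supportedInShell
  obtain ⟨M, hM⟩ := exists_abs_deriv_smoothTransition_le
  refine ⟨c, hc, C + (π / 2 * M) ^ 2 * 801, by positivity, b₀, hb₀, fun b hb u hu => ?_⟩
  have hb1 : 1 ≤ b := by linarith
  have hWle : ∀ x ∈ ball3, b ^ 4 * (Theta0 + c * |x 2| - C / b) ≤ b ^ 4 * 0.9 := fun x hx => by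
    have hcx : c * |x 2| ≤ 1 / 1000 * 1 := by gcongr; exact abs_coord_le_one hx 2
    have hCb : 0 ≤ C / b := by positivity
    exact mul_le_mul_of_nonneg_left (by linarith [Theta0_le]) (by positivity)
  have hsub {W : E3 → ℝ} {q K : ℝ} (h : ∀ x ∈ ball3, W x ≤ q) :
      ∀ x ∈ ball3, W x - K ^ 2 ≤ q := fun x hx => by linarith [h x hx, sq_nonneg K]
  have h₀ := contDiff_cutBelow (n := 2) (g := fun y => b * boundaryHeight y - 1) (by fun_prop) hu
  have h₁ := contDiff_cutBelow (n := 2) (g := fun y => 20 * (1 * y 2) - 18) (by fun_prop) h₀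
  have h₂ := contDiff_cutBelow (n := 2) (g := fun y => 20 * (-1 * y 2) - 18) (by fun_prop) h₁
  have hcentre := hshell b hb _ (h₂.of_le one_le_two) fun x hx => by
    obtain ⟨hsouth, hx⟩ := lt_one_and_ne_zero_of_cutBelow_ne_zero hx
    obtain ⟨hnorth, hx⟩ := lt_one_and_ne_zero_of_cutBelow_ne_zero hx
    have hT := (lt_one_and_ne_zero_of_cutBelow_ne_zero hx).1
    exact ⟨abs_le.2 ⟨by linarith, by linarith⟩, by rw [le_div_iff₀ (by linarith)]; linarith⟩
  have hlocal := EnergyDominates.of_cutBelow_boundary (by linarith) hM hu (by fun_prop)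
    (hsub <| hsub fun x hx => (hWle x hx).trans <| by
      nlinarith [pow_nonneg (by linarith : 0 ≤ b) 4])
    (.of_cutBelow_pole (σ := 1) (by positivity) hM (by norm_num) h₀ (by fun_prop) (hsub hWle)
      (.of_cutBelow_pole (σ := -1) (by positivity) hM (by norm_num) h₁ (by fun_prop) hWle hcentre))
  refine hlocal.mono (hu.of_le one_le_two) (by fun_prop) (by fun_prop) fun x _ _ => ?_
  have hexpand : b ^ 4 * (Theta0 + c * |x 2| - (C + (π / 2 * M) ^ 2 * 801) / b) =
      b ^ 4 * (Theta0 + c * |x 2| - C / b) - (π / 2 * M) ^ 2 * (801 * b ^ 3) := by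
    field_simp
    ring
  have hloss : 800 + b ^ 2 ≤ 801 * b ^ 3 := by nlinarith [one_le_pow₀ hb1 (n := 2)]
  nlinarith [mul_le_mul_of_nonneg_left hloss (sq_nonneg (π / 2 * M))]

end Localization

section Agmon

variable {B lam κ D b : ℝ} {Ψ : E3 → ℂ}

lemma integral_sq_mul_normSq_le_of_energyDominates (hΨ : IsNeumannEigenfunction B lam Ψ)
    {G W : E3 → ℝ} (hG : ContDiff ℝ 1 G) (hW : Continuous W)
    (hdom : EnergyDominates B W fun x => (G x : ℂ) * Ψ x) (hκ : 0 < κ)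
    (hle : ∀ x ∈ ball3, κ * (G x ^ 2 - D) ≤ (W x - lam) * G x ^ 2 - ‖fderiv ℝ G x‖ ^ 2) :
    ∫ x in ball3, G x ^ 2 * ‖Ψ x‖ ^ 2 ≤ D * ∫ x in ball3, ‖Ψ x‖ ^ 2 := by
  have hΨc := hΨ.1.continuous
  have hGc := hG.continuous
  have hG' := hG.continuous_fderiv one_ne_zero
  have hint {f : E3 → ℝ} (hf : Continuous f) := integrableOn_ball3_of_continuous hf
  have hexcess : ∫ x in ball3, ((W x - lam) * G x ^ 2 - ‖fderiv ℝ G x‖ ^ 2) * ‖Ψ x‖ ^ 2 ≤ 0 := by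
    rw [EnergyDominates, integral_magEnergyDensity_ofReal_mul_eigenfunction hΨ hG,
      ← sub_nonpos, ← integral_sub (hint (by fun_prop)) (hint (by fun_prop))] at hdom
    refine le_of_eq_of_le (integral_congr_ae (.of_forall fun x => ?_)) hdom
    simp only [norm_sq_ofReal_mul]
    ring
  have hweight : ∫ x in ball3, κ * (G x ^ 2 - D) * ‖Ψ x‖ ^ 2 ≤ 0 :=
    (setIntegral_mono_on (hint (by fun_prop)) (hint (by fun_prop)) measurableSet_ball3 fun x hx =>
      mul_le_mul_of_nonneg_right (hle x hx) (sq_nonneg _)).trans hexcess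
  simp only [mul_assoc, sub_mul, integral_const_mul] at hweight
  rw [integral_sub (hint (by fun_prop)) (hint (by fun_prop)), integral_const_mul] at hweight
  exact sub_nonpos.1 (nonpos_of_mul_nonpos_right hweight hκ)

lemma norm_sq_fderiv_cosh_coord_le (b : ℝ) (x : E3) :
    ‖fderiv ℝ (fun y : E3 => cosh (b * y 2)) x‖ ^ 2 ≤ b ^ 2 * cosh (b * x 2) ^ 2 := by
  have hsinh : sinh (b * x 2) ^ 2 ≤ cosh (b * x 2) ^ 2 := by rw [cosh_sq]; linarith
  have hproj : ‖(EuclideanSpace.proj 2 : E3 →L[ℝ] ℝ)‖ ^ 2 ≤ 1 :=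
    pow_le_one₀ (norm_nonneg _) (norm_proj_le_one 2)
  rw [((hasFDerivAt_coord 2 x).const_mul b).cosh.fderiv, norm_smul, norm_smul, mul_pow, mul_pow,
    norm_eq_abs, norm_eq_abs, sq_abs, sq_abs, mul_comm]
  exact mul_le_mul (mul_le_of_le_one_right (sq_nonneg b) hproj) hsinh (sq_nonneg _) (sq_nonneg b)

lemma cosh_sq_sub_le {c R t : ℝ} (hc : 0 < c) (hR : 0 < R) (hb : 0 < b) :
    cosh (b * t) ^ 2 - R * cosh (R / c) ^ 2 ≤ (c * |t| * b - (R - 1)) * cosh (b * t) ^ 2 := by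
  rcases lt_or_ge (c * |t| * b) R with h | h
  · have hcosh : cosh (b * t) ^ 2 ≤ cosh (R / c) ^ 2 := by
      refine pow_le_pow_left₀ (cosh_pos _).le (cosh_le_cosh.2 ?_) 2
      rw [abs_mul, abs_of_pos hb, abs_of_pos (div_pos hR hc), le_div_iff₀ hc]
      linarith
    have h0 : 0 ≤ c * |t| * b * cosh (b * t) ^ 2 := by positivity
    nlinarith
  · have h1 : 1 * cosh (b * t) ^ 2 ≤ (c * |t| * b - (R - 1)) * cosh (b * t) ^ 2 :=
      mul_le_mul_of_nonneg_right (by linarith) (sq_nonneg _)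
    have h0 : 0 ≤ R * cosh (R / c) ^ 2 := by positivity
    linarith

theorem exists_integral_cosh_sq_mul_normSq_le (ω : ℝ) : ∃ K > 0, ∃ b₀ ≥ 100, ∀ b ≥ b₀,
    ∀ (lam : ℝ) (Ψ : E3 → ℂ), IsNeumannEigenfunction (b ^ 4) lam Ψ →
      lam ≤ Theta0 * b ^ 4 + ω * b ^ 3 →
      ∫ x in ball3, cosh (b * x 2) ^ 2 * ‖Ψ x‖ ^ 2 ≤ K * ∫ x in ball3, ‖Ψ x‖ ^ 2 := by
  obtain ⟨c, hc, C, hC, b₀, hb₀, hlower⟩ := exists_energyDominates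
  obtain ⟨R, hR, hRpos⟩ : ∃ R, R = C + |ω| + 2 ∧ 0 < R := ⟨_, rfl, by positivity⟩
  refine ⟨R * cosh (R / c) ^ 2, by positivity, b₀, hb₀, fun b hb lam Ψ hΨ hlam => ?_⟩
  have hb1 : 1 ≤ b := by linarith
  have hG (n : ℕ∞) : ContDiff ℝ n fun x : E3 => cosh (b * x 2) := by fun_prop
  refine integral_sq_mul_normSq_le_of_energyDominates hΨ (hG 1) (by fun_prop)
    (hlower b hb _ (contDiff_ofReal_mul (hG 2) hΨ.1)) (κ := b ^ 3) (by positivity) fun x _ => ?_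
  have hcoeff : b ^ 3 * (c * |x 2| * b - (R - 1)) ≤
      b ^ 4 * (Theta0 + c * |x 2| - C / b) - lam - b ^ 2 := by
    have hexpand : b ^ 4 * (Theta0 + c * |x 2| - C / b) =
        Theta0 * b ^ 4 + b ^ 3 * (c * |x 2| * b - C) := by
      field_simp
      ring
    have hω : ω * b ^ 3 ≤ |ω| * b ^ 3 := by gcongr; exact le_abs_self ω
    have hpow : b ^ 2 ≤ b ^ 3 := pow_le_pow_right₀ hb1 (by norm_num)
    rw [hexpand, hR]
    linarith
  calc b ^ 3 * (cosh (b * x 2) ^ 2 - R * cosh (R / c) ^ 2)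
      ≤ b ^ 3 * ((c * |x 2| * b - (R - 1)) * cosh (b * x 2) ^ 2) := by
        gcongr
        exact cosh_sq_sub_le hc hRpos (by linarith)
    _ = b ^ 3 * (c * |x 2| * b - (R - 1)) * cosh (b * x 2) ^ 2 := by ring
    _ ≤ (b ^ 4 * (Theta0 + c * |x 2| - C / b) - lam - b ^ 2) * cosh (b * x 2) ^ 2 := by gcongr
    _ ≤ _ := by linarith [norm_sq_fderiv_cosh_coord_le b x]

lemma energyDominates_interior {M : ℝ} (hM : ∀ s, |deriv smoothTransition s| ≤ M) {a : ℝ}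
    (ha : 0 ≤ a) (hB : 0 ≤ B) {u : E3 → ℂ} (hu : ContDiff ℝ 2 u) :
    EnergyDominates B (fun x => B * smoothTransition (a * boundaryHeight x - 2) -
      (π / 2 * M * a) ^ 2) u := by
  have hst : Continuous fun x : E3 => smoothTransition (a * boundaryHeight x - 2) :=
    smoothTransition.continuous.comp (by fun_prop)
  refine .of_cutBelow_boundary ha hM hu (hst.const_mul B)
    (fun x _ => mul_le_of_le_one_right hB (smoothTransition.le_one _)) ?_
  refine le_of_eq_of_le (integral_eq_zero_of_ae (.of_forall fun x => ?_))
    (integral_nonneg (magEnergyDensity_nonneg B _))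
  rcases eq_or_ne (cutBelow (fun y => a * boundaryHeight y - 1) u x) 0 with h | h
  · simp [h]
  · have hlt := (lt_one_and_ne_zero_of_cutBelow_ne_zero h).1
    simp [smoothTransition.zero_of_nonpos (show a * boundaryHeight x - 2 ≤ 0 by linarith)]

lemma norm_sq_fderiv_exp_boundaryHeight_le {k : ℝ} {x : E3} (hx : x ∈ ball3) :
    ‖fderiv ℝ (fun y : E3 => exp (k * boundaryHeight y)) x‖ ^ 2 ≤
      k ^ 2 * exp (k * boundaryHeight x) ^ 2 := by
  have hnorm : ‖x‖ ^ 2 ≤ 1 := pow_le_one₀ (norm_nonneg x) (mem_ball3_iff.1 hx).le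
  rw [((hasFDerivAt_boundaryHeight x).const_mul k).exp.fderiv, norm_smul, norm_smul, norm_neg,
    innerSL_apply_norm, mul_pow, mul_pow, norm_eq_abs, norm_eq_abs, sq_abs, sq_abs, mul_comm]
  exact mul_le_mul_of_nonneg_right (mul_le_of_le_one_right (sq_nonneg k) hnorm) (sq_nonneg _)

lemma one_sub_smoothTransition_mul_exp_sq_le {k a t : ℝ} (hk : 0 ≤ k) (ha : 0 < a) :
    (1 - smoothTransition (a * t - 2)) * exp (k * t) ^ 2 ≤ exp (6 * k / a) := by
  rcases le_or_gt 1 (a * t - 2) with h | h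
  · rw [smoothTransition.one_of_one_le h, sub_self, zero_mul]
    positivity
  · refine (mul_le_of_le_one_left (sq_nonneg _)
      (by linarith [smoothTransition.nonneg (a * t - 2)])).trans ?_
    rw [← exp_nat_mul, exp_le_exp, le_div_iff₀ ha]
    push_cast
    nlinarith

theorem exists_integral_exp_sq_mul_normSq_le (ω : ℝ) : ∃ K > 0, ∃ b₀ ≥ 100, ∀ b ≥ b₀,
    ∀ (lam : ℝ) (Ψ : E3 → ℂ), IsNeumannEigenfunction (b ^ 4) lam Ψ →
      lam ≤ Theta0 * b ^ 4 + ω * b ^ 3 →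
      ∫ x in ball3, exp (b ^ 2 / 4 * boundaryHeight x) ^ 2 * ‖Ψ x‖ ^ 2 ≤
        K * ∫ x in ball3, ‖Ψ x‖ ^ 2 := by
  obtain ⟨M, hM⟩ := exists_abs_deriv_smoothTransition_le
  have hM0 : 0 ≤ M := (abs_nonneg _).trans (hM 0)
  refine ⟨16 * exp (3 * π * (M + 1)), by positivity, max 100 (16 * ω), le_max_left _ _,
    fun b hb lam Ψ hΨ hlam => ?_⟩
  have hb0 : 0 < b := by linarith [(le_max_left _ _).trans hb]
  have hbω : 16 * ω ≤ b := (le_max_right _ _).trans hb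
  have hG (n : ℕ∞) : ContDiff ℝ n fun x : E3 => exp (b ^ 2 / 4 * boundaryHeight x) := by fun_prop
  obtain ⟨a, ha, ha0⟩ : ∃ a, a = b ^ 2 / (2 * π * (M + 1)) ∧ 0 < a := ⟨_, rfl, by positivity⟩
  have haM : a * (2 * π * (M + 1)) = b ^ 2 := by rw [ha]; field_simp
  refine integral_sq_mul_normSq_le_of_energyDominates hΨ (hG 1) (by fun_prop)
    (energyDominates_interior hM ha0.le (by positivity) (contDiff_ofReal_mul (hG 2) hΨ.1))
    (κ := b ^ 4 / 16) (by positivity) fun x hx => ?_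
  have hloss : (π / 2 * M * a) ^ 2 ≤ b ^ 4 / 16 := by
    have h : π / 2 * M * a ≤ b ^ 2 / 4 := by nlinarith [mul_pos pi_pos ha0]
    calc (π / 2 * M * a) ^ 2 ≤ (b ^ 2 / 4) ^ 2 := by gcongr
      _ = b ^ 4 / 16 := by ring
  have hlam' : lam ≤ 13 / 16 * b ^ 4 := by
    have hω : ω * b ^ 3 ≤ b / 16 * b ^ 3 := by gcongr; linarith
    have hΘ : Theta0 * b ^ 4 ≤ 3 / 4 * b ^ 4 := by gcongr; exact Theta0_le
    linarith
  have hgrad := norm_sq_fderiv_exp_boundaryHeight_le (k := b ^ 2 / 4) hx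
  have hlayer := one_sub_smoothTransition_mul_exp_sq_le (t := boundaryHeight x)
    (by positivity : 0 ≤ b ^ 2 / 4) ha0
  have hrate : 6 * (b ^ 2 / 4) / a = 3 * π * (M + 1) := by
    rw [← haM]
    field_simp
    norm_num
  rw [hrate] at hlayer
  set g := exp (b ^ 2 / 4 * boundaryHeight x) ^ 2
  have hcoeff : (13 / 16 * b ^ 4 + b ^ 4 / 16) * g ≥ (lam + (π / 2 * M * a) ^ 2) * g := by gcongr
  have hlayer' := mul_le_mul_of_nonneg_left hlayer (by positivity : 0 ≤ b ^ 4)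
  linarith

end Agmon

section CutOff

variable {B lam b ε r L : ℝ} {Ψ : E3 → ℂ} {χ w : E3 → ℝ} {x : E3}

/-- A weight whose mean against low-energy eigenfunctions is bounded, while it is exponentially
large away from the equator of the unit sphere. -/
def agmonWeight (b : ℝ) (x : E3) : ℝ :=
  exp (b ^ 2 / 4 * boundaryHeight x) ^ 2 + 4 * cosh (b * x 2) ^ 2

@[fun_prop]
lemma continuous_agmonWeight (b : ℝ) : Continuous (agmonWeight b) := by
  unfold agmonWeight
  fun_prop

lemma agmonWeight_nonneg (b : ℝ) (x : E3) : 0 ≤ agmonWeight b x := by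
  unfold agmonWeight
  positivity

theorem exists_integral_agmonWeight_mul_normSq_le (ω : ℝ) : ∃ K > 0, ∃ b₀ ≥ 100, ∀ b ≥ b₀,
    ∀ (lam : ℝ) (Ψ : E3 → ℂ), IsNeumannEigenfunction (b ^ 4) lam Ψ →
      lam ≤ Theta0 * b ^ 4 + ω * b ^ 3 →
      ∫ x in ball3, agmonWeight b x * ‖Ψ x‖ ^ 2 ≤ K * ∫ x in ball3, ‖Ψ x‖ ^ 2 := by
  obtain ⟨K₁, hK₁, b₁, hb₁, hboundary⟩ := exists_integral_exp_sq_mul_normSq_le ω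
  obtain ⟨K₂, hK₂, b₂, -, hequator⟩ := exists_integral_cosh_sq_mul_normSq_le ω
  refine ⟨K₁ + 4 * K₂, by positivity, max b₁ b₂, le_max_of_le_left hb₁,
    fun b hb lam Ψ hΨ hlam => ?_⟩
  have hΨc := hΨ.1.continuous
  have h₁ := hboundary b ((le_max_left _ _).trans hb) lam Ψ hΨ hlam
  have h₂ := hequator b ((le_max_right _ _).trans hb) lam Ψ hΨ hlam
  simp only [agmonWeight, add_mul, mul_assoc (4 : ℝ)]
  rw [integral_add (integrableOn_ball3_of_continuous (by fun_prop))
    (integrableOn_ball3_of_continuous (by fun_prop)), integral_const_mul]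
  linarith

lemma exp_two_mul_abs_le (y : ℝ) : exp (2 * |y|) ≤ 4 * cosh y ^ 2 := by
  have h : exp |y| ≤ 2 * cosh y := by
    rw [← cosh_abs, cosh_eq]
    linarith [exp_pos (-|y|)]
  calc exp (2 * |y|) = exp |y| ^ 2 := by rw [← exp_nat_mul, Nat.cast_ofNat]
    _ ≤ (2 * cosh y) ^ 2 := by gcongr
    _ = 4 * cosh y ^ 2 := by ring

lemma exp_le_agmonWeight (h : r ≤ b ^ 2 / 2 * boundaryHeight x ∨ r ≤ 2 * |b * x 2|) :
    exp r ≤ agmonWeight b x := by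
  rcases h with h | h
  · refine le_add_of_le_of_nonneg ?_ (by positivity)
    rw [← exp_nat_mul, exp_le_exp]
    push_cast
    linarith
  · exact le_add_of_nonneg_of_le (sq_nonneg _) ((exp_le_exp.2 h).trans (exp_two_mul_abs_le _))

lemma distBd_le_two_mul_boundaryHeight (hx : x ∈ ball3) : distBd x ≤ 2 * boundaryHeight x := by
  unfold distBd boundaryHeight
  nlinarith [norm_nonneg x, mem_ball3_iff.1 hx]

lemma arcsin_le_pi_div_two_mul {y : ℝ} (h0 : 0 ≤ y) (h1 : y ≤ 1) : arcsin y ≤ π / 2 * y := by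
  have h := mul_le_sin (arcsin_nonneg.2 h0) (arcsin_le_pi_div_two y)
  rw [sin_arcsin (by linarith) h1, div_mul_eq_mul_div, div_le_iff₀ pi_pos] at h
  linarith

lemma distEq_mul_norm_le (x : E3) : distEq x * ‖x‖ ≤ π / 2 * |x 2| := by
  rcases (norm_nonneg x).eq_or_lt' with h | h
  · rw [h, mul_zero]
    positivity
  · have hcoord : |x 2| / ‖x‖ ≤ 1 := div_le_one_of_le₀ (PiLp.norm_apply_le x 2) h.le
    have := arcsin_le_pi_div_two_mul (by positivity) hcoord
    rwa [← mul_div_assoc, le_div_iff₀ h] at this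

lemma exp_le_agmonWeight_of_lt_dist (hB : 1 ≤ B) (hx : x ∈ ball3)
    (hfar : B ^ (-(1 : ℝ) / 2 + ε) < distBd x ∨ B ^ (-(1 : ℝ) / 4 + ε) < distEq x) :
    exp (B ^ ε / 16) ≤ agmonWeight (B ^ ((1 : ℝ) / 4)) x := by
  have hB0 : 0 < B := by linarith
  have hb1 : 1 ≤ B ^ ((1 : ℝ) / 4) := one_le_rpow hB (by norm_num)
  have hscale₁ : B ^ ε = (B ^ ((1 : ℝ) / 4)) ^ 2 * B ^ (-(1 : ℝ) / 2 + ε) := by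
    rw [← rpow_mul_natCast hB0.le, ← rpow_add hB0]
    norm_num
  have hscale₂ : B ^ ε = B ^ ((1 : ℝ) / 4) * B ^ (-(1 : ℝ) / 4 + ε) := by
    rw [← rpow_add hB0]
    ring_nf
  set b := B ^ ((1 : ℝ) / 4)
  have hε0 : 0 < B ^ ε := rpow_pos_of_pos hB0 ε
  rcases hfar with h | h
  · refine exp_le_agmonWeight (.inl ?_)
    have := mul_le_mul_of_nonneg_left (h.le.trans (distBd_le_two_mul_boundaryHeight hx))
      (sq_nonneg b)
    linarith
  have hπ := pi_lt_four
  rcases lt_or_ge ‖x‖ (1 / 2) with hcentre | hshell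
  · refine exp_le_agmonWeight (.inl ?_)
    have hT : 3 / 8 ≤ boundaryHeight x := by
      unfold boundaryHeight
      nlinarith [norm_nonneg x]
    have hs : B ^ ε ≤ b * 2 := by
      rw [hscale₂]
      gcongr
      linarith [arcsin_le_pi_div_two (|x 2| / ‖x‖), h.trans_eq (distEq.eq_1 x)]
    nlinarith
  · refine exp_le_agmonWeight (.inr ?_)
    have hd : distEq x ≤ 4 * |x 2| := by
      nlinarith [distEq_mul_norm_le x, abs_nonneg (x 2), rpow_pos_of_pos hB0 (-(1 : ℝ) / 4 + ε)]
    rw [abs_mul, abs_of_pos (by linarith : 0 < b)]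
    nlinarith

lemma eventually_rpow_mul_exp_neg_le {k : ℝ} (hε : 0 < ε) (hk : 0 < k) (q N : ℝ) :
    ∀ᶠ B in atTop, B ^ q * exp (-(k * B ^ ε)) ≤ B ^ (-N) := by
  have h := (tendsto_rpow_mul_exp_neg_mul_atTop_nhds_zero ((N + q) / ε) k hk).comp
    (tendsto_rpow_atTop hε)
  filter_upwards [h.eventually_le_const zero_lt_one, eventually_gt_atTop 0] with B hB hB0
  rw [Function.comp_apply, ← rpow_mul hB0.le, mul_div_cancel₀ _ hε.ne', rpow_add hB0, mul_assoc,
    neg_mul] at hB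
  rwa [rpow_neg hB0.le, ← one_div, le_div_iff₀' (by positivity)]

lemma integral_magEnergyDensity_eigenfunction (hΨ : IsNeumannEigenfunction B lam Ψ) :
    ∫ x in ball3, magEnergyDensity B Ψ x = lam * ∫ x in ball3, ‖Ψ x‖ ^ 2 := by
  simpa [integral_const_mul] using
    integral_magEnergyDensity_ofReal_mul_eigenfunction hΨ (contDiff_const (c := (1 : ℝ)))

lemma IsNeumannEigenfunction.eigenvalue_nonneg (hΨ : IsNeumannEigenfunction B lam Ψ) :
    0 ≤ lam :=
  nonneg_of_mul_nonneg_left (integral_magEnergyDensity_eigenfunction hΨ ▸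
    integral_nonneg (magEnergyDensity_nonneg B Ψ)) hΨ.2.1

lemma fderiv_eq_zero_of_eq_one (h01 : ∀ x ∈ ball3, χ x ∈ Icc (0 : ℝ) 1) (hx : x ∈ ball3)
    (h1 : χ x = 1) : fderiv ℝ χ x = 0 := by
  refine IsLocalMax.fderiv_eq_zero ?_
  filter_upwards [Metric.isOpen_ball.mem_nhds hx] with y hy
  rw [h1]
  exact (h01 y hy).2

lemma abs_mul_one_sub_sq_sub_sq_le {c g : ℝ} (hlam : 0 ≤ lam) (hc : c ∈ Icc (0 : ℝ) 1)
    (hg : 0 ≤ g) (hgL : g ≤ L) : |lam * (1 - c ^ 2) - g ^ 2| ≤ lam + L ^ 2 := by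
  have hc1 : c ^ 2 ≤ 1 := pow_le_one₀ hc.1 hc.2
  have hgL2 : g ^ 2 ≤ L ^ 2 := pow_le_pow_left₀ hg hgL 2
  rw [abs_le]
  constructor <;> nlinarith [sq_nonneg c, sq_nonneg g]

lemma abs_integral_magEnergyDensity_sub_le (hΨ : IsNeumannEigenfunction B lam Ψ)
    (hχ : ContDiff ℝ 1 χ) (h01 : ∀ x ∈ ball3, χ x ∈ Icc (0 : ℝ) 1)
    (hL : ∀ x ∈ ball3, ‖fderiv ℝ χ x‖ ≤ L) (hw : Continuous w) (hw0 : ∀ x ∈ ball3, 0 ≤ w x)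
    (hwχ : ∀ x ∈ ball3, χ x ≠ 1 → 1 ≤ w x) :
    |(∫ x in ball3, magEnergyDensity B Ψ x) -
        ∫ x in ball3, magEnergyDensity B (fun y => (χ y : ℂ) * Ψ y) x| ≤
      (lam + L ^ 2) * ∫ x in ball3, w x * ‖Ψ x‖ ^ 2 := by
  have hΨc := hΨ.1.continuous
  have hχc := hχ.continuous
  have hint {f : E3 → ℝ} (hf : Continuous f) := integrableOn_ball3_of_continuous hf
  have hdiff : (∫ x in ball3, magEnergyDensity B Ψ x) -
      ∫ x in ball3, magEnergyDensity B (fun y => (χ y : ℂ) * Ψ y) x =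
        ∫ x in ball3, (lam * (1 - χ x ^ 2) - ‖fderiv ℝ χ x‖ ^ 2) * ‖Ψ x‖ ^ 2 := by
    rw [integral_magEnergyDensity_eigenfunction hΨ, ← integral_const_mul,
      integral_magEnergyDensity_ofReal_mul_eigenfunction hΨ hχ,
      ← integral_sub (hint (by fun_prop)) (hint (by fun_prop))]
    congr! 2 with x
    ring
  rw [hdiff, ← integral_const_mul]
  refine abs_integral_le_integral_abs.trans (setIntegral_mono_on (hint (by fun_prop))
    (hint (by fun_prop)) measurableSet_ball3 fun x hx => ?_)
  rw [abs_mul, abs_of_nonneg (sq_nonneg ‖Ψ x‖), ← mul_assoc]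
  refine mul_le_mul_of_nonneg_right ?_ (sq_nonneg _)
  have hcoeff := abs_mul_one_sub_sq_sub_sq_le hΨ.eigenvalue_nonneg (h01 x hx)
    (norm_nonneg (fderiv ℝ χ x)) (hL x hx)
  rcases eq_or_ne (χ x) 1 with h | h
  · rw [fderiv_eq_zero_of_eq_one h01 hx h, h, norm_zero]
    simpa using mul_nonneg ((abs_nonneg _).trans hcoeff) (hw0 x hx)
  · exact hcoeff.trans (le_mul_of_one_le_right ((abs_nonneg _).trans hcoeff) (hwχ x hx h))

lemma add_sq_mul_rpow_le {ω C p : ℝ} (hB : 1 ≤ B)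
    (hlam : lam ≤ Theta0 * B + ω * B ^ ((3 : ℝ) / 4)) :
    lam + (C * B ^ p) ^ 2 ≤ (3 / 4 + |ω| + C ^ 2) * B ^ max 1 (2 * p) := by
  have hB0 : 0 < B := by linarith
  have hpow {q : ℝ} (hq : q ≤ max 1 (2 * p)) : B ^ q ≤ B ^ max 1 (2 * p) :=
    rpow_le_rpow_of_exponent_le hB hq
  have hΘ : Theta0 * B ≤ 3 / 4 * B ^ max 1 (2 * p) := by
    have := hpow (le_max_left 1 (2 * p))
    rw [rpow_one] at this
    exact mul_le_mul Theta0_le this hB0.le (by norm_num)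
  have hω : ω * B ^ ((3 : ℝ) / 4) ≤ |ω| * B ^ max 1 (2 * p) :=
    mul_le_mul (le_abs_self ω) (hpow (le_max_of_le_left (by norm_num))) (by positivity)
      (abs_nonneg ω)
  have hC : (C * B ^ p) ^ 2 ≤ C ^ 2 * B ^ max 1 (2 * p) := by
    rw [mul_pow, ← rpow_mul_natCast hB0.le, Nat.cast_ofNat, mul_comm p]
    exact mul_le_mul_of_nonneg_left (hpow (le_max_right _ _)) (sq_nonneg C)
  linarith

lemma abs_integral_magEnergyDensity_sub_le_agmonWeight {ω C p : ℝ} (hB : 1 ≤ B)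
    (hΨ : IsNeumannEigenfunction B lam Ψ) (hlam : lam ≤ Theta0 * B + ω * B ^ ((3 : ℝ) / 4))
    (hχ : ContDiff ℝ 1 χ) (h01 : ∀ x ∈ ball3, χ x ∈ Icc (0 : ℝ) 1)
    (hone : ∀ x ∈ ball3,
      (distBd x ≤ B ^ (-(1 : ℝ) / 2 + ε) ∧ distEq x ≤ B ^ (-(1 : ℝ) / 4 + ε)) → χ x = 1)
    (hgrad : ∀ x ∈ ball3, ‖fderiv ℝ χ x‖ ≤ C * B ^ p) :
    |(∫ x in ball3, magEnergyDensity B Ψ x) -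
        ∫ x in ball3, magEnergyDensity B (fun y => (χ y : ℂ) * Ψ y) x| ≤
      (3 / 4 + |ω| + C ^ 2) * (B ^ max 1 (2 * p) * exp (-(1 / 16 * B ^ ε))) *
        ∫ x in ball3, agmonWeight (B ^ ((1 : ℝ) / 4)) x * ‖Ψ x‖ ^ 2 := by
  set δ := exp (-(1 / 16 * B ^ ε)) with hδ
  set w := agmonWeight (B ^ ((1 : ℝ) / 4))
  have hw0 (x : E3) : 0 ≤ w x := agmonWeight_nonneg _ x
  have hlarge (x : E3) (hx : x ∈ ball3) (hne : χ x ≠ 1) : 1 ≤ δ * w x := by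
    have hfar := not_and_or.1 (mt (hone x hx) hne)
    rw [not_le, not_le] at hfar
    have hexp := exp_le_agmonWeight_of_lt_dist hB hx hfar
    rwa [hδ, exp_neg, ← div_eq_inv_mul, one_le_div (exp_pos _), one_div_mul_eq_div]
  have hmean : 0 ≤ ∫ x in ball3, w x * ‖Ψ x‖ ^ 2 :=
    integral_nonneg fun x => mul_nonneg (hw0 x) (sq_nonneg _)
  refine (abs_integral_magEnergyDensity_sub_le (w := fun x => δ * w x) hΨ hχ h01 hgrad
    (by fun_prop) (fun x _ => mul_nonneg (exp_pos _).le (hw0 x)) hlarge).trans ?_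
  simp only [mul_assoc, integral_const_mul]
  rw [← mul_assoc _ _ (δ * _)]
  gcongr
  exact add_sq_mul_rpow_le hB hlam

end CutOff

theorem statement3_general {ε : ℝ} (hε : 0 < ε) (ω C p N : ℝ) :
    ∃ CN BN : ℝ, 0 < CN ∧ 1 ≤ BN ∧ ∀ B : ℝ, BN ≤ B → ∀ χ : E3 → ℝ, ContDiff ℝ 1 χ →
      (∀ x ∈ ball3, χ x ∈ Icc (0 : ℝ) 1) →
      (∀ x ∈ ball3,
        (distBd x ≤ B ^ (-(1 : ℝ) / 2 + ε) ∧ distEq x ≤ B ^ (-(1 : ℝ) / 4 + ε)) → χ x = 1) →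
      (∀ x ∈ ball3, ‖fderiv ℝ χ x‖ ≤ C * B ^ p) →
      ∀ (lam : ℝ) (Ψ : E3 → ℂ), IsNeumannEigenfunction B lam Ψ →
        lam ≤ Theta0 * B + ω * B ^ ((3 : ℝ) / 4) →
        |(∫ x in ball3, magEnergyDensity B Ψ x) -
            ∫ x in ball3, magEnergyDensity B (fun y => (χ y : ℂ) * Ψ y) x| ≤
          CN * B ^ (-N) * ∫ x in ball3, ‖Ψ x‖ ^ 2 := by
  obtain ⟨K, hK, b₀, hb₀, hmean⟩ := exists_integral_agmonWeight_mul_normSq_le ω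
  obtain ⟨B₀, hsmall⟩ := eventually_atTop.1
    (eventually_rpow_mul_exp_neg_le hε (by norm_num : (0 : ℝ) < 1 / 16) (max 1 (2 * p)) N)
  refine ⟨(3 / 4 + |ω| + C ^ 2) * K, max B₀ (b₀ ^ 4), by positivity,
    le_max_of_le_right (one_le_pow₀ (by linarith)),
    fun B hBN χ hχ h01 hone hgrad lam Ψ hΨ hlam => ?_⟩
  have hb₀B : b₀ ^ 4 ≤ B := (le_max_right _ _).trans hBN
  have hB : 1 ≤ B := (one_le_pow₀ (by linarith)).trans hb₀B
  have hB0 : 0 ≤ B := by linarith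
  have hb4 : (B ^ ((1 : ℝ) / 4)) ^ 4 = B := by
    rw [← rpow_mul_natCast hB0]
    norm_num
  have hb3 : (B ^ ((1 : ℝ) / 4)) ^ 3 = B ^ ((3 : ℝ) / 4) := by
    rw [← rpow_mul_natCast hB0]
    norm_num
  have hweight := hmean (B ^ ((1 : ℝ) / 4)) (le_of_pow_le_pow_left₀ four_ne_zero (by positivity)
    (by rwa [hb4])) lam Ψ (by rwa [hb4]) (by rwa [hb4, hb3])
  refine (abs_integral_magEnergyDensity_sub_le_agmonWeight hB hΨ hlam hχ h01 hone hgrad).trans ?_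
  calc _ ≤ (3 / 4 + |ω| + C ^ 2) * B ^ (-N) * (K * ∫ x in ball3, ‖Ψ x‖ ^ 2) := by
        gcongr
        · exact integral_nonneg fun x => mul_nonneg (agmonWeight_nonneg _ x) (sq_nonneg _)
        · exact hsmall B ((le_max_left _ _).trans hBN)
    _ = (3 / 4 + |ω| + C ^ 2) * K * B ^ (-N) * ∫ x in ball3, ‖Ψ x‖ ^ 2 := by ring

/-- Lemma 2.4: replacing an eigenfunction by its cut-off version changes
the magnetic energy only by `O(B^{-N})`. -/
theorem statement3 (ε ω C : ℝ) (hε : 0 < ε) (hε' : ε < 1/12) (hω : 0 < ω) (hC : 0 < C)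
    (χ : ℝ → E3 → ℝ)
    (hχ : ∀ B : ℝ, 0 < B →
      ContDiff ℝ (⊤ : ℕ∞) (χ B) ∧
      (∀ x ∈ ball3, χ B x ∈ Icc (0:ℝ) 1) ∧
      (∀ x ∈ ball3,
        (distBd x ≤ B ^ (-(1:ℝ)/2 + ε) ∧ distEq x ≤ B ^ (-(1:ℝ)/4 + ε)) → χ B x = 1) ∧
      (∀ x ∈ ball3,
        (2 * B ^ (-(1:ℝ)/2 + ε) ≤ distBd x ∨ 2 * B ^ (-(1:ℝ)/4 + ε) ≤ distEq x) →
          χ B x = 0) ∧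
      (∀ x ∈ ball3, ‖fderiv ℝ (χ B) x‖ ≤ C * B ^ ((1:ℝ)/2 - ε))) :
    ∀ N : ℝ, 0 < N → ∃ CN BN : ℝ, 0 < CN ∧ 0 < BN ∧
      ∀ B : ℝ, BN ≤ B → ∀ (lam : ℝ) (Ψ : E3 → ℂ),
        IsNeumannEigenfunction B lam Ψ →
        lam ≤ Theta0 * B + ω * B ^ ((2:ℝ)/3) →
        |(∫ x in ball3, magEnergyDensity B Ψ x) -
            ∫ x in ball3, magEnergyDensity B (fun y => (χ B y : ℂ) * Ψ y) x|
          ≤ CN * B ^ (-N) * ∫ x in ball3, ‖Ψ x‖ ^ 2 := by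
  intro N _
  obtain ⟨CN, BN, hCN, hBN, h⟩ := statement3_general hε ω C (1 / 2 - ε) N
  refine ⟨CN, BN, hCN, by linarith, fun B hB lam Ψ hΨ hlam => ?_⟩
  obtain ⟨hsmooth, h01, hone, -, hgrad⟩ := hχ B (by linarith)
  have hpow : B ^ ((2 : ℝ) / 3) ≤ B ^ ((3 : ℝ) / 4) :=
    rpow_le_rpow_of_exponent_le (hBN.trans hB) (by norm_num)
  exact h B hB (χ B) (hsmooth.of_le (by exact_mod_cast le_top)) h01 hone hgrad lam Ψ hΨ
    (hlam.trans (by gcongr))
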